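/- arXiv:1112.4561 — 3 statements merged into one kernel-verified Lean document; each statement's English description precedes it below -/
import Mathlib

section
/- For every prime p, there exists a finite simple group G with a nontrivial Sylow p-subgroup P such that some left coset of P in G contains no p'-elements, i.e., no elements of order prime to p. -/
open scoped TensorProduct Pointwise

/-!
For odd `p`, let `K` be the field with `Q = 2 ^ (p - 1)` elements, so that `p ∣ Q - 1`, and let `F`
be an extension of `K` of degree prime to `p`. A Sylow `p`-subgroup of `SL₂(F)` lies in the diagonal
torus `Kˣ`. An element of `SL₂(F)` with trace `s + s⁻¹` has order not prime to `p` as soon as a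
character `χ` of `Fˣ` with `χ ^ p = 1` has `χ s ≠ 1`. The coset is represented by the companion
matrix of trace `(w ^ Q - w)⁻¹`, whose products with `t ∈ Kˣ` have traces `((t w) ^ Q - t w)⁻¹`.
Here `X ^ Q - X = T (T + 1)`, where the roots of `T` and of `T + 1` partition `K` into halves; with
`W = T(t w)` the trace is `s + s⁻¹` for `s = W / (W + 1)`, and `χ s ≠ 1` provided that `χ (w + μ)`
is constant for `μ ∈ Kˣ` but takes another value at `μ = 0`.

To find `F` and `w`, first choose `F` and `u` such that every polynomial over `K` of degree less
than `Q` with constant term `1` is a `p`-th power at `u`. The `p`-th roots in `K⟦X⟧` of these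
polynomials generate a domain finite over `K[X]` with a rational point over `X = 0`. A function
whose zero scheme has length divisible by `p` and contains this point as a simple zero has other
zeros of total length prime to `p`, so one of them has degree prime to `p`. Now let `P` be of
minimal degree with `P(0) = 1` and `χ (P(u)) ≠ 1`. There is `R` such that `1 - μ X` divides
`P + μ R` for all `μ ∈ Kˣ`, so minimality gives `χ (P(u) + μ R(u)) = 1`, and `w = P(u) / R(u)`
works.

For `p = 2`, a Klein four-group is a Sylow subgroup of `PSL₂(53)`, and it has an explicit coset
whose elements have eigenvalues `s` with `s ^ 26 = -1`.
-/

open Module Polynomial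

namespace SylowCoset

universe u

/-! ### Points of degree prime to `p` on finite-dimensional algebras -/

section
variable {K : Type*} [Field K]

theorem finrank_quotient_annihilator_add_finrank_quotient_span {A : Type*} [CommRing A]
    [Algebra K A] [FiniteDimensional K A] (a : A) :
    finrank K (A ⧸ (LinearMap.toSpanSingleton A A a).ker) + finrank K (A ⧸ Ideal.span {a}) =
      finrank K A := by
  have e : (A ⧸ (LinearMap.toSpanSingleton A A a).ker) ≃ₗ[K] Ideal.span {a} :=
    ((LinearMap.quotKerEquivRange _).trans
      (LinearEquiv.ofEq _ _ (LinearMap.range_toSpanSingleton a))).restrictScalars K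
  rw [e.finrank_eq, add_comm]
  exact ((Ideal.span {a}).restrictScalars K).finrank_quotient_add_finrank

theorem finrank_quotient_lt {A : Type*} [CommRing A] [Algebra K A] [FiniteDimensional K A]
    {I : Ideal A} (hI : I ≠ ⊥) : finrank K (A ⧸ I) < finrank K A := by
  have hadd := (I.restrictScalars K).finrank_quotient_add_finrank
  have : 0 < finrank K (I.restrictScalars K) :=
    finrank_pos_iff.2 (Submodule.nontrivial_iff_ne_bot.2 (by simpa using hI))
  change finrank K (A ⧸ I) + _ = _ at hadd
  lia

theorem exists_algHom_field_not_dvd_finrank {p : ℕ} {A : Type u} [CommRing A] [Algebra K A]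
    (hA : ¬ p ∣ finrank K A) :
    ∃ (F : Type u) (_ : Field F) (_ : Algebra K F) (_ : A →ₐ[K] F), ¬ p ∣ finrank K F := by
  induction hn : finrank K A using Nat.strong_induction_on generalizing A with
  | _ n ih =>
  subst hn
  have hpos : 0 < finrank K A := Nat.pos_of_ne_zero fun h ↦ hA (h ▸ dvd_zero p)
  have := Module.finite_of_finrank_pos hpos
  have := Module.nontrivial_of_finrank_pos hpos
  have descend {I : Ideal A} (hI : I ≠ ⊥) (hdvd : ¬ p ∣ finrank K (A ⧸ I)) :
      ∃ (F : Type u) (_ : Field F) (_ : Algebra K F) (_ : A →ₐ[K] F), ¬ p ∣ finrank K F := by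
    obtain ⟨F, _, _, φ, hF⟩ := ih _ (finrank_quotient_lt hI) hdvd rfl
    exact ⟨F, _, _, φ.comp (Ideal.Quotient.mkₐ K I), hF⟩
  by_cases hdom : NoZeroDivisors A
  · have : IsDomain A := NoZeroDivisors.to_isDomain A
    exact ⟨A, fieldOfFiniteDimensional K A, inferInstance, AlgHom.id K A, hA⟩
  · obtain ⟨a, b, hab, ha, hb⟩ : ∃ a b : A, a * b = 0 ∧ a ≠ 0 ∧ b ≠ 0 := by
      simpa [noZeroDivisors_iff] using hdom
    have hann : (LinearMap.toSpanSingleton A A a).ker ≠ ⊥ :=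
      fun h ↦ hb ((Submodule.eq_bot_iff _).1 h b (by simp [mul_comm b, hab]))
    rw [← finrank_quotient_annihilator_add_finrank_quotient_span a] at hA
    by_cases h : p ∣ finrank K (A ⧸ Ideal.span {a})
    · exact descend hann fun h' ↦ hA (dvd_add h' h)
    · exact descend (by simpa using ha) h
end

/-! ### Norms and dimensions of quotients -/

section
variable {K : Type*} [Field K]

theorem natDegree_eval_of_natDegree_coeff_lt {P : K[X][X]} (hP : P.Monic) {q : K[X]}
    (hq : ∀ i, (P.coeff i).natDegree < q.natDegree) :
    (P.eval q).natDegree = P.natDegree * q.natDegree := by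
  have hq0 : q ≠ 0 := ne_zero_of_natDegree_gt (hq 0)
  have hlower : (∑ i ∈ Finset.range P.natDegree, P.coeff i * q ^ i).degree <
      (q ^ P.natDegree).degree := by
    have hbot : ⊥ < (q ^ P.natDegree).degree :=
      bot_lt_iff_ne_bot.2 (degree_ne_bot.2 (pow_ne_zero _ hq0))
    refine (degree_sum_le _ _).trans_lt ((Finset.sup_lt_iff hbot).2 ?_)
    intro i hi
    refine degree_lt_degree ?_
    have hi' : i + 1 ≤ P.natDegree := Finset.mem_range.1 hi
    calc (P.coeff i * q ^ i).natDegree ≤ (P.coeff i).natDegree + i * q.natDegree := by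
          simpa only [natDegree_pow] using natDegree_mul_le (p := P.coeff i) (q := q ^ i)
      _ < (i + 1) * q.natDegree := by linarith [hq i]
      _ ≤ (q ^ P.natDegree).natDegree := by rw [natDegree_pow]; gcongr
  conv_lhs => rw [hP.as_sum]
  simp only [eval_add, eval_pow, eval_X, eval_finsetSum, eval_mul, eval_C]
  rw [natDegree_add_eq_left_of_degree_lt hlower, natDegree_pow]

theorem exists_forall_finrank_quotient_span_eq {S : Type*} [CommRing S] [IsDomain S] [Algebra K S]
    [Algebra K[X] S] [IsScalarTower K K[X] S] [Module.Finite K[X] S] [Module.Free K[X] S] (b : S) :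
    ∃ D : ℕ, ∀ q : K[X], D < q.natDegree →
      finrank K (S ⧸ Ideal.span {algebraMap K[X] S q - b}) = finrank K[X] S * q.natDegree := by
  set P := (Algebra.lmul K[X] S b).charpoly
  have hPdeg : P.natDegree = finrank K[X] S := LinearMap.charpoly_natDegree _
  refine ⟨P.support.sup fun i ↦ (P.coeff i).natDegree, fun q hq ↦ ?_⟩
  have hcoeff (i : ℕ) : (P.coeff i).natDegree < q.natDegree := by
    by_cases hi : i ∈ P.support
    · exact (Finset.le_sup (f := fun i ↦ (P.coeff i).natDegree) hi).trans_lt hq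
    · simpa [notMem_support_iff.1 hi] using Nat.zero_lt_of_lt hq
  have hnorm : Algebra.norm K[X] (algebraMap K[X] S q - b) = P.eval q := by
    rw [LinearMap.eval_charpoly, Algebra.norm_apply, map_sub, Algebra.lmul_algebraMap]
    rfl
  have hdeg : (Algebra.norm K[X] (algebraMap K[X] S q - b)).natDegree =
      finrank K[X] S * q.natDegree := by
    rw [hnorm, natDegree_eval_of_natDegree_coeff_lt (LinearMap.charpoly_monic _) hcoeff, hPdeg]
  have hne : algebraMap K[X] S q - b ≠ 0 := by
    intro h
    rw [h, Algebra.norm_zero, natDegree_zero, eq_comm, mul_eq_zero] at hdeg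
    have := Module.finrank_pos (R := K[X]) (M := S)
    lia
  rw [finrank_quotient_span_eq_natDegree_norm (Module.Free.chooseBasis K[X] S) hne, hdeg]
end

/-! ### A field point of degree prime to `p` avoiding a rational point -/

section
variable {K : Type u} [Field K] {p : ℕ}

theorem exists_algHom_field_apply_ne_zero (hp : p ≠ 1) {A : Type u} [CommRing A] [Algebra K A]
    [FiniteDimensional K A] (hA : p ∣ finrank K A) {τ : A} (hτ : finrank K (A ⧸ Ideal.span {τ}) = 1)
    (hτ2 : τ ^ 2 ∣ τ) :
    ∃ (F : Type u) (_ : Field F) (_ : Algebra K F) (φ : A →ₐ[K] F),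
      ¬ p ∣ finrank K F ∧ φ τ ≠ 0 := by
  have hann : ¬ p ∣ finrank K (A ⧸ (LinearMap.toSpanSingleton A A τ).ker) := fun h ↦ by
    rw [← finrank_quotient_annihilator_add_finrank_quotient_span τ, hτ, Nat.dvd_add_right h,
      Nat.dvd_one] at hA
    exact hp hA
  obtain ⟨F, _, _, φ, hF⟩ := exists_algHom_field_not_dvd_finrank hann
  refine ⟨F, _, _, φ.comp (Ideal.Quotient.mkₐ K _), hF, fun h ↦ ?_⟩
  obtain ⟨s, hs⟩ := hτ2
  have hker : 1 - τ * s ∈ (LinearMap.toSpanSingleton A A τ).ker := by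
    simp only [LinearMap.mem_ker, LinearMap.toSpanSingleton_apply, smul_eq_mul]
    linear_combination hs
  have hone : φ (Ideal.Quotient.mkₐ K _ (1 - τ * s)) = 0 := by
    rw [Ideal.Quotient.mkₐ_eq_mk, Ideal.Quotient.eq_zero_iff_mem.2 hker, map_zero]
  rw [AlgHom.comp_apply, Ideal.Quotient.mkₐ_eq_mk] at h
  simp [h] at hone

theorem exists_dvd_natDegree_X_mul (hp : p ≠ 0) {G : K[X]} (hG : G.coeff 0 = 1) (D : ℕ) :
    ∃ r : K[X], r.coeff 0 = 1 ∧ G ∣ r ∧ D < (X * r).natDegree ∧ p ∣ (X * r).natDegree := by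
  have hG0 : G ≠ 0 := by rintro rfl; simp at hG
  have hmonic : (1 + X : K[X]).Monic := by simpa [add_comm] using monic_X_add_C (1 : K)
  have hdeg : (1 + X : K[X]).natDegree = 1 := by simpa [add_comm] using natDegree_X_add_C (1 : K)
  have hpow (k : ℕ) : (1 + X : K[X]) ^ k ≠ 0 := pow_ne_zero k hmonic.ne_zero
  let r : K[X] := (1 + X) ^ (p - 1) * (G * (1 + X) ^ (D + 1)) ^ p
  have hr : (X * r).natDegree = p * (1 + (G.natDegree + (D + 1))) := by
    have hne : G * (1 + X) ^ (D + 1) ≠ 0 := mul_ne_zero hG0 (hpow _)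
    rw [natDegree_mul X_ne_zero (mul_ne_zero (hpow _) (pow_ne_zero _ hne)),
      natDegree_mul (hpow _) (pow_ne_zero _ hne), natDegree_X, natDegree_pow, natDegree_pow,
      natDegree_mul hG0 (hpow _), natDegree_pow, hdeg]
    lia
  refine ⟨r, ?_, ?_, ?_, hr ▸ dvd_mul_right _ _⟩
  · rw [coeff_zero_eq_eval_zero] at hG ⊢
    simp [r, hG]
  · exact (dvd_pow (dvd_mul_right _ _) hp).mul_left _
  · rw [hr]
    exact lt_of_lt_of_le (by lia) (Nat.le_mul_of_pos_left _ (Nat.pos_of_ne_zero hp))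

theorem finrank_quotient_span_eq_one {A : Type*} [CommRing A] [Algebra K A] (ε : A →ₐ[K] K)
    {τ : A} (hε : RingHom.ker ε = Ideal.span {τ}) : finrank K (A ⧸ Ideal.span {τ}) = 1 := by
  have hsurj : Function.Surjective ε := fun c ↦ ⟨algebraMap K A c, by simp⟩
  rw [← hε, (Ideal.quotientKerAlgEquivOfSurjective hsurj).toLinearEquiv.finrank_eq, finrank_self]

theorem finrank_quotient_quotient_eq_one {A : Type*} [CommRing A] [Algebra K A] (ε : A →ₐ[K] K)
    {x e h : A} (hε : RingHom.ker ε = Ideal.span {x, e}) (hh : ε h = 0)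
    (he : Ideal.Quotient.mk (Ideal.span {h}) x ∣ Ideal.Quotient.mk (Ideal.span {h}) e) :
    finrank K ((A ⧸ Ideal.span {h}) ⧸ Ideal.span {Ideal.Quotient.mk (Ideal.span {h}) x}) = 1 := by
  have hle : Ideal.span {h} ≤ RingHom.ker ε := (Ideal.span_singleton_le_iff_mem _).2 hh
  refine finrank_quotient_span_eq_one (Ideal.Quotient.liftₐ _ ε hle) ?_
  calc RingHom.ker (Ideal.Quotient.liftₐ _ ε hle)
      = (RingHom.ker ε).map (Ideal.Quotient.mk (Ideal.span {h})) := Ideal.ker_quotient_lift _ hle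
    _ = Ideal.span {Ideal.Quotient.mk (Ideal.span {h}) x} := by
      rw [hε, Ideal.map_span, Set.image_pair, Ideal.span_pair_eq_span_left_iff_dvd.2 he]

theorem dvd_and_sq_dvd_of_mul_eq_sq {R : Type*} [CommRing R] {x e r : R} (h : x * r = e ^ 2)
    (hr : x ∣ r - 1) (he : x ∣ e - e ^ 2) : x ∣ e ∧ x ^ 2 ∣ x := by
  obtain ⟨r', hr'⟩ := hr
  obtain ⟨z, hz⟩ := he
  have hxe : e = x * (r + z) := by linear_combination hz - h
  refine ⟨⟨_, hxe⟩, (r + z) ^ 2 - r', ?_⟩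
  linear_combination h - x * hr' + hxe * (e + x * (r + z))

theorem exists_algHom_field_X_ne_zero (hp : p.Prime) {S : Type u} [CommRing S] [IsDomain S]
    [Algebra K S] [Algebra K[X] S] [IsScalarTower K K[X] S] [Module.Finite K[X] S]
    [Module.Free K[X] S] (ε : S →ₐ[K] K) {e : S}
    (hε : RingHom.ker ε = Ideal.span {algebraMap K[X] S X, e})
    (he : algebraMap K[X] S X ∣ e - e ^ 2) {G : K[X]} (hG : G.coeff 0 = 1) :
    ∃ (F : Type u) (_ : Field F) (_ : Algebra K F) (φ : S →ₐ[K] F), ¬ p ∣ finrank K F ∧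
      φ (algebraMap K[X] S X) ≠ 0 ∧ (φ (algebraMap K[X] S G) = 0 → φ e = 0) := by
  obtain ⟨D, hD⟩ := exists_forall_finrank_quotient_span_eq (K := K) (e ^ 2)
  obtain ⟨r, hr, hGr, hDr, hpr⟩ := exists_dvd_natDegree_X_mul hp.ne_zero hG D
  set x : S := algebraMap K[X] S X
  set h : S := algebraMap K[X] S (X * r) - e ^ 2 with h_def
  have hdim := hD _ hDr
  have := Module.finite_of_finrank_pos (R := K) (M := S ⧸ Ideal.span {h}) <| by
    rw [hdim]
    exact mul_pos finrank_pos (by lia)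
  let π := Ideal.Quotient.mkₐ K (Ideal.span {h})
  have hπ : π x * π (algebraMap K[X] S r) = π e ^ 2 := by
    rw [← map_pow, ← map_mul, ← map_mul]
    exact (Ideal.Quotient.mk_eq_mk_iff_sub_mem _ _).2 (Ideal.mem_span_singleton_self h)
  have hπr : π x ∣ π (algebraMap K[X] S r) - 1 := by
    have hXr : X ∣ r - 1 := X_dvd_iff.2 (by simp [hr])
    simpa using map_dvd π (map_dvd (algebraMap K[X] S) hXr)
  have hπe : π x ∣ π e - π e ^ 2 := by simpa using map_dvd π he
  obtain ⟨hxe, hxx⟩ := dvd_and_sq_dvd_of_mul_eq_sq hπ hπr hπe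
  have hεh : ε h = 0 := by
    have hx : ε x = 0 := RingHom.mem_ker.1 (hε ▸ Ideal.subset_span (by simp))
    have he : ε e = 0 := RingHom.mem_ker.1 (hε ▸ Ideal.subset_span (by simp))
    simp [h_def, x, hx, he]
  obtain ⟨F, _, _, φ, hF, hφ⟩ := exists_algHom_field_apply_ne_zero hp.ne_one
    (hdim ▸ hpr.mul_left _) (finrank_quotient_quotient_eq_one ε hε hεh hxe) hxx
  refine ⟨F, _, _, φ.comp π, hF, hφ, fun hGx ↦ ?_⟩
  have hrx : φ (π (algebraMap K[X] S r)) = 0 :=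
    zero_dvd_iff.1 (hGx ▸ map_dvd (φ.comp π) (map_dvd (algebraMap K[X] S) hGr))
  simpa [hrx] using (congrArg φ hπ).symm
end

/-! ### Averages over powers of a root of unity -/

section
variable {K : Type*} [Field K] {A B : Type*} [CommRing A] [Algebra K A] [CommRing B] [Algebra K B]
  {n : ℕ}

/-- The average of the powers `y, y ^ 2, …, y ^ n`. When `y ^ n = 1` it is the idempotent cutting
out the locus `y = 1`. -/
noncomputable def powerAverage (K : Type*) [Field K] {A : Type*} [CommRing A] [Algebra K A] (n : ℕ)
    (y : A) : A :=
  (n : K)⁻¹ • ∑ j ∈ Finset.range n, y ^ (j + 1)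

theorem map_powerAverage (φ : A →ₐ[K] B) (y : A) :
    φ (powerAverage K n y) = powerAverage K n (φ y) := by
  simp [powerAverage]

theorem powerAverage_zero : powerAverage K n (0 : A) = 0 := by simp [powerAverage]

theorem powerAverage_one (hn : (n : K) ≠ 0) : powerAverage K n (1 : A) = 1 := by
  simp only [powerAverage, one_pow, Finset.sum_const, Finset.card_range,
    ← Nat.cast_smul_eq_nsmul K, smul_smul, inv_mul_cancel₀ hn, one_smul]

theorem mul_powerAverage {y : A} (hy : y ^ n = 1) :
    y * powerAverage K n y = powerAverage K n y := by
  have h := Finset.sum_range_succ' (fun j ↦ y ^ (j + 1)) n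
  rw [Finset.sum_range_succ] at h
  simp only [powerAverage, mul_smul_comm, Finset.mul_sum]
  congr 1
  simpa [pow_succ', hy] using h.symm

theorem isIdempotentElem_powerAverage (hn : (n : K) ≠ 0) {y : A} (hy : y ^ n = 1) :
    IsIdempotentElem (powerAverage K n y) := by
  have hpow (j : ℕ) : y ^ j * powerAverage K n y = powerAverage K n y := by
    induction j with
    | zero => simp
    | succ j ih => rw [pow_succ, mul_assoc, mul_powerAverage hy, ih]
  rw [IsIdempotentElem]
  nth_rw 1 [powerAverage]
  simp [Finset.sum_mul, hpow, ← Nat.cast_smul_eq_nsmul K n (powerAverage K n y), smul_smul, hn]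
end

/-! ### Making polynomials into `p`-th powers in an extension of degree prime to `p` -/

theorem exists_pow_eq_of_constantCoeff_eq_one {K : Type*} [Field K] {n : ℕ} (hn : (n : K) ≠ 0)
    {f : PowerSeries K} (hf : PowerSeries.constantCoeff f = 1) :
    ∃ y : PowerSeries K, PowerSeries.constantCoeff y = 1 ∧ y ^ n = f := by
  have hn0 : n ≠ 0 := by rintro rfl; simp at hn
  let I : Ideal (PowerSeries K) := .span {PowerSeries.X}
  have mem_I {z : PowerSeries K} : z ∈ I ↔ PowerSeries.constantCoeff z = 0 := by
    rw [Ideal.mem_span_singleton, PowerSeries.X_dvd_iff]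
  obtain ⟨y, hy, hy1⟩ := HenselianRing.is_henselian (I := I) (X ^ n - C f)
    (monic_X_pow_sub_C _ hn0) 1 (mem_I.2 (by simp [hf])) (by
      have : IsUnit (n : PowerSeries K) := by
        simpa using hn.isUnit.map (PowerSeries.C (R := K))
      simpa [derivative_X_pow] using this.map (Ideal.Quotient.mk I))
  refine ⟨y, ?_, ?_⟩
  · simpa [sub_eq_zero] using mem_I.1 hy1
  · simpa [sub_eq_zero] using hy

section
variable {K : Type*} [Field K] {n : ℕ} {ι S : Type*} [CommRing S] [Algebra K S] [Algebra K[X] S]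
  [IsScalarTower K K[X] S] {g : ι → K[X]} {y : ι → S}

theorem X_dvd_sub_algebraMap_coeff_zero (f : K[X]) :
    algebraMap K[X] S X ∣ algebraMap K[X] S f - algebraMap K S (f.coeff 0) := by
  rw [IsScalarTower.algebraMap_apply K K[X] S, ← map_sub]
  exact map_dvd _ (X_dvd_iff.2 (by simp))

theorem mk_pow_eq_one_of_mem (hg : ∀ i, (g i).coeff 0 = 1)
    (hy : ∀ i, y i ^ n = algebraMap K[X] S (g i)) (i : ι) {I : Ideal S}
    (hI : algebraMap K[X] S X ∈ I) :
    Ideal.Quotient.mk I (y i) ^ n = 1 := by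
  rw [← map_pow, hy, ← map_one (Ideal.Quotient.mk I), Ideal.Quotient.mk_eq_mk_iff_sub_mem]
  have := X_dvd_sub_algebraMap_coeff_zero (S := S) (g i)
  rw [hg, map_one] at this
  exact I.mem_of_dvd this hI

theorem algHom_ext_of_adjoin_eq_top (hS : Algebra.adjoin K[X] (Set.range y) = ⊤) {B : Type*}
    [CommRing B] [Algebra K B] {φ ψ : S →ₐ[K] B}
    (hX : φ (algebraMap K[X] S X) = ψ (algebraMap K[X] S X)) (hy : ∀ i, φ (y i) = ψ (y i)) :
    φ = ψ := by
  have hpoly : φ.comp (IsScalarTower.toAlgHom K K[X] S) =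
      ψ.comp (IsScalarTower.toAlgHom K K[X] S) := Polynomial.algHom_ext hX
  ext s
  have hs : s ∈ Algebra.adjoin K[X] (Set.range y) := hS ▸ Algebra.mem_top
  induction hs using Algebra.adjoin_induction with
  | mem s hs => obtain ⟨i, rfl⟩ := hs; exact hy i
  | algebraMap f => exact DFunLike.congr_fun hpoly f
  | add a b _ _ ha hb => rw [map_add, map_add, ha, hb]
  | mul a b _ _ ha hb => rw [map_mul, map_mul, ha, hb]

variable [Fintype ι]

theorem X_dvd_one_sub_prod_sub_sq (hn : (n : K) ≠ 0) (hg : ∀ i, (g i).coeff 0 = 1)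
    (hy : ∀ i, y i ^ n = algebraMap K[X] S (g i)) :
    algebraMap K[X] S X ∣
      (1 - ∏ i, powerAverage K n (y i)) - (1 - ∏ i, powerAverage K n (y i)) ^ 2 := by
  let π := Ideal.Quotient.mkₐ K (Ideal.span {algebraMap K[X] S X})
  have hidem : IsIdempotentElem (1 - ∏ i, powerAverage K n (π (y i))) := by
    refine IsIdempotentElem.one_sub ?_
    rw [IsIdempotentElem, ← Finset.prod_mul_distrib]
    exact Finset.prod_congr rfl fun i _ ↦ isIdempotentElem_powerAverage hn
      (mk_pow_eq_one_of_mem hg hy i (Ideal.mem_span_singleton_self _))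
  rw [← Ideal.mem_span_singleton, ← Ideal.Quotient.eq_zero_iff_mem, ← Ideal.Quotient.mkₐ_eq_mk K]
  simp only [map_sub, map_pow, map_one, map_prod, map_powerAverage]
  rw [pow_two, hidem.eq, sub_self]

theorem ker_eq_span_pair (hn : (n : K) ≠ 0) (hg : ∀ i, (g i).coeff 0 = 1)
    (hy : ∀ i, y i ^ n = algebraMap K[X] S (g i))
    (hS : Algebra.adjoin K[X] (Set.range y) = ⊤) (ε : S →ₐ[K] K) (hεX : ε (algebraMap K[X] S X) = 0)
    (hεy : ∀ i, ε (y i) = 1) :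
    RingHom.ker ε = Ideal.span {algebraMap K[X] S X, 1 - ∏ i, powerAverage K n (y i)} := by
  set I := Ideal.span {algebraMap K[X] S X, 1 - ∏ i, powerAverage K n (y i)}
  let π := Ideal.Quotient.mkₐ K I
  have hX : algebraMap K[X] S X ∈ I := Ideal.subset_span (by simp)
  have hprod : ∏ i, powerAverage K n (π (y i)) = 1 := by
    have : π (1 - ∏ i, powerAverage K n (y i)) = 0 :=
      Ideal.Quotient.eq_zero_iff_mem.2 (Ideal.subset_span (by simp))
    exact (sub_eq_zero.1 (by simpa [map_powerAverage] using this)).symm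
  have hone (i : ι) : π (y i) = 1 := by
    obtain ⟨z, hz⟩ := Finset.dvd_prod_of_mem (fun i ↦ powerAverage K n (π (y i)))
      (Finset.mem_univ i)
    have : π (y i) * ∏ i, powerAverage K n (π (y i)) = ∏ i, powerAverage K n (π (y i)) := by
      rw [hz, ← mul_assoc, mul_powerAverage (y := π (y i)) (mk_pow_eq_one_of_mem hg hy i hX)]
    simpa [hprod] using this
  have hconst : π = (Algebra.ofId K (S ⧸ I)).comp ε := by
    refine algHom_ext_of_adjoin_eq_top hS ?_ fun i ↦ by simp [hone, hεy]
    rw [AlgHom.comp_apply, hεX, map_zero]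
    exact Ideal.Quotient.eq_zero_iff_mem.2 hX
  refine le_antisymm (fun s hs ↦ ?_) (Ideal.span_le.2 ?_)
  · rw [← Ideal.Quotient.eq_zero_iff_mem, ← Ideal.Quotient.mkₐ_eq_mk K]
    exact (DFunLike.congr_fun hconst s).trans (by simp [RingHom.mem_ker.1 hs])
  · rintro _ (rfl | rfl)
    · exact hεX
    · simp [map_powerAverage, hεy, powerAverage_one hn]
end

section
variable {K : Type u} [Field K] {p : ℕ} {ι : Type*}

theorem exists_field_pow_eq_of_adjoin_eq_top [Finite ι] (hp : p.Prime) (hpK : (p : K) ≠ 0)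
    {S : Type u} [CommRing S] [IsDomain S] [Algebra K S] [Algebra K[X] S] [IsScalarTower K K[X] S]
    [Module.Finite K[X] S] [Module.Free K[X] S] {g : ι → K[X]} {y : ι → S}
    (hg : ∀ i, (g i).coeff 0 = 1) (hy : ∀ i, y i ^ p = algebraMap K[X] S (g i))
    (hS : Algebra.adjoin K[X] (Set.range y) = ⊤) (ε : S →ₐ[K] K)
    (hεX : ε (algebraMap K[X] S X) = 0) (hεy : ∀ i, ε (y i) = 1) :
    ∃ (F : Type u) (_ : Field F) (_ : Algebra K F) (u : F),
      ¬ p ∣ finrank K F ∧ u ≠ 0 ∧ ∀ i, ∃ z ≠ 0, aeval u (g i) = z ^ p := by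
  have := Fintype.ofFinite ι
  obtain ⟨F, _, _, φ, hF, hX, hG⟩ := exists_algHom_field_X_ne_zero hp ε
    (ker_eq_span_pair hpK hg hy hS ε hεX hεy) (X_dvd_one_sub_prod_sub_sq hpK hg hy)
    (G := ∏ i, g i) (by simp [coeff_zero_prod, hg])
  have haeval (f : K[X]) : aeval (φ (algebraMap K[X] S X)) f = φ (algebraMap K[X] S f) := by
    rw [aeval_algHom_apply, aeval_algebraMap_apply, aeval_X_left_apply]
  refine ⟨F, _, _, φ (algebraMap K[X] S X), hF, hX, fun i ↦ ⟨φ (y i), fun h ↦ ?_, ?_⟩⟩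
  · have hzero : φ (1 - ∏ i, powerAverage K p (y i)) = 0 := by
      refine hG ?_
      rw [map_prod, map_prod]
      refine Finset.prod_eq_zero (Finset.mem_univ i) ?_
      rw [← hy, map_pow, h, zero_pow hp.ne_zero]
    have hprod : ∏ i, powerAverage K p (φ (y i)) = 0 :=
      Finset.prod_eq_zero (Finset.mem_univ i) (by rw [h, powerAverage_zero])
    simp [map_powerAverage, hprod] at hzero
  · rw [haeval, ← map_pow, hy]

theorem exists_extension_pow_eq [Finite ι] (hp : p.Prime) (hpK : (p : K) ≠ 0) (g : ι → K[X])
    (hg : ∀ i, (g i).coeff 0 = 1) :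
    ∃ (F : Type u) (_ : Field F) (_ : Algebra K F) (u : F),
      ¬ p ∣ finrank K F ∧ u ≠ 0 ∧ ∀ i, ∃ z ≠ 0, aeval u (g i) = z ^ p := by
  choose y hy1 hy using fun i ↦ exists_pow_eq_of_constantCoeff_eq_one
    (f := (g i : PowerSeries K)) hpK (by simpa using hg i)
  let S := Algebra.adjoin K[X] (Set.range y)
  have hfin : Module.Finite K[X] S :=
    Algebra.finite_adjoin_of_finite_of_isIntegral (Set.finite_range y) (by
      rintro _ ⟨i, rfl⟩
      exact IsIntegral.of_pow hp.pos (hy i ▸ isIntegral_algebraMap))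
  have : Module.IsTorsionFree K[X] (PowerSeries K) :=
    Module.isTorsionFree_iff_algebraMap_injective.2 (Polynomial.coe_injective K)
  have hfree : Module.Free K[X] S := Module.free_of_finite_type_torsion_free'
  let v (i : ι) : S := ⟨y i, Algebra.subset_adjoin (Set.mem_range_self i)⟩
  have hv (i : ι) : v i ^ p = algebraMap K[X] S (g i) := Subtype.ext (hy i)
  have hS : Algebra.adjoin K[X] (Set.range v) = ⊤ := by
    have : Set.range v = Subtype.val ⁻¹' Set.range y := by
      ext ⟨s, hs⟩
      simp [v, Subtype.ext_iff]
    rw [this, Algebra.adjoin_adjoin_coe_preimage]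
  have hcoeff (f : K[X]) :
      PowerSeries.constantCoeff (algebraMap K[X] (PowerSeries K) f) = f.coeff 0 := by
    simp [PowerSeries.algebraMap_apply']
  let ε : S →ₐ[K] K :=
    { (PowerSeries.constantCoeff (R := K)).comp S.val.toRingHom with
      commutes' := fun c ↦ by
        rw [IsScalarTower.algebraMap_apply K K[X] S]
        exact (hcoeff _).trans coeff_C_zero }
  have hεX : ε (algebraMap K[X] S X) = 0 := (hcoeff X).trans coeff_X_zero
  exact exists_field_pow_eq_of_adjoin_eq_top hp hpK hg hv hS ε hεX hy1
end

/-! ### Elements at which a character separates zero from its other translates -/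

section
variable {K F M : Type*} [Field K] [Field F] [Algebra K F] [CommGroupWithZero M]

/-- The character `χ` separates `w` from its translates by the nonzero elements of `K`, on which it
is constant. Both `w` and its translates are required to be nonzero, since `χ 0 = 0`. -/
structure SeparatesZero (K : Type*) {F M : Type*} [Field K] [Field F] [Algebra K F]
    [CommGroupWithZero M] (χ : F →*₀ M) (w : F) : Prop where
  ne_zero : w ≠ 0
  add_one_ne_zero : w + 1 ≠ 0
  map_add_algebraMap (μ : K) : μ ≠ 0 → χ (w + algebraMap K F μ) = χ (w + 1)
  map_ne : χ w ≠ χ (w + 1)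

theorem natDegree_C_leadingCoeff_mul_sub_X_mul_le (P : K[X]) :
    (C P.leadingCoeff * X ^ (P.natDegree + 1) - X * P).natDegree ≤ P.natDegree := by
  refine natDegree_le_iff_coeff_eq_zero.2 fun N hN ↦ ?_
  obtain ⟨k, rfl⟩ : ∃ k, N = k + 1 := ⟨N - 1, by lia⟩
  rw [coeff_sub, coeff_C_mul_X_pow, coeff_X_mul]
  rcases eq_or_ne k P.natDegree with rfl | hk
  · simp
  · rw [if_neg (by lia), coeff_eq_zero_of_natDegree_lt (by lia), sub_zero]

theorem exists_forall_add_C_mul_eq_one_sub_mul [Fintype K] {P : K[X]}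
    (hP : Fintype.card K ≤ P.natDegree + 1) :
    ∃ R : K[X], R.coeff 0 = 0 ∧ ∀ μ : K, μ ≠ 0 →
      ∃ g : K[X], P + C μ * R = (1 - C μ * X) * g ∧ g.natDegree < P.natDegree := by
  obtain ⟨m, hm⟩ : ∃ m, P.natDegree = m + (Fintype.card K - 1) :=
    ⟨_, (Nat.sub_add_cancel (by lia)).symm⟩
  have hQ := Fintype.one_lt_card (α := K)
  let R : K[X] := C P.leadingCoeff * X ^ (m + 1) * (X ^ (Fintype.card K - 1) - 1) - X * P
  have hR : R.natDegree ≤ P.natDegree := by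
    have hR' : R =
        (C P.leadingCoeff * X ^ (P.natDegree + 1) - X * P) - C P.leadingCoeff * X ^ (m + 1) := by
      simp only [R, hm]; ring
    rw [hR']
    exact (natDegree_sub_le _ _).trans (max_le (natDegree_C_leadingCoeff_mul_sub_X_mul_le P)
      ((natDegree_C_mul_X_pow_le _ _).trans (by lia)))
  refine ⟨R, by simp [R], fun μ hμ ↦ ?_⟩
  have hroot : (P + C μ * R).IsRoot μ⁻¹ := by
    simp [R, FiniteField.pow_card_sub_one_eq_one μ⁻¹ (inv_ne_zero hμ), hμ]
  obtain ⟨g, hg⟩ := dvd_iff_isRoot.2 hroot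
  have hfactor : P + C μ * R = (1 - C μ * X) * (-C μ⁻¹ * g) := by
    have : (C μ * C μ⁻¹ : K[X]) = 1 := by rw [← C_mul, mul_inv_cancel₀ hμ, C_1]
    rw [hg]
    linear_combination -X * g * this
  refine ⟨_, hfactor, ?_⟩
  rcases eq_or_ne g 0 with rfl | hg0
  · simp; lia
  have hdeg : (P + C μ * R).natDegree ≤ P.natDegree :=
    natDegree_add_le_of_degree_le le_rfl ((natDegree_C_mul_le _ _).trans hR)
  rw [hg, natDegree_mul (X_sub_C_ne_zero _) hg0, natDegree_X_sub_C] at hdeg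
  rw [← C_neg]
  exact (natDegree_C_mul_le _ _).trans_lt (by lia)

theorem exists_coeff_zero_eq_one_map_aeval_ne_one {χ : F →*₀ M} {u : F} (hu : IsIntegral K u)
    (hu0 : u ≠ 0) {κ : K} (hκ : χ (algebraMap K F κ) ≠ 1) :
    ∃ P : K[X], P.coeff 0 = 1 ∧ χ (aeval u P) ≠ 1 := by
  have h0 : (minpoly K u).coeff 0 ≠ 0 := minpoly.coeff_zero_ne_zero hu hu0
  refine ⟨C κ + C ((1 - κ) / (minpoly K u).coeff 0) * minpoly K u, ?_, by simpa⟩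
  simp [h0]

variable {χ : F →*₀ M}

theorem separatesZero_div {a b : F} (ha : χ a ≠ 1)
    (hab : ∀ μ : K, μ ≠ 0 → χ (a + algebraMap K F μ * b) = 1) {κ : K} (hκ0 : κ ≠ 0)
    (hκ : χ (algebraMap K F κ) ≠ 1) : SeparatesZero K χ (a / b) := by
  have hb0 : b ≠ 0 := fun h ↦ ha (by simpa [h] using hab 1 one_ne_zero)
  have ha0 : a ≠ 0 := fun h ↦ hκ <| by
    have hone := hab 1 one_ne_zero
    rw [h, zero_add, map_one, one_mul] at hone
    simpa [h, hone] using hab κ hκ0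
  have hmap (μ : K) (hμ : μ ≠ 0) : χ (a / b + algebraMap K F μ) = (χ b)⁻¹ := by
    rw [div_add' _ _ _ hb0, map_div₀, hab μ hμ, one_div]
  have hmap_one : χ (a / b + 1) = (χ b)⁻¹ := by simpa using hmap 1 one_ne_zero
  refine ⟨div_ne_zero ha0 hb0, ?_, fun μ hμ ↦ (hmap μ hμ).trans hmap_one.symm, ?_⟩
  · rw [← map_ne_zero χ, hmap_one]
    simpa
  · rwa [hmap_one, map_div₀, Ne, div_eq_iff (by simpa), inv_mul_cancel₀ (by simpa)]

theorem exists_separatesZero [Fintype K] {u : F} (hu : IsIntegral K u)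
    (hu0 : u ≠ 0) {κ : K} (hκ0 : κ ≠ 0) (hκ : χ (algebraMap K F κ) ≠ 1)
    (hsmall : ∀ g : K[X], g.natDegree + 1 < Fintype.card K → g.coeff 0 = 1 → χ (aeval u g) = 1) :
    ∃ w, SeparatesZero K χ w := by
  obtain ⟨P, ⟨hP0, hP⟩, hmin⟩ := exists_minimalFor_of_wellFoundedLT
    (fun P : K[X] ↦ P.coeff 0 = 1 ∧ χ (aeval u P) ≠ 1) natDegree
    (exists_coeff_zero_eq_one_map_aeval_ne_one hu hu0 hκ)
  have hlt {g : K[X]} (hg0 : g.coeff 0 = 1) (hg : g.natDegree < P.natDegree) : χ (aeval u g) = 1 :=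
    by_contra fun h ↦ (hmin ⟨hg0, h⟩ hg.le).not_gt hg
  have hlinear (μ : K) : χ (aeval u (1 - C μ * X)) = 1 := by
    refine hsmall _ ?_ (by simp)
    have hcard : 2 < Fintype.card K :=
      Fintype.two_lt_card_iff.2 ⟨0, 1, κ, zero_ne_one, hκ0.symm, by rintro rfl; simp at hκ⟩
    have : (1 - C μ * X).natDegree ≤ 1 := by compute_degree
    lia
  obtain ⟨R, hR0, hR⟩ := exists_forall_add_C_mul_eq_one_sub_mul
    (not_lt.1 fun h ↦ hP (hsmall P h hP0))
  have hshift (μ : K) (hμ : μ ≠ 0) : χ (aeval u P + algebraMap K F μ * aeval u R) = 1 := by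
    obtain ⟨g, hg, hgdeg⟩ := hR μ hμ
    have hg0 : g.coeff 0 = 1 := by
      simpa [hP0, hR0, mul_coeff_zero] using (congrArg (coeff · 0) hg).symm
    have := congrArg (χ ∘ aeval u) hg
    simpa only [Function.comp_apply, map_mul, map_add, aeval_C, hlinear, hlt hg0 hgdeg, mul_one]
      using this
  exact ⟨_, separatesZero_div hP hshift hκ0 hκ⟩

variable {w : F}

theorem SeparatesZero.algebraMap_mul (h : SeparatesZero K χ w) {t : K} (ht : t ≠ 0) :
    SeparatesZero K χ (algebraMap K F t * w) := by
  have ht' : algebraMap K F t ≠ 0 := by simpa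
  have hmap (μ : K) (hμ : μ ≠ 0) :
      χ (algebraMap K F t * w + algebraMap K F μ) = χ (algebraMap K F t) * χ (w + 1) := by
    rw [← h.map_add_algebraMap (μ / t) (div_ne_zero hμ ht), ← map_mul, mul_add,
      ← map_mul (algebraMap K F), mul_div_cancel₀ _ ht]
  have hmap_one := hmap 1 one_ne_zero
  rw [map_one] at hmap_one
  refine ⟨mul_ne_zero ht' h.ne_zero, ?_, fun μ hμ ↦ (hmap μ hμ).trans hmap_one.symm, ?_⟩
  · rw [← map_ne_zero χ, hmap_one]
    exact mul_ne_zero ((map_ne_zero χ).2 ht') ((map_ne_zero χ).2 h.add_one_ne_zero)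
  · rw [hmap_one, map_mul]
    exact (mul_right_injective₀ ((map_ne_zero χ).2 ht')).ne h.map_ne

theorem SeparatesZero.map_sub_algebraMap (h : SeparatesZero K χ w) {a : K} (ha : a ≠ 0) :
    χ (w - algebraMap K F a) = χ (w + 1) := by
  rw [← h.map_add_algebraMap (-a) (neg_ne_zero.2 ha), map_neg, sub_eq_add_neg]

theorem aeval_eq_prod_of_dvd_X_pow_card_sub_X [Fintype K] [DecidableEq K] {A : K[X]} (hA : A.Monic)
    (hdvd : A ∣ X ^ Fintype.card K - X) (w : F) :
    aeval w A = ∏ a ∈ A.roots.toFinset, (w - algebraMap K F a) ∧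
      A.roots.toFinset.card = A.natDegree := by
  have hne := FiniteField.X_pow_card_sub_X_ne_zero K (Fintype.one_lt_card (α := K))
  have hsplits : A.Splits := by
    refine Splits.of_dvd ?_ hne hdvd
    simpa [Nat.card_eq_fintype_card] using splits_X_pow_nat_card_sub_X (K := K)
  have hnodup : A.roots.Nodup := by
    refine Multiset.nodup_of_le (roots.le_of_dvd hne hdvd) ?_
    rw [FiniteField.roots_X_pow_card_sub_X]
    exact Finset.univ.nodup
  constructor
  · conv_lhs => rw [hsplits.eq_prod_roots_of_monic hA]
    rw [map_multiset_prod, Multiset.map_map, Finset.prod, Multiset.toFinset_val, hnodup.dedup]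
    simp
  · rw [Multiset.toFinset_card_of_nodup hnodup, hsplits.natDegree_eq_card_roots]

theorem SeparatesZero.map_aeval_ne_map_aeval [Fintype K] (h : SeparatesZero K χ w) {A B : K[X]}
    (hA : A.Monic) (hB : B.Monic) (hA_dvd : A ∣ X ^ Fintype.card K - X)
    (hB_dvd : B ∣ X ^ Fintype.card K - X) (hdeg : A.natDegree = B.natDegree) (hA0 : A.eval 0 = 0)
    (hB0 : B.eval 0 ≠ 0) : χ (aeval w A) ≠ χ (aeval w B) := by
  classical
  obtain ⟨hprodA, hcardA⟩ := aeval_eq_prod_of_dvd_X_pow_card_sub_X hA hA_dvd w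
  obtain ⟨hprodB, hcardB⟩ := aeval_eq_prod_of_dvd_X_pow_card_sub_X hB hB_dvd w
  have hmem : (0 : K) ∈ A.roots.toFinset := by simp [hA.ne_zero, hA0]
  have hmap (s : Finset K) (hs : 0 ∉ s) :
      χ (∏ a ∈ s, (w - algebraMap K F a)) = χ (w + 1) ^ s.card := by
    rw [map_prod]
    exact Finset.prod_eq_pow_card fun a ha ↦ h.map_sub_algebraMap (ne_of_mem_of_not_mem ha hs)
  rw [hprodA, hprodB, hmap B.roots.toFinset (by simp [hB0]), hcardB, ← hdeg, ← hcardA,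
    ← Finset.mul_prod_erase _ _ hmem, map_mul, hmap _ (Finset.notMem_erase _ _),
    ← Finset.card_erase_add_one hmem, pow_succ', map_zero, sub_zero]
  exact (mul_left_injective₀ (pow_ne_zero _ ((map_ne_zero χ).2 h.add_one_ne_zero))).ne h.map_ne

theorem exists_monic_mul_add_one_eq (R : Type*) [CommRing R] [Nontrivial R] [CharP R 2] (k : ℕ) :
    ∃ T : R[X], T.Monic ∧ T.natDegree = 2 ^ k ∧ T.eval 0 = 0 ∧
      T * (T + 1) = X ^ 2 ^ (k + 1) - X := by
  have htwo : (2 : R[X]) = 0 := CharTwo.two_eq_zero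
  induction k with
  | zero => exact ⟨X, monic_X, by simp, by simp, by linear_combination X * htwo⟩
  | succ k ih =>
    obtain ⟨T, -, hdeg, hT0, hmul⟩ := ih
    have hlt : T.degree < (X ^ 2 ^ (k + 1) : R[X]).degree :=
      degree_lt_degree (by rw [hdeg, natDegree_X_pow]; exact Nat.pow_lt_pow_succ one_lt_two)
    refine ⟨X ^ 2 ^ (k + 1) + T, (monic_X_pow _).add_of_left hlt, ?_, by simp [hT0], ?_⟩
    · rw [natDegree_add_eq_left_of_degree_lt hlt, natDegree_X_pow]
    · rw [pow_succ 2 (k + 1), pow_mul]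
      linear_combination hmul + (X ^ 2 ^ (k + 1) + T * X ^ 2 ^ (k + 1)) * htwo

theorem div_add_one_add_inv [CharP F 2] {W : F} (hW : W ≠ 0) (hW1 : W + 1 ≠ 0) :
    W / (W + 1) + (W / (W + 1))⁻¹ = (W * (W + 1))⁻¹ := by
  have htwo : (2 : F) = 0 := CharTwo.two_eq_zero
  field_simp
  linear_combination (W + W ^ 2) * htwo

theorem SeparatesZero.pow_card_sub_self_ne_zero [Fintype K] (h : SeparatesZero K χ w) :
    w ^ Fintype.card K - w ≠ 0 := by
  classical
  have hsub (a : K) : w - algebraMap K F a ≠ 0 := by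
    rcases eq_or_ne a 0 with rfl | ha
    · simpa using h.ne_zero
    · rw [← map_ne_zero χ, h.map_sub_algebraMap ha]
      exact (map_ne_zero χ).2 h.add_one_ne_zero
  have hmonic : (X ^ Fintype.card K - X : K[X]).Monic :=
    monic_X_pow_sub (by rw [degree_X]; exact_mod_cast Fintype.one_lt_card)
  have hprod := (aeval_eq_prod_of_dvd_X_pow_card_sub_X hmonic dvd_rfl w).1
  simp only [map_sub, map_pow, aeval_X] at hprod
  rw [hprod]
  exact Finset.prod_ne_zero_iff.2 fun a _ ↦ hsub a

theorem SeparatesZero.exists_add_inv_eq [Fintype K] [CharP K 2] (h : SeparatesZero K χ w) :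
    ∃ s ≠ 0, χ s ≠ 1 ∧ s + s⁻¹ = (w ^ Fintype.card K - w)⁻¹ := by
  have := charP_of_injective_algebraMap (algebraMap K F).injective 2
  obtain ⟨k, -, hk⟩ := FiniteField.card K 2
  obtain ⟨T, hT, hdeg, hT0, hmul⟩ := exists_monic_mul_add_one_eq K (k - 1)
  rw [Nat.sub_add_cancel k.pos, ← hk] at hmul
  have hlt : (1 : K[X]).degree < T.degree :=
    degree_lt_degree (by rw [natDegree_one, hdeg]; positivity)
  have hne : χ (aeval w T) ≠ χ (aeval w (T + 1)) :=
    h.map_aeval_ne_map_aeval hT (hT.add_of_left hlt) ⟨_, hmul.symm⟩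
      (dvd_of_mul_left_eq _ hmul) (natDegree_add_eq_left_of_degree_lt hlt).symm hT0
      (by simp [hT0])
  have hw : aeval w T * (aeval w T + 1) = w ^ Fintype.card K - w := by
    simpa using congrArg (aeval w) hmul
  obtain ⟨hW, hW1⟩ := mul_ne_zero_iff.1 (hw ▸ h.pow_card_sub_self_ne_zero)
  refine ⟨aeval w T / (aeval w T + 1), div_ne_zero hW hW1, ?_, ?_⟩
  · rw [map_div₀, Ne, div_eq_one_iff_eq ((map_ne_zero χ).2 hW1)]
    simpa using hne
  · rw [div_add_one_add_inv hW hW1, hw]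
end

section
variable {K : Type u} [Field K] {p : ℕ}

theorem cast_ne_zero_of_dvd_card_sub_one [Fintype K] (hdvd : p ∣ Fintype.card K - 1) :
    (p : K) ≠ 0 := fun h ↦ by
  have hzero : ((Fintype.card K - 1 : ℕ) : K) = 0 :=
    zero_dvd_iff.1 (h ▸ Nat.cast_dvd_cast hdvd)
  rw [Nat.cast_sub Fintype.card_pos, FiniteField.cast_card_eq_zero] at hzero
  simp at hzero

theorem exists_extension_separatesZero [Fintype K] (hp : p.Prime)
    (hdvd : p ∣ Fintype.card K - 1) :
    ∃ (F : Type u) (_ : Field F) (_ : Algebra K F) (χ : F →*₀ K) (w : F), ¬ p ∣ finrank K F ∧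
      (∀ x ≠ 0, χ x ^ p = 1) ∧ SeparatesZero K χ w := by
  have hpK := cast_ne_zero_of_dvd_card_sub_one hdvd
  obtain ⟨m, hm⟩ := hdvd
  have hcard := Fintype.one_lt_card (α := K)
  have hm0 : m ≠ 0 := by rintro rfl; lia
  have : Finite (degreeLT K (Fintype.card K)) := Finite.of_equiv _ (degreeLTEquiv K _).symm.toEquiv
  obtain ⟨F, _, _, u, hF, hu, hroot⟩ := exists_extension_pow_eq hp hpK
    (fun g : {g : degreeLT K (Fintype.card K) // (g : K[X]).coeff 0 = 1} ↦ (g : K[X])) (·.2)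
  have := Module.finite_of_finrank_pos (Nat.pos_of_ne_zero fun h ↦ hF (h ▸ dvd_zero p))
  let χ : F →*₀ K :=
    { (powMonoidHom m).comp (Algebra.norm K) with
      map_zero' := by simp [Algebra.norm_zero, hm0] }
  have hχ (x : F) : χ x = Algebra.norm K x ^ m := rfl
  have hχ_pow (x : F) (hx : x ≠ 0) : χ x ^ p = 1 := by
    rw [hχ, ← pow_mul, mul_comm, ← hm]
    exact FiniteField.pow_card_sub_one_eq_one _ (by simpa [Algebra.norm_eq_zero_iff])
  obtain ⟨κ, hκ⟩ : ∃ κ : Kˣ, κ ^ (finrank K F * m) ≠ 1 := by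
    by_contra! h
    rw [FiniteField.forall_pow_eq_one_iff, hm] at h
    exact hF (Nat.dvd_of_mul_dvd_mul_right (Nat.pos_of_ne_zero hm0) h)
  obtain ⟨w, hw⟩ := exists_separatesZero (χ := χ) (Algebra.IsIntegral.isIntegral u) hu κ.ne_zero
    (by rw [hχ, Algebra.norm_algebraMap, ← pow_mul]; simpa [Units.ext_iff] using hκ)
    fun g hg hg0 ↦ by
      obtain ⟨z, hz, hgz⟩ := hroot ⟨⟨g, mem_degreeLT.2 (degree_le_natDegree.trans_lt
        (by exact_mod_cast (Nat.le_succ _).trans_lt hg))⟩, hg0⟩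
      exact (congrArg χ hgz).trans ((map_pow χ z p).trans (hχ_pow z hz))
  exact ⟨F, _, _, χ, w, hF, hχ_pow, hw⟩
end

/-! ### Special linear groups of degree two -/

section
open Matrix

theorem pow_eq_one_of_add_inv_eq_trace {F : Type*} [Field F] {x : SpecialLinearGroup (Fin 2) F}
    {s : F} (hs : s ≠ 0) (htrace : s + s⁻¹ = (x : Matrix (Fin 2) (Fin 2) F).trace) {n : ℕ}
    (hx : x ^ n = 1) : s ^ n = 1 := by
  let M : Matrix (Fin 2) (Fin 2) F := x
  have hroot : M.charpoly.IsRoot s := by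
    have : M.det = 1 := x.2
    rw [IsRoot, charpoly_fin_two, this, ← htrace]
    simp
    field_simp
    ring
  have hpow := spectrum.pow_mem_pow M n (mem_spectrum_iff_isRoot_charpoly.2 hroot)
  have hM : M ^ n = 1 := by
    simpa using congrArg Subtype.val hx
  rwa [hM, spectrum.one_eq, Set.mem_singleton_iff] at hpow

theorem not_coprime_orderOf_of_map_ne_one {F M : Type*} [Field F] [CommGroupWithZero M] {p : ℕ}
    {χ : F →*₀ M} {x : SpecialLinearGroup (Fin 2) F} {s : F} (hs : s ≠ 0)
    (htrace : s + s⁻¹ = (x : Matrix (Fin 2) (Fin 2) F).trace) (hpow : χ s ^ p = 1)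
    (hne : χ s ≠ 1) : ¬ (orderOf x).Coprime p := by
  intro hcop
  have hone : χ s ^ orderOf x = 1 := by
    rw [← map_pow, pow_eq_one_of_add_inv_eq_trace hs htrace (pow_orderOf_eq_one x), map_one]
  exact hne (by simpa [hcop.gcd_eq_one] using pow_gcd_eq_one.2 ⟨hone, hpow⟩)

theorem card_specialLinearGroup_mul_card_units (n R : Type*) [Fintype n] [DecidableEq n]
    [Nonempty n] [CommRing R] :
    Nat.card (SpecialLinearGroup n R) * Nat.card Rˣ = Nat.card (GL n R) := by
  have hker : Nat.card (SpecialLinearGroup n R) =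
      Nat.card (GeneralLinearGroup.det : GL n R →* Rˣ).ker := by
    refine Nat.card_congr ((Equiv.ofInjective _ SpecialLinearGroup.toGL_injective).trans
      (Equiv.setCongr ?_))
    ext y
    refine ⟨?_, fun hy ↦ ⟨⟨y, congrArg Units.val hy⟩, Units.ext rfl⟩⟩
    rintro ⟨x, rfl⟩
    exact Units.ext x.2
  rw [hker, ← Subgroup.card_mul_index (GeneralLinearGroup.det : GL n R →* Rˣ).ker,
    Subgroup.index_ker, MonoidHom.range_eq_top.2 GeneralLinearGroup.det_surjective,
    Subgroup.card_top]

theorem card_specialLinearGroup_fin_two (F : Type*) [Field F] [Fintype F] :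
    Nat.card (SpecialLinearGroup (Fin 2) F) =
      Fintype.card F * (Fintype.card F - 1) * (Fintype.card F + 1) := by
  classical
  obtain ⟨r, hr⟩ : ∃ r, Fintype.card F = r + 1 + 1 :=
    ⟨_, (Nat.sub_add_cancel Fintype.one_lt_card).symm⟩
  have h := card_specialLinearGroup_mul_card_units (Fin 2) F
  rw [Matrix.card_GL_field, Fin.prod_univ_two, Nat.card_units, Nat.card_eq_fintype_card (α := F),
    hr] at h
  have h1 : (r + 1 + 1) ^ 2 - 1 = (r + 1) * (r + 3) := by
    rw [Nat.sub_eq_iff_eq_add (Nat.one_le_pow _ _ (by lia))]; ring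
  have h2 : (r + 1 + 1) ^ 2 - (r + 1 + 1) = (r + 1) * (r + 2) := by
    rw [Nat.sub_eq_iff_eq_add (Nat.le_self_pow two_ne_zero _)]; ring
  simp only [Fin.val_zero, Fin.val_one, pow_zero, pow_one, Nat.add_sub_cancel, h1, h2] at h
  refine Nat.eq_of_mul_eq_mul_right r.succ_pos (h.trans ?_)
  rw [hr]
  change _ = _ * (r + 1) * _ * (r + 1)
  ring

theorem center_specialLinearGroup_fin_two_eq_bot (F : Type*) [Field F] [CharP F 2] :
    Subgroup.center (SpecialLinearGroup (Fin 2) F) = ⊥ := by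
  refine (Subgroup.eq_bot_iff_forall _).2 fun x hx ↦ ?_
  obtain ⟨r, hr, hx⟩ := Matrix.SpecialLinearGroup.mem_center_iff.1 hx
  have hr1 : r = 1 := by
    rw [Fintype.card_fin] at hr
    exact CharTwo.sq_injective (hr.trans (one_pow 2).symm)
  exact Subtype.ext (by rw [← hx, hr1, map_one]; rfl)

theorem isSimpleGroup_specialLinearGroup_fin_two (F : Type*) [Field F] [CharP F 2]
    (hF : 4 ≤ Nat.card F) : IsSimpleGroup (SpecialLinearGroup (Fin 2) F) := by
  have := ProjectiveSpecialLinearGroup.rank_two_simple hF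
  exact MulEquiv.isSimpleGroup (((QuotientGroup.quotientMulEquivOfEq
    (center_specialLinearGroup_fin_two_eq_bot F)).trans QuotientGroup.quotientBot).symm :
      _ ≃* ProjectiveSpecialLinearGroup (Fin 2) F)

/-- The homomorphism `t ↦ diag(t, t⁻¹)`, an embedding of the units as a torus. -/
def torus (R : Type*) [CommRing R] : Rˣ →* SpecialLinearGroup (Fin 2) R where
  toFun t := ⟨!![(t : R), 0; 0, (t⁻¹ : Rˣ)], by simp [det_fin_two_of]⟩
  map_one' := Subtype.ext (by simp [one_fin_two])
  map_mul' a b := Subtype.ext <| by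
    change _ = !![(a : R), 0; 0, (a⁻¹ : Rˣ)] * !![(b : R), 0; 0, (b⁻¹ : Rˣ)]
    simp [mul_comm]

theorem coe_torus {R : Type*} [CommRing R] (t : Rˣ) :
    (torus R t : Matrix (Fin 2) (Fin 2) R) = !![(t : R), 0; 0, (t⁻¹ : Rˣ)] := rfl

theorem torus_injective (R : Type*) [CommRing R] : Function.Injective (torus R) := fun _ _ h ↦
  Units.ext (congrArg (fun x : SpecialLinearGroup (Fin 2) R ↦ x.1 0 0) h)

/-- The companion matrix of `X ^ 2 - d * X + 1`. -/
def companion {R : Type*} [CommRing R] (d : R) : SpecialLinearGroup (Fin 2) R :=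
  ⟨!![0, -1; 1, d], by simp [det_fin_two_of]⟩

theorem coe_companion {R : Type*} [CommRing R] (d : R) :
    (companion d : Matrix (Fin 2) (Fin 2) R) = !![0, -1; 1, d] := rfl

theorem trace_companion_mul_torus {R : Type*} [CommRing R] (d : R) (t : Rˣ) :
    ((companion d * torus R t : SpecialLinearGroup (Fin 2) R) : Matrix (Fin 2) (Fin 2) R).trace =
      d * (t⁻¹ : Rˣ) := by
  rw [Matrix.SpecialLinearGroup.coe_mul, coe_companion, coe_torus]
  simp [trace_fin_two_of]

theorem not_coprime_orderOf_companion_mul_torus {K F M : Type*} [Field K] [Fintype K] [CharP K 2]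
    [Field F] [Algebra K F] [CommGroupWithZero M] {p : ℕ} {χ : F →*₀ M} {w : F}
    (hχ : ∀ x ≠ 0, χ x ^ p = 1) (hw : SeparatesZero K χ w) (t : Kˣ) :
    ¬ (orderOf (companion (w ^ Fintype.card K - w)⁻¹ *
      torus F (Units.map (algebraMap K F) t))).Coprime p := by
  obtain ⟨s, hs, hχs, htrace⟩ := (hw.algebraMap_mul t.ne_zero).exists_add_inv_eq
  refine not_coprime_orderOf_of_map_ne_one hs ?_ (hχ s hs) hχs
  rw [trace_companion_mul_torus, htrace, mul_pow, ← map_pow, FiniteField.pow_card, ← mul_sub,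
    mul_inv, mul_comm]
  simp

theorem exists_sylow_le_range {G H : Type*} [Group G] [Finite G] [Group H] {p : ℕ} [Fact p.Prime]
    {f : H →* G} (hf : Function.Injective f)
    (hcard : (Nat.card G).factorization p = (Nat.card H).factorization p) :
    ∃ P : Sylow p G, (P : Subgroup G) ≤ f.range := by
  have := Finite.of_injective f hf
  let Q : Sylow p H := default
  have hQ : Nat.card (Q.map f : Subgroup G) = p ^ (Nat.card G).factorization p := by
    rw [Subgroup.card_map_of_injective hf, Q.card_eq_multiplicity, hcard]
  exact ⟨Sylow.ofCard _ hQ, Subgroup.map_le_range f Q⟩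

theorem factorization_pow_mul_pow_sub_one_mul_pow_add_one {p q m : ℕ} (hp : p.Prime) (hp2 : p ≠ 2)
    (hq : 1 < q) (hdvd : p ∣ q - 1) (hm : ¬ p ∣ m) :
    (q ^ m * (q ^ m - 1) * (q ^ m + 1)).factorization p = (q - 1).factorization p := by
  have := Fact.mk hp
  have hm0 : m ≠ 0 := by rintro rfl; exact hm (dvd_zero _)
  have hqm : 1 < q ^ m := Nat.one_lt_pow hm0 hq
  have hdvd_pow : p ∣ q ^ m - 1 := hdvd.trans (by simpa using Nat.sub_dvd_pow_sub_pow q 1 m)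
  have hq_ndvd : ¬ p ∣ q := fun h ↦
    hp.not_dvd_one ((Nat.dvd_sub_iff_right hq.le h).1 hdvd)
  have hadd_ndvd : ¬ p ∣ q ^ m + 1 := fun h ↦ hp2 <| by
    have hdvd_two : p ∣ 2 := by
      simpa [show q ^ m + 1 - (q ^ m - 1) = 2 by lia] using Nat.dvd_sub h hdvd_pow
    exact (Nat.prime_dvd_prime_iff_eq hp Nat.prime_two).1 hdvd_two
  have hlte := padicValNat.pow_sub_pow (hp.odd_of_ne_two hp2) hq hdvd hq_ndvd hm0
  rw [one_pow, padicValNat.eq_zero_of_not_dvd hm] at hlte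
  rw [Nat.factorization_mul (mul_ne_zero (by lia) (by lia)) (by lia),
    Nat.factorization_mul (by lia) (by lia), Finsupp.add_apply, Finsupp.add_apply,
    Nat.factorization_eq_zero_of_not_dvd (mt hp.dvd_of_dvd_pow hq_ndvd),
    Nat.factorization_eq_zero_of_not_dvd hadd_ndvd, Nat.factorization_def _ hp,
    Nat.factorization_def _ hp, hlte]
  lia

theorem factorization_card_specialLinearGroup_fin_two (K F : Type*) [Field K] [Fintype K]
    [Field F] [Algebra K F] [Module.Finite K F] {p : ℕ} (hp : p.Prime) (hp2 : p ≠ 2)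
    (hdvd : p ∣ Fintype.card K - 1) (hF : ¬ p ∣ finrank K F) :
    (Nat.card (SpecialLinearGroup (Fin 2) F)).factorization p = (Nat.card Kˣ).factorization p := by
  have := Module.finite_of_finite K (M := F)
  have := Fintype.ofFinite F
  rw [card_specialLinearGroup_fin_two, Module.card_eq_pow_finrank (K := K),
    factorization_pow_mul_pow_sub_one_mul_pow_add_one hp hp2 Fintype.one_lt_card hdvd hF,
    Nat.card_units, Nat.card_eq_fintype_card]
end

/-! ### The coset for odd `p` -/

section
open Matrix

/-- `G` has a nontrivial Sylow `p`-subgroup with a left coset consisting of elements of order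
not prime to `p`. -/
def HasSingularCoset (p : ℕ) (G : Type*) [Group G] : Prop :=
  ∃ P : Sylow p G, (P : Subgroup G) ≠ ⊥ ∧
    ∃ g : G, ∀ x ∈ g • ((P : Subgroup G) : Set G), ¬ Nat.Coprime (orderOf x) p

theorem hasSingularCoset_specialLinearGroup {K F M : Type*} [Field K] [Fintype K] [CharP K 2]
    [Field F] [Algebra K F] [Module.Finite K F] [CommGroupWithZero M] {p : ℕ}
    (hp : p.Prime) (hp2 : p ≠ 2) (hdvd : p ∣ Fintype.card K - 1)
    (hF : ¬ p ∣ finrank K F) {χ : F →*₀ M} {w : F} (hχ : ∀ x ≠ 0, χ x ^ p = 1)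
    (hw : SeparatesZero K χ w) :
    HasSingularCoset p (SpecialLinearGroup (Fin 2) F) := by
  have := Fact.mk hp
  have := Module.finite_of_finite K (M := F)
  have hcard := factorization_card_specialLinearGroup_fin_two K F hp hp2 hdvd hF
  have hinj : Function.Injective ((torus F).comp (Units.map (algebraMap K F : K →* F))) :=
    (torus_injective F).comp (Units.map_injective (algebraMap K F).injective)
  obtain ⟨P, hP⟩ := exists_sylow_le_range hinj hcard
  have hdvd_card : p ∣ Nat.card (SpecialLinearGroup (Fin 2) F) := by
    refine Nat.dvd_of_factorization_pos (hcard ▸ ?_)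
    rw [Nat.card_units, Nat.card_eq_fintype_card]
    exact (hp.factorization_pos_of_dvd (Nat.sub_ne_zero_of_lt Fintype.one_lt_card) hdvd).ne'
  refine ⟨P, P.ne_bot_of_dvd_card hdvd_card, companion (w ^ Fintype.card K - w)⁻¹, ?_⟩
  rintro _ ⟨y, hy, rfl⟩
  obtain ⟨t, rfl⟩ := hP hy
  exact not_coprime_orderOf_companion_mul_torus hχ hw t

theorem exists_isSimpleGroup_hasSingularCoset_of_ne_two {p : ℕ} (hp : p.Prime) (hp2 : p ≠ 2) :
    ∃ (G : Type) (_ : Group G) (_ : Finite G), IsSimpleGroup G ∧ HasSingularCoset p G := by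
  have := Fact.mk hp
  have hp3 : 3 ≤ p := lt_of_le_of_ne hp.two_le hp2.symm
  let K := GaloisField 2 (p - 1)
  have := Fintype.ofFinite K
  have hdvd : p ∣ Fintype.card K - 1 := by
    rw [← Nat.card_eq_fintype_card, GaloisField.card 2 _ (by lia),
      ← Nat.modEq_iff_dvd' Nat.one_le_two_pow, ← Nat.totient_prime hp]
    exact (Nat.ModEq.pow_totient ((Nat.coprime_primes Nat.prime_two hp).2 hp2.symm)).symm
  obtain ⟨F, _, _, χ, w, hF, hχ, hw⟩ := exists_extension_separatesZero hp hdvd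
  have := Module.finite_of_finrank_pos (Nat.pos_of_ne_zero fun h ↦ hF (h ▸ dvd_zero p))
  have := Module.finite_of_finite K (M := F)
  have := charP_of_injective_algebraMap (algebraMap K F).injective 2
  have hcard : 4 ≤ Nat.card F := by
    have hle := Nat.le_of_dvd (Nat.sub_pos_of_lt Fintype.one_lt_card) hdvd
    have hKF := Nat.card_le_card_of_injective _ (algebraMap K F).injective
    rw [Nat.card_eq_fintype_card (α := K)] at hKF
    lia
  exact ⟨_, inferInstance, inferInstance, isSimpleGroup_specialLinearGroup_fin_two F hcard,
    hasSingularCoset_specialLinearGroup hp hp2 hdvd hF hχ hw⟩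
end

/-! ### The coset for `p = 2` -/

section

variable {G : Type*} [Group G] {a b : G}

/-- The Klein four-group `{1, a, b, ab}` generated by two commuting involutions `a` and `b`. -/
def kleinFour (ha : a * a = 1) (hb : b * b = 1) (hab : Commute a b) : Subgroup G where
  carrier := {1, a, b, a * b}
  one_mem' := by simp
  mul_mem' := by
    have ha' (z : G) : a * (a * z) = z := by rw [← mul_assoc, ha, one_mul]
    have hab' (z : G) : b * (a * z) = a * (b * z) := (hab.left_comm z).symm
    rintro x y (rfl | rfl | rfl | rfl) (rfl | rfl | rfl | rfl) <;>
      simp [mul_assoc, ha, hb, ha', hab', ← hab.eq]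
  inv_mem' := by
    have ha' : a⁻¹ = a := inv_eq_of_mul_eq_one_left ha
    have hb' : b⁻¹ = b := inv_eq_of_mul_eq_one_left hb
    rintro x (rfl | rfl | rfl | rfl) <;> simp [ha', hb', ← hab.eq]

theorem card_kleinFour (ha : a * a = 1) (hb : b * b = 1) (hab : Commute a b) (ha1 : a ≠ 1)
    (hb1 : b ≠ 1) (hne : a ≠ b) : Nat.card (kleinFour ha hb hab) = 4 := by
  have hab1 : a * b ≠ 1 := fun h ↦ hne (mul_left_cancel (ha.trans h.symm))
  change Nat.card ({1, a, b, a * b} : Set G) = 4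
  rw [Nat.card_coe_set_eq, Set.ncard_insert_of_notMem, Set.ncard_insert_of_notMem,
    Set.ncard_pair] <;> simp [ha1, hb1, ha1.symm, hb1.symm, hab1.symm, hne]
end

section
open Matrix

theorem pow_card_eq_one_of_mem_center {n R : Type*} [Fintype n] [DecidableEq n] [CommRing R]
    {x : SpecialLinearGroup n R} (hx : x ∈ Subgroup.center (SpecialLinearGroup n R)) :
    x ^ Fintype.card n = 1 := by
  obtain ⟨r, hr, hx⟩ := Matrix.SpecialLinearGroup.mem_center_iff.1 hx
  ext i j
  rw [Matrix.SpecialLinearGroup.coe_pow, ← hx, ← map_pow, hr, map_one,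
    Matrix.SpecialLinearGroup.coe_one]

theorem mem_center_specialLinearGroup_fin_two_iff {R : Type*} [CommRing R]
    {x : SpecialLinearGroup (Fin 2) R} :
    x ∈ Subgroup.center (SpecialLinearGroup (Fin 2) R) ↔
      x 0 0 = x 1 1 ∧ x 0 1 = 0 ∧ x 1 0 = 0 := by
  rw [Matrix.SpecialLinearGroup.mem_center_iff]
  constructor
  · rintro ⟨r, -, hx⟩
    simp [← hx]
  · rintro ⟨hdiag, h01, h10⟩
    have hdet := det_fin_two x.1
    refine ⟨x 0 0, ?_, ?_⟩
    · rw [x.2] at hdet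
      simp_all [sq]
    · ext i j
      fin_cases i <;> fin_cases j <;> simp [hdiag, h01, h10]

theorem not_coprime_orderOf_mk_two {F : Type*} [Field F] (hF : ringChar F ≠ 2)
    {x : SpecialLinearGroup (Fin 2) F} {s r : F} {m : ℕ} (hs : s ^ (2 * m) = -1)
    (hsr : s * r = 1) (htrace : s + r = (x : Matrix (Fin 2) (Fin 2) F).trace) :
    ¬ (orderOf (x : ProjectiveSpecialLinearGroup (Fin 2) F)).Coprime 2 := by
  have hneg : (-1 : F) ≠ 1 := Ring.neg_one_ne_one_of_char_ne_two hF
  rw [eq_inv_of_mul_eq_one_right hsr] at htrace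
  intro hcop
  set n := orderOf (x : ProjectiveSpecialLinearGroup (Fin 2) F)
  have hcenter : x ^ n ∈ Subgroup.center (SpecialLinearGroup (Fin 2) F) := by
    rw [← QuotientGroup.eq_one_iff, QuotientGroup.mk_pow]
    exact pow_orderOf_eq_one _
  have hx : x ^ (n * 2) = 1 := by
    simpa [pow_mul] using pow_card_eq_one_of_mem_center hcenter
  have hspow : (s ^ (2 * m)) ^ n = 1 := by
    rw [← pow_mul, mul_right_comm, mul_comm 2, pow_mul,
      pow_eq_one_of_add_inv_eq_trace (left_ne_zero_of_mul_eq_one hsr) htrace hx, one_pow]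
  rw [hs, (Nat.coprime_two_right.1 hcop).neg_one_pow] at hspow
  exact hneg hspow

theorem two_mul_card_projectiveSpecialLinearGroup_fin_two (F : Type*) [Field F] [Fintype F]
    (hF : ringChar F ≠ 2) :
    2 * Nat.card (ProjectiveSpecialLinearGroup (Fin 2) F) =
      Fintype.card F * (Fintype.card F - 1) * (Fintype.card F + 1) := by
  have hcenter : Nat.card (Subgroup.center (SpecialLinearGroup (Fin 2) F)) = 2 := by
    rw [Nat.card_congr (SpecialLinearGroup.center_equiv_rootsOfUnity' (0 : Fin 2)).toEquiv,
      Fintype.card_fin]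
    exact (IsPrimitiveRoot.neg_one (ringChar F) hF).card_rootsOfUnity
  rw [← card_specialLinearGroup_fin_two, Subgroup.card_eq_card_quotient_mul_card_subgroup
    (Subgroup.center (SpecialLinearGroup (Fin 2) F)), hcenter, mul_comm]

theorem hasSingularCoset_two_of_kleinFour {G : Type*} [Group G] [Finite G]
    (hG : (Nat.card G).factorization 2 = 2) {a b c : G} (ha : a * a = 1) (hb : b * b = 1)
    (hab : Commute a b) (ha1 : a ≠ 1) (hb1 : b ≠ 1) (hne : a ≠ b)
    (hcoset : ∀ y ∈ ({1, a, b, a * b} : Set G), ¬ (orderOf (c * y)).Coprime 2) :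
    HasSingularCoset 2 G := by
  have hcard := card_kleinFour ha hb hab ha1 hb1 hne
  refine ⟨Sylow.ofCard (kleinFour ha hb hab) (by rw [hcard, hG]; rfl), ?_, c, ?_⟩
  · rw [Sylow.coe_ofCard]
    intro h
    simp [h] at hcard
  · rintro _ ⟨y, hy, rfl⟩
    exact hcoset y hy

instance fact_prime_fifty_three : Fact (Nat.Prime 53) := ⟨by norm_num⟩

/-- The diagonal involution modulo the centre in the Sylow `2`-subgroup used for `p = 2`; here
`30 ^ 2 = -1` in `ZMod 53`. -/
def diagonalInvolution : SpecialLinearGroup (Fin 2) (ZMod 53) :=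
  ⟨!![30, 0; 0, 23], by rw [det_fin_two_of]; decide⟩

/-- The antidiagonal involution modulo the centre in the Sylow `2`-subgroup used for `p = 2`. -/
def antidiagonalInvolution : SpecialLinearGroup (Fin 2) (ZMod 53) :=
  ⟨!![0, 1; -1, 0], by rw [det_fin_two_of]; decide⟩

/-- The representative, found by computer search, of the coset used for `p = 2`. -/
def singularRepresentative : SpecialLinearGroup (Fin 2) (ZMod 53) :=
  ⟨!![1, 3; 28, 32], by rw [det_fin_two_of]; decide⟩

theorem factorization_card_projectiveSpecialLinearGroup_zmod :
    (Nat.card (ProjectiveSpecialLinearGroup (Fin 2) (ZMod 53))).factorization 2 = 2 := by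
  have h := two_mul_card_projectiveSpecialLinearGroup_fin_two (ZMod 53)
    (by rw [ZMod.ringChar_zmod_n]; decide)
  rw [ZMod.card] at h
  rw [show Nat.card (ProjectiveSpecialLinearGroup (Fin 2) (ZMod 53)) = 2 ^ 2 * 18603 by lia,
    Nat.factorization_mul (by lia) (by lia), Nat.prime_two.factorization_pow]
  simp [Nat.factorization_eq_zero_of_not_dvd (show ¬ 2 ∣ 18603 by lia)]

theorem not_coprime_orderOf_singularRepresentative_mul
    {y : SpecialLinearGroup (Fin 2) (ZMod 53)}
    (hy : y ∈ ({1, diagonalInvolution, antidiagonalInvolution,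
      diagonalInvolution * antidiagonalInvolution} :
        Set (SpecialLinearGroup (Fin 2) (ZMod 53)))) :
    ¬ (orderOf (↑(singularRepresentative * y) :
      ProjectiveSpecialLinearGroup (Fin 2) (ZMod 53))).Coprime 2 := by
  have hchar : ringChar (ZMod 53) ≠ 2 := by rw [ZMod.ringChar_zmod_n]; decide
  rcases hy with rfl | rfl | rfl | rfl
  · exact not_coprime_orderOf_mk_two hchar (s := 14) (r := 19) (m := 13)
      (by decide) (by decide) (by decide)
  · exact not_coprime_orderOf_mk_two hchar (s := 26) (r := 51) (m := 13)
      (by decide) (by decide) (by decide)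
  · exact not_coprime_orderOf_mk_two hchar (s := 33) (r := 45) (m := 13)
      (by decide) (by decide) (by decide)
  · exact not_coprime_orderOf_mk_two hchar (s := 2) (r := 27) (m := 13)
      (by decide) (by decide) (by decide)

theorem hasSingularCoset_two_projectiveSpecialLinearGroup_zmod :
    HasSingularCoset 2 (ProjectiveSpecialLinearGroup (Fin 2) (ZMod 53)) := by
  have hmk (x : SpecialLinearGroup (Fin 2) (ZMod 53)) :
      (x : ProjectiveSpecialLinearGroup (Fin 2) (ZMod 53)) = 1 ↔
        x 0 0 = x 1 1 ∧ x 0 1 = 0 ∧ x 1 0 = 0 :=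
    (QuotientGroup.eq_one_iff x).trans mem_center_specialLinearGroup_fin_two_iff
  refine hasSingularCoset_two_of_kleinFour factorization_card_projectiveSpecialLinearGroup_zmod
    ((hmk (diagonalInvolution * diagonalInvolution)).2 (by decide))
    ((hmk (antidiagonalInvolution * antidiagonalInvolution)).2 (by decide))
    (mul_inv_eq_one.1 ((hmk (diagonalInvolution * antidiagonalInvolution *
      (antidiagonalInvolution * diagonalInvolution)⁻¹)).2 (by decide)))
    (mt (hmk diagonalInvolution).1 (by decide)) (mt (hmk antidiagonalInvolution).1 (by decide))
    (mt (fun h ↦ (hmk (diagonalInvolution * antidiagonalInvolution⁻¹)).1 (mul_inv_eq_one.2 h))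
      (by decide)) (c := singularRepresentative) ?_
  rintro _ (rfl | rfl | rfl | rfl) <;>
    exact not_coprime_orderOf_singularRepresentative_mul (by simp)
end

end SylowCoset

/-- **Theorem.** For every prime `p` there is a finite simple group `G` with a nontrivial
Sylow `p`-subgroup `P` such that some left coset of `P` in `G` contains no `p'`-elements
(elements of order prime to `p`). -/
theorem exists_simple_group_coset_without_p'_elements (p : ℕ) (hp : p.Prime) :
    ∃ (G : Type) (_ : Group G) (_ : Finite G), IsSimpleGroup G ∧
      ∃ P : Sylow p G, (P : Subgroup G) ≠ ⊥ ∧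
        ∃ g : G, ∀ x ∈ g • ((P : Subgroup G) : Set G), ¬ Nat.Coprime (orderOf x) p := by
  rcases eq_or_ne p 2 with rfl | hp2
  · exact ⟨_, inferInstance, inferInstance,
      Matrix.ProjectiveSpecialLinearGroup.rank_two_simple (by simp),
      SylowCoset.hasSingularCoset_two_projectiveSpecialLinearGroup_zmod⟩
  · exact SylowCoset.exists_isSimpleGroup_hasSingularCoset_of_ne_two hp hp2
end

section
/- Let k be an algebraically closed field, let G be a group with a normal subgroup N, and let U and W be finite-dimensional irreducible kG-modules such that N acts irreducibly on U and trivially on W. Then the tensor product V = U ⊗_k W, with the diagonal G-action, is an irreducible kG-module. -/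
open scoped TensorProduct

/-- A submodule is `ρ`-invariant if it is stable under every `ρ g`. -/
def IsInvariantSubmodule {k G V : Type*} [CommSemiring k] [Monoid G] [AddCommMonoid V]
    [Module k V] (ρ : Representation k G V) (U : Submodule k V) : Prop :=
  ∀ g : G, ∀ v ∈ U, ρ g v ∈ U

/-- A representation is irreducible if `V ≠ 0` and the only invariant submodules are `⊥`
and `⊤`. -/
def IsIrreducibleRep {k G V : Type*} [CommSemiring k] [Monoid G] [AddCommMonoid V]
    [Module k V] (ρ : Representation k G V) : Prop :=
  Nontrivial V ∧ ∀ U : Submodule k V, IsInvariantSubmodule ρ U → U = ⊥ ∨ U = ⊤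

/-!
An `N`-submodule `X` of `U ⊗ W` is stable under the operators `ρU n ⊗ 1`, hence, as the image of
`k[N]` is dense in `End U` by Schur's lemma and the density theorem, under `f ⊗ 1` for every
endomorphism `f` of `U`. Contracting with the coordinate functionals of `U` then shows `X = U ⊗ Y`,
where `Y` consists of the `w` with `U ⊗ w ⊆ X`. If `X` is moreover `G`-stable, so is `Y`, and the
irreducibility of `W` leaves only `Y = 0` and `Y = W`.
-/

section RightFactor

variable {R M P : Type*} [CommSemiring R] [AddCommMonoid M] [Module R M]
  [AddCommMonoid P] [Module R P]

/-- The largest submodule `Y` of `P` such that `X` contains the image of `M ⊗ Y`; if `X` has the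
form `M ⊗ Y`, this is how `Y` is recovered from it. -/
def rightFactor (X : Submodule R (M ⊗[R] P)) : Submodule R P :=
  ⨅ m : M, X.comap (TensorProduct.mk R M P m)

theorem mem_rightFactor {X : Submodule R (M ⊗[R] P)} {p : P} :
    p ∈ rightFactor X ↔ ∀ m : M, m ⊗ₜ[R] p ∈ X := by
  simp [rightFactor]

theorem range_lTensor_rightFactor_le (X : Submodule R (M ⊗[R] P)) :
    LinearMap.range ((rightFactor X).subtype.lTensor M) ≤ X := by
  rintro _ ⟨z, rfl⟩
  induction z using TensorProduct.induction_on with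
  | zero => simp
  | tmul m y => exact mem_rightFactor.mp y.2 m
  | add z z' hz hz' => simpa only [map_add] using X.add_mem hz hz'

theorem rTensor_smulRight_apply (φ : M →ₗ[R] R) (m : M) (x : M ⊗[R] P) :
    (φ.smulRight m).rTensor P x = m ⊗ₜ[R] TensorProduct.lid R P (φ.rTensor P x) := by
  induction x using TensorProduct.induction_on with
  | zero => simp
  | tmul m' p => simp [TensorProduct.smul_tmul]
  | add x x' hx hx' => simp only [map_add, hx, hx', TensorProduct.tmul_add]

theorem lid_rTensor_mem_rightFactor {X : Submodule R (M ⊗[R] P)}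
    (hX : ∀ f : Module.End R M, ∀ x ∈ X, f.rTensor P x ∈ X) (φ : M →ₗ[R] R)
    {x : M ⊗[R] P} (hx : x ∈ X) :
    TensorProduct.lid R P (φ.rTensor P x) ∈ rightFactor X :=
  mem_rightFactor.mpr fun m => rTensor_smulRight_apply φ m x ▸ hX (φ.smulRight m) x hx

theorem range_lTensor_rightFactor_eq [Module.Free R M] {X : Submodule R (M ⊗[R] P)}
    (hX : ∀ f : Module.End R M, ∀ x ∈ X, f.rTensor P x ∈ X) :
    LinearMap.range ((rightFactor X).subtype.lTensor M) = X := by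
  refine le_antisymm (range_lTensor_rightFactor_le X) fun x hx => ?_
  let b := Module.Free.chooseBasis R M
  let c := TensorProduct.equivFinsuppOfBasisLeft (N := P) b
  have hc : ∀ i, c x i ∈ rightFactor X := fun i => by
    rw [TensorProduct.equivFinsuppOfBasisLeft_apply]
    exact lid_rTensor_mem_rightFactor hX (b.coord i) hx
  rw [← c.symm_apply_apply x, TensorProduct.equivFinsuppOfBasisLeft_symm_apply]
  exact Submodule.sum_mem _ fun i _ => ⟨b i ⊗ₜ[R] ⟨c x i, hc i⟩, rfl⟩

end RightFactor

theorem isInvariantSubmodule_rightFactor {k G U W : Type*} [CommSemiring k] [Group G]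
    [AddCommMonoid U] [Module k U] [AddCommMonoid W] [Module k W]
    {ρU : Representation k G U} {ρW : Representation k G W} {X : Submodule k (U ⊗[k] W)}
    (hX : IsInvariantSubmodule (ρU.tprod ρW) X) :
    IsInvariantSubmodule ρW (rightFactor X) := by
  intro g w hw
  refine mem_rightFactor.mpr fun u => ?_
  simpa [Representation.tprod_apply] using hX g _ (mem_rightFactor.mp hw (ρU g⁻¹ u))

theorem rTensor_asAlgebraHom_mem {k H U W : Type*} [CommSemiring k] [Monoid H]
    [AddCommMonoid U] [Module k U] [AddCommMonoid W] [Module k W]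
    {ρ : Representation k H U} {X : Submodule k (U ⊗[k] W)}
    (hX : ∀ h : H, ∀ x ∈ X, (ρ h).rTensor W x ∈ X) (r : MonoidAlgebra k H)
    {x : U ⊗[k] W} (hx : x ∈ X) : (ρ.asAlgebraHom r).rTensor W x ∈ X := by
  induction r using MonoidAlgebra.induction_on with
  | of h => simpa using hX h x hx
  | add a b ha hb => simpa [LinearMap.rTensor_add] using X.add_mem ha hb
  | smul c a ha => simpa [LinearMap.rTensor_smul] using X.smul_mem c ha

section Density

variable {k H U W : Type*} [Field k] [Monoid H] [AddCommGroup U] [Module k U]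
  [AddCommGroup W] [Module k W] {ρ : Representation k H U}

theorem IsIrreducibleRep.isIrreducible (hρ : IsIrreducibleRep ρ) : ρ.IsIrreducible where
  exists_pair_ne :=
    have := hρ.1
    ⟨⊥, ⊤, fun h => bot_ne_top (congrArg Subrepresentation.toSubmodule h)⟩
  eq_bot_or_eq_top X :=
    (hρ.2 X.toSubmodule fun g _ hv => X.apply_mem_toSubmodule g hv).imp
      (fun h => Subrepresentation.toSubmodule_injective h)
      (fun h => Subrepresentation.toSubmodule_injective h)

theorem IsIrreducibleRep.algebraMap_intertwiningMap_surjective [IsAlgClosed k]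
    [FiniteDimensional k U] (hρ : IsIrreducibleRep ρ) :
    Function.Surjective (algebraMap k (Representation.IntertwiningMap ρ ρ)) :=
  have := hρ.isIrreducible
  Representation.IsIrreducible.algebraMap_intertwiningMap_bijective_of_isAlgClosed.surjective

theorem IsIrreducibleRep.exists_asAlgebraHom_eqOn (hρ : IsIrreducibleRep ρ)
    (hEnd : Function.Surjective (algebraMap k (Representation.IntertwiningMap ρ ρ)))
    (f : Module.End k U) (s : Finset U) :
    ∃ r : MonoidAlgebra k H, ∀ u ∈ s, f u = ρ.asAlgebraHom r u := by
  have := hρ.isIrreducible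
  -- The commutant of `ρ` consists of scalars, so `f` is linear over it.
  let F : Module.End (Module.End (MonoidAlgebra k H) ρ.asModule) ρ.asModule :=
    { toFun := f
      map_add' := f.map_add
      map_smul' := fun e u => by
        obtain ⟨e, rfl⟩ := (Representation.IntertwiningMap.equivAlgEnd (ρ := ρ)).surjective e
        obtain ⟨c, rfl⟩ := hEnd e
        exact f.map_smul c u }
  exact jacobson_density F s

theorem IsIrreducibleRep.rTensor_mem (hρ : IsIrreducibleRep ρ)
    (hEnd : Function.Surjective (algebraMap k (Representation.IntertwiningMap ρ ρ)))
    {X : Submodule k (U ⊗[k] W)} (hX : ∀ h : H, ∀ x ∈ X, (ρ h).rTensor W x ∈ X)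
    (f : Module.End k U) {x : U ⊗[k] W} (hx : x ∈ X) : f.rTensor W x ∈ X := by
  classical
  obtain ⟨s, rfl⟩ := TensorProduct.exists_finset x
  obtain ⟨r, hr⟩ := hρ.exists_asAlgebraHom_eqOn hEnd f (s.image Prod.fst)
  have hfr : f.rTensor W (∑ i ∈ s, i.1 ⊗ₜ[k] i.2) =
      (ρ.asAlgebraHom r).rTensor W (∑ i ∈ s, i.1 ⊗ₜ[k] i.2) := by
    simp only [map_sum, LinearMap.rTensor_tmul]
    exact Finset.sum_congr rfl fun i hi => by rw [hr i.1 (Finset.mem_image_of_mem Prod.fst hi)]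
  exact hfr ▸ rTensor_asAlgebraHom_mem hX r hx

end Density

theorem tprod_irreducible_general {k G N U W : Type*} [Field k] [Group G] [Monoid N]
    [AddCommGroup U] [Module k U] [AddCommGroup W] [Module k W]
    {ρU : Representation k G U} {ρW : Representation k G W} (ι : N →* G)
    (hNU : IsIrreducibleRep (ρU.comp ι))
    (hEnd : Function.Surjective
      (algebraMap k (Representation.IntertwiningMap (ρU.comp ι) (ρU.comp ι))))
    (hW : IsIrreducibleRep ρW) (hNW : ∀ n : N, ρW (ι n) = 1) :
    IsIrreducibleRep (ρU.tprod ρW) := by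
  have := hNU.1
  have := hW.1
  refine ⟨inferInstance, fun X hX => ?_⟩
  have hN : ∀ n : N, ∀ x ∈ X, ((ρU.comp ι) n).rTensor W x ∈ X := fun n x hx => by
    have hnx := hX (ι n) x hx
    rwa [Representation.tprod_apply, hNW n] at hnx
  rw [← range_lTensor_rightFactor_eq fun f _ hx => hNU.rTensor_mem hEnd hN f hx]
  rcases hW.2 (rightFactor X) (isInvariantSubmodule_rightFactor hX) with hY | hY
  · left
    rw [hY, Subsingleton.elim (⊥ : Submodule k W).subtype 0, LinearMap.lTensor_zero,
      LinearMap.range_zero]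
  · right
    rw [hY]
    exact LinearMap.range_eq_top.mpr
      (LinearMap.lTensor_surjective U (Submodule.topEquiv (R := k) (M := W)).surjective)

/-- **Lemma.** Let `k` be algebraically closed, `G` a group with a normal subgroup `N`, and
`U`, `W` finite-dimensional irreducible `kG`-modules with `N` irreducible on `U` and trivial
on `W`.  Then `V = U ⊗ W` with the diagonal `G`-action is an irreducible `kG`-module. -/
theorem tprod_irreducible
    (k : Type*) [Field k] [IsAlgClosed k]
    (G : Type*) [Group G] (N : Subgroup G) (hN : N.Normal)
    (U W : Type*) [AddCommGroup U] [Module k U] [FiniteDimensional k U]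
    [AddCommGroup W] [Module k W] [FiniteDimensional k W]
    (ρU : Representation k G U) (ρW : Representation k G W)
    (hU : IsIrreducibleRep ρU) (hW : IsIrreducibleRep ρW)
    (hNU : IsIrreducibleRep (ρU.comp N.subtype))
    (hNW : ∀ x : N, ρW (x : G) = 1) :
    IsIrreducibleRep (ρU.tprod ρW) :=
  tprod_irreducible_general N.subtype hNU hNU.algebraMap_intertwiningMap_surjective hW hNW
end

section
/- Let k be an algebraically closed field of characteristic p > 0, let G be a group with a normal subgroup N, and let U and W be finite-dimensional irreducible kG-modules such that N acts irreducibly on U and trivially on W; set V = U ⊗_k W with the diagonal G-action. If every element of N acts on V by a semisimple operator and (G,W) is weakly adequate, then (G,V) is weakly adequate. -/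
open scoped TensorProduct

/-- An endomorphism of a vector space is *semisimple* (i.e. diagonalizable over an algebraic
closure of the base field) precisely when its minimal polynomial is separable. -/
def IsSemisimpleEnd {k V : Type*} [Field k] [AddCommGroup V] [Module k V]
    (f : Module.End k V) : Prop :=
  (minpoly k f).Separable

/-- `(G, V)` is weakly adequate if `End_k(V)` is spanned as a `k`-vector space by the
operators `ρ g`, `g ∈ G`, which are semisimple. -/
def WeaklyAdequate {k G V : Type*} [Field k] [Monoid G] [AddCommGroup V] [Module k V]
    (ρ : Representation k G V) : Prop :=
  Submodule.span k {f : Module.End k V | ∃ g : G, IsSemisimpleEnd (ρ g) ∧ ρ g = f} = ⊤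

/-!
Let `H` be the Zariski identity component of `G` acting on `V`: it is normal of finite index and
its coefficient algebra is a domain. If a linear form `Φ` on `End V` kills all semisimple `ρ g`,
then it kills `ρ x` whenever `x ^ m ∈ H` with `p ∤ m`. Indeed `ρ g ^ p ^ a` is semisimple for
`p ^ a ≥ dim V`, so `Φ` kills the `p ^ a`-th powers of all elements of the Zariski closure of the
cone over `ρ G`. By a valuative degeneration the closure of the cone over `ρ H` contains some `Z`
of rank one in every matrix block of the algebra `A` spanned by `ρ H`. For generic `h ∈ H` the
operator `T = Z * ρ h * ρ x` is annihilated by a separable polynomial `X * ∏ (X ^ m - t)`, hence is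
a linear combination of the `(T ^ i) ^ p ^ a`, so `Φ T = 0`; and `Z` generates `A` as a two-sided
ideal.

Since the elements of `N` are semisimple, the image of `N` in `G ⧸ H` has order prime to `p`.
Therefore, for suitable `c`, every `x = g ^ p ^ c * n` with `n ∈ N` satisfies `x ^ m ∈ H` for some
`m` prime to `p`. The operators `ρ x` for these `x` span `End V`: a semisimple operator is a linear
combination of `p ^ c`-th powers of its powers, so weak adequacy of `W` makes the `ρW (g ^ p ^ c)`
span `End W`.
-/

section SemisimplePowers

open Polynomial

theorem isSemisimpleEnd_pow_expChar_pow {k V : Type*} [Field k] [PerfectField k] (p : ℕ)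
    [Fact p.Prime] [CharP k p] [AddCommGroup V] [Module k V] [FiniteDimensional k V]
    (f : Module.End k V) {a : ℕ} (ha : Module.finrank k V ≤ p ^ a) :
    IsSemisimpleEnd (f ^ p ^ a) := by
  obtain ⟨n, hn, s, hs, hnil, hss, hf⟩ := f.exists_isNilpotent_isSemisimple
  have hcomm : Commute n s :=
    Algebra.commute_of_mem_adjoin_singleton_of_commute hs
      (Algebra.commute_of_mem_adjoin_self hn).symm
  have hn0 : n ^ p ^ a = 0 := pow_eq_zero_of_le ha <| by
    simpa [hnil.charpoly_eq_X_pow_finrank] using n.aeval_self_charpoly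
  have hp : (p : Module.End k V) = 0 := by
    rw [← map_natCast (algebraMap k _), CharP.cast_eq_zero, map_zero]
  obtain ⟨r, hr⟩ := hcomm.exists_add_pow_prime_pow_eq (Fact.out : p.Prime) a
  rw [hf, hr, hp, hn0, zero_mul, zero_mul, zero_mul, zero_add, add_zero]
  exact PerfectField.separable_iff_squarefree.2 (hss.pow _).minpoly_squarefree

theorem dvd_of_separable_of_forall_isRoot {k : Type*} [Field k] [IsAlgClosed k] {P Q : k[X]}
    (hP : P.Separable) (h : ∀ c, P.IsRoot c → Q.IsRoot c) : P ∣ Q := by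
  rcases eq_or_ne Q 0 with rfl | hQ
  · exact dvd_zero P
  refine (IsAlgClosed.splits P).dvd_of_roots_le_roots hP.ne_zero
    ((Multiset.le_iff_subset (nodup_roots hP)).2 fun c hc => ?_)
  exact (mem_roots hQ).2 (h c (isRoot_of_mem_roots hc))

theorem aeval_eq_of_separable {k A : Type*} [Field k] [IsAlgClosed k] [Ring A] [Algebra k A] {f : A}
    {P Q R : k[X]} (hP : P.Separable) (hf : aeval f P = 0)
    (h : ∀ c ∈ P.roots, Q.eval c = R.eval c) : aeval f Q = aeval f R := by
  have hdvd : P ∣ Q - R := dvd_of_separable_of_forall_isRoot hP fun c hc => by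
    rw [IsRoot, eval_sub, h c ((mem_roots hP.ne_zero).2 hc), sub_self]
  rw [← sub_eq_zero, ← map_sub, aeval_eq_zero_of_dvd_aeval_eq_zero hdvd hf]

theorem mem_span_pow_of_separable {k A : Type*} [Field k] [IsAlgClosed k] (p : ℕ) [Fact p.Prime]
    [CharP k p] [Ring A] [Algebra k A] {f : A} {P : k[X]} (hP : P.Separable)
    (hf : aeval f P = 0) (a : ℕ) :
    f ∈ Submodule.span k (Set.range fun i : ℕ => (f ^ i) ^ p ^ a) := by
  classical
  have hinj : Function.Injective fun c : k => c ^ p ^ a := iterateFrobenius_inj k p a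
  let L := Lagrange.interpolate P.roots.toFinset (fun c : k => c ^ p ^ a) id
  have hfL : aeval f (X : k[X]) = aeval f (L.comp (X ^ p ^ a)) :=
    aeval_eq_of_separable hP hf fun c hc => by
      rw [eval_X, eval_comp, eval_pow, eval_X]
      exact (Lagrange.eval_interpolate_at_node id hinj.injOn (Multiset.mem_toFinset.2 hc)).symm
  rw [aeval_X, aeval_comp, map_pow, aeval_X] at hfL
  suffices aeval (f ^ p ^ a) L ∈ Submodule.span k (Set.range fun i : ℕ => (f ^ i) ^ p ^ a) by
    rwa [← hfL] at this
  rw [aeval_eq_sum_range]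
  exact Submodule.sum_mem _ fun i _ =>
    Submodule.smul_mem _ _ (Submodule.subset_span ⟨i, pow_right_comm f i _⟩)

theorem exists_pow_eq_sum_of_separable {k A : Type*} [Field k] [IsAlgClosed k] [Ring A]
    [Algebra k A] {f : A} {P : k[X]} (hP : P.Separable) (hf : aeval f P = 0) :
    ∃ (s : Finset k) (B : k → A), ∀ e : ℕ, f ^ e = ∑ c ∈ s, c ^ e • B c := by
  classical
  refine ⟨P.roots.toFinset, fun c => aeval f (Lagrange.basis P.roots.toFinset id c), fun e => ?_⟩
  have h := aeval_eq_of_separable (Q := X ^ e)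
    (R := Lagrange.interpolate P.roots.toFinset id fun c => c ^ e) hP hf fun c hc => by
      simpa using (Lagrange.eval_interpolate_at_node (fun c : k => c ^ e)
        Function.injective_id.injOn (Multiset.mem_toFinset.2 hc)).symm
  rw [map_pow, aeval_X] at h
  simp [h, Lagrange.interpolate_apply, Algebra.smul_def]

theorem separable_X_mul_prod_X_pow_sub_C {k : Type*} [Field k] {m : ℕ} (hm : (m : k) ≠ 0)
    {s : Finset k} (hs : (0 : k) ∉ s) :
    ((X : k[X]) * ∏ t ∈ s, (X ^ m - C t)).Separable := by
  have hs0 : ∀ t ∈ s, t ≠ 0 := fun t ht h => hs (h ▸ ht)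
  have hm0 : m ≠ 0 := fun h => hm (by simp [h])
  refine separable_X.mul (separable_prod' (fun x _ y _ hxy => ?_) fun t ht =>
    separable_X_pow_sub_C t hm (hs0 t ht)) (IsCoprime.prod_right fun t ht => ?_)
  · have := (isCoprime_X_sub_C_of_isUnit_sub (sub_ne_zero.2 hxy).isUnit).map (expand k m).toRingHom
    simpa using this
  · rw [irreducible_X.coprime_iff_not_dvd, X_dvd_iff]
    simp [hm0.symm, hs0 t ht]

end SemisimplePowers

section Burnside

/-- Burnside's theorem. -/
theorem lsmul_surjective_of_isSimpleModule (k : Type*) {A V : Type*} [Field k] [IsAlgClosed k]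
    [Ring A] [Algebra k A] [AddCommGroup V] [Module k V] [Module A V] [IsScalarTower k A V]
    [FiniteDimensional k V] [IsSimpleModule A V] :
    Function.Surjective (Algebra.lsmul k k V : A →ₐ[k] Module.End k V) := by
  intro f
  have schur := (IsSimpleModule.algebraMap_end_bijective_of_isAlgClosed (A := A) (V := V) k).2
  have : Module.Finite (Module.End A V) V := .of_restrictScalars_finite k _ _
  let f' : Module.End (Module.End A V) V :=
    { f with
      map_smul' := fun φ v => by
        obtain ⟨c, rfl⟩ := schur φ
        exact f.map_smul c v }
  obtain ⟨r, hr⟩ := Module.Finite.toModuleEnd_moduleEnd_surjective f'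
  exact ⟨r, LinearMap.ext fun v => congr($hr v)⟩

theorem span_range_eq_adjoin {k G A : Type*} [CommSemiring k] [Monoid G] [Semiring A] [Algebra k A]
    (ρ : G →* A) :
    Submodule.span k (Set.range ρ) = (Algebra.adjoin k (Set.range ρ)).toSubmodule := by
  rw [Algebra.adjoin_eq_span, ← MonoidHom.coe_mrange, Submonoid.closure_eq]

theorem IsIrreducibleRep.isSimpleModule_adjoin {k G V : Type*} [Field k] [Monoid G]
    [AddCommGroup V] [Module k V] {ρ : Representation k G V} (hρ : IsIrreducibleRep ρ) :
    IsSimpleModule (Algebra.adjoin k (Set.range ρ)) V := by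
  have := hρ.1
  refine (isSimpleModule_iff _ _).2 ⟨fun M => ?_⟩
  have hM : IsInvariantSubmodule ρ (M.restrictScalars k) := fun g v hv =>
    M.smul_mem ⟨ρ g, Algebra.subset_adjoin ⟨g, rfl⟩⟩ hv
  simpa using hρ.2 _ hM

theorem IsIrreducibleRep.span_range_eq_top {k G V : Type*} [Field k] [IsAlgClosed k] [Monoid G]
    [AddCommGroup V] [Module k V] [FiniteDimensional k V] {ρ : Representation k G V}
    (hρ : IsIrreducibleRep ρ) : Submodule.span k (Set.range ρ) = ⊤ := by
  have := hρ.isSimpleModule_adjoin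
  rw [span_range_eq_adjoin, eq_top_iff]
  intro f _
  obtain ⟨a, rfl⟩ :=
    lsmul_surjective_of_isSimpleModule k (A := Algebra.adjoin k (Set.range ρ)) f
  exact a.2

end Burnside

section Components

variable {k X Y : Type*} [Field k]

/-- Precomposition with a map, as a homomorphism of algebras of functions. -/
def precomp (k : Type*) [Field k] (f : Y → X) : (X → k) →ₐ[k] (Y → k) :=
  AlgHom.pi fun y => Pi.evalAlgHom k _ (f y)

@[simp]
theorem precomp_apply (f : Y → X) (F : X → k) (y : Y) : precomp k f F y = F (f y) := rfl

/-- The ideal of the functions in `S` vanishing at `x`. -/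
def pointIdeal (S : Subalgebra k (X → k)) (x : X) : Ideal S :=
  RingHom.ker ((Pi.evalAlgHom k (fun _ => k) x).comp S.val)

instance (S : Subalgebra k (X → k)) (x : X) : (pointIdeal S x).IsPrime := RingHom.ker_isPrime _

/-- The points `x` and `y` lie on a common irreducible component of `X` in the Zariski topology
defined by the algebra of functions `S`. -/
def SameComponent (S : Subalgebra k (X → k)) (x y : X) : Prop :=
  ∃ P ∈ minimalPrimes S, P ≤ pointIdeal S x ∧ P ≤ pointIdeal S y

theorem exists_notMem_forall_mem_minimalPrimes {R : Type*} [CommRing R] [IsNoetherianRing R]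
    {P : Ideal R} (hP : P ∈ minimalPrimes R) :
    ∃ F ∉ P, ∀ Q ∈ minimalPrimes R, Q ≠ P → F ∈ Q := by
  classical
  let s := (minimalPrimes.finite_of_isNoetherianRing R).toFinset.erase P
  have hs : ¬ s.inf id ≤ P := fun hle => by
    obtain ⟨Q, hQ, hQP⟩ := (Ideal.IsPrime.inf_le' hP.1.1).1 hle
    obtain ⟨hne, hQ⟩ := Finset.mem_erase.1 hQ
    exact hne (le_antisymm hQP (hP.2 ((Set.Finite.mem_toFinset _).1 hQ).1 hQP))
  obtain ⟨F, hF, hFP⟩ := Set.not_subset.1 hs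
  refine ⟨F, hFP, fun Q hQ hne => ?_⟩
  exact Finset.inf_le (f := id) (Finset.mem_erase.2 ⟨hne, by simpa using hQ⟩) hF

theorem exists_bijective_comap_pointIdeal {S : Subalgebra k (X → k)} {σ : Equiv.Perm X}
    (hσ : S.map (precomp k σ) = S) : ∃ e : S →+* S, Function.Bijective e ∧
      ∀ x, (pointIdeal S x).comap e = pointIdeal S (σ x) := by
  refine ⟨(((precomp k σ).comp S.val).codRestrict S fun F => hσ.le ⟨F, F.2, rfl⟩).toRingHom,
    ⟨fun F F' h => Subtype.ext (funext fun x => ?_), fun F => ?_⟩, fun x => rfl⟩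
  · simpa using congr((($h : S) : X → k) (σ.symm x))
  · obtain ⟨F', hF', hF⟩ := hσ.ge F.2
    exact ⟨⟨F', hF'⟩, Subtype.ext hF⟩

theorem comap_mem_minimalPrimes {R : Type*} [CommRing R] {e : R →+* R}
    (he : Function.Bijective e) {P : Ideal R} (hP : P ∈ minimalPrimes R) :
    P.comap e ∈ minimalPrimes R := by
  have h := Ideal.comap_minimalPrimes_eq_of_surjective he.2 ⊥
  rw [← RingHom.ker_eq_comap_bot, (RingHom.injective_iff_ker_eq_bot e).1 he.1] at h
  exact h.ge (Set.mem_image_of_mem _ hP)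

theorem SameComponent.map {S : Subalgebra k (X → k)} {σ : Equiv.Perm X}
    (hσ : S.map (precomp k σ) = S) {x y : X} (h : SameComponent S x y) :
    SameComponent S (σ x) (σ y) := by
  obtain ⟨P, hP, hx, hy⟩ := h
  obtain ⟨e, he, hpt⟩ := exists_bijective_comap_pointIdeal hσ
  exact ⟨P.comap e, comap_mem_minimalPrimes he hP, hpt x ▸ Ideal.comap_mono hx,
    hpt y ▸ Ideal.comap_mono hy⟩

/-- Some point lies on a single component; by homogeneity every point does. -/
theorem eq_of_le_pointIdeal {S : Subalgebra k (X → k)} [IsNoetherianRing S]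
    (hS : ∀ x y, ∃ σ : Equiv.Perm X, σ x = y ∧ S.map (precomp k σ) = S) {P Q : Ideal S}
    (hP : P ∈ minimalPrimes S) (hQ : Q ∈ minimalPrimes S) {x : X} (hPx : P ≤ pointIdeal S x)
    (hQx : Q ≤ pointIdeal S x) : P = Q := by
  obtain ⟨F, hFP, hF⟩ := exists_notMem_forall_mem_minimalPrimes hP
  obtain ⟨y, hy⟩ : ∃ y, (F : X → k) y ≠ 0 := by
    by_contra! h
    exact hFP ((Subtype.ext (funext h) : F = 0) ▸ P.zero_mem)
  have huniq : ∀ Q ∈ minimalPrimes S, Q ≤ pointIdeal S y → Q = P := fun Q hQ hQy => by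
    by_contra hne
    exact hy (hQy (hF Q hQ hne))
  obtain ⟨σ, rfl, hσ⟩ := hS x y
  obtain ⟨e, he, hpt⟩ := exists_bijective_comap_pointIdeal hσ
  refine Ideal.comap_injective_of_surjective e he.2 ?_
  rw [huniq _ (comap_mem_minimalPrimes he hP) (hpt x ▸ Ideal.comap_mono hPx),
    huniq _ (comap_mem_minimalPrimes he hQ) (hpt x ▸ Ideal.comap_mono hQx)]

theorem exists_minimalPrimes_le_pointIdeal (S : Subalgebra k (X → k)) (x : X) :
    ∃ P ∈ minimalPrimes S, P ≤ pointIdeal S x :=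
  Ideal.exists_minimalPrimes_le bot_le

end Components

section CoeffAlgebra

variable {k G A : Type*} [Field k] [Ring A] [Algebra k A]

variable (k) in
/-- The algebra of functions on `G` generated by the matrix coefficients of `ρ`: the coordinate
ring of the Zariski closure of `ρ(G)` in `A`. -/
def coeffAlgebra [Monoid G] (ρ : G →* A) : Subalgebra k (G → k) :=
  Algebra.adjoin k (Set.range fun (φ : Module.Dual k A) g => φ (ρ g))

/-- The matrix coefficient `g ↦ φ (ρ g)` as an element of the coefficient algebra. -/
def matrixCoeff [Monoid G] (ρ : G →* A) : Module.Dual k A →ₗ[k] coeffAlgebra k ρ where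
  toFun φ := ⟨fun g => φ (ρ g), Algebra.subset_adjoin ⟨φ, rfl⟩⟩
  map_add' _ _ := rfl
  map_smul' _ _ := rfl

theorem matrixCoeff_apply [Monoid G] (ρ : G →* A) (φ : Module.Dual k A) (g : G) :
    (matrixCoeff ρ φ : G → k) g = φ (ρ g) := rfl

theorem matrixCoeff_injective [Monoid G] {ρ : G →* A} (hρ : Submodule.span k (Set.range ρ) = ⊤) :
    Function.Injective (matrixCoeff (k := k) ρ) := fun _ _ h =>
  LinearMap.ext_on_range hρ fun g => congr(($h : G → k) g)

theorem coeffAlgebra_fg [Monoid G] [FiniteDimensional k A] (ρ : G →* A) :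
    (coeffAlgebra k ρ).FG := by
  let b := Module.finBasis k (Module.Dual k A)
  refine Subalgebra.fg_def.2 ⟨Set.range fun i g => b i (ρ g), Set.finite_range _,
    le_antisymm (Algebra.adjoin_mono ?_) (Algebra.adjoin_le ?_)⟩
  · rintro _ ⟨i, rfl⟩
    exact ⟨b i, rfl⟩
  · rintro _ ⟨φ, rfl⟩
    have hφ : (fun g => φ (ρ g)) = ∑ i, b.repr φ i • fun g => b i (ρ g) := by
      ext g
      nth_rw 1 [← b.sum_repr φ]
      simp only [LinearMap.sum_apply, LinearMap.smul_apply, Finset.sum_apply, Pi.smul_apply]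
    simp only [hφ]
    exact Subalgebra.sum_mem _ fun i _ =>
      Subalgebra.smul_mem _ (Algebra.subset_adjoin (Set.mem_range_self i)) _

instance [Monoid G] [FiniteDimensional k A] (ρ : G →* A) :
    IsNoetherianRing (coeffAlgebra k ρ) :=
  have := (coeffAlgebra k ρ).fg_iff_finiteType.1 (coeffAlgebra_fg ρ)
  Algebra.FiniteType.isNoetherianRing k _

theorem coeffAlgebra_comp {M : Type*} [Monoid G] [Monoid M] (ρ : G →* A)
    (f : M →* G) : coeffAlgebra k (ρ.comp f) = (coeffAlgebra k ρ).map (precomp k f) := by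
  rw [coeffAlgebra, coeffAlgebra, AlgHom.map_adjoin, ← Set.range_comp]
  rfl

theorem coeffAlgebra_map_precomp_le [Monoid G] {ρ : G →* A} {σ : G → G}
    (E : A →ₗ[k] A) (hE : ∀ g, ρ (σ g) = E (ρ g)) :
    (coeffAlgebra k ρ).map (precomp k σ) ≤ coeffAlgebra k ρ := by
  rw [coeffAlgebra, AlgHom.map_adjoin, ← Set.range_comp]
  refine Algebra.adjoin_mono ?_
  rintro _ ⟨φ, rfl⟩
  exact ⟨φ ∘ₗ E, funext fun g => by simp [hE]⟩

theorem exists_forall_apply_ne_zero [Monoid G] {ρ : G →* A} [IsDomain (coeffAlgebra k ρ)]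
    (hρ : Submodule.span k (Set.range ρ) = ⊤) {ι W : Type*} [Finite ι] [AddCommGroup W]
    [Module k W] {f : ι → A →ₗ[k] W} (hf : ∀ i, f i ≠ 0) : ∃ g, ∀ i, f i (ρ g) ≠ 0 := by
  have := Fintype.ofFinite ι
  have hφ : ∀ i, ∃ φ : Module.Dual k W, φ ∘ₗ f i ≠ 0 := fun i => by
    by_contra! h
    refine hf i (LinearMap.ext fun a => ?_)
    exact (Module.forall_dual_apply_eq_zero_iff k _).1 fun φ => congr($(h φ) a)
  choose φ hφ using hφ
  have hF : ∏ i, matrixCoeff ρ (φ i ∘ₗ f i) ≠ 0 := Finset.prod_ne_zero_iff.2 fun i _ =>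
    (map_ne_zero_iff _ (matrixCoeff_injective hρ)).2 (hφ i)
  obtain ⟨x, hx⟩ : ∃ x, ((∏ i, matrixCoeff ρ (φ i ∘ₗ f i) : coeffAlgebra k ρ) : G → k) x ≠ 0 := by
    by_contra! h
    exact hF (Subtype.ext (funext h))
  refine ⟨x, fun i hi => hx ?_⟩
  rw [SubmonoidClass.coe_finsetProd, Finset.prod_apply]
  exact Finset.prod_eq_zero (Finset.mem_univ i) (by simp [matrixCoeff_apply, hi])

variable [Group G] (ρ : G →* A)

theorem coeffAlgebra_map_translation (x y : G) :
    (coeffAlgebra k ρ).map (precomp k ((Equiv.mulLeft x).trans (Equiv.mulRight y))) =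
      coeffAlgebra k ρ := by
  have hle : ∀ x y : G, (coeffAlgebra k ρ).map (precomp k fun g => x * g * y) ≤ coeffAlgebra k ρ :=
    fun x y => coeffAlgebra_map_precomp_le
      (LinearMap.mulRight k (ρ y) ∘ₗ LinearMap.mulLeft k (ρ x)) fun g => by simp
  refine le_antisymm (hle x y) fun F hF => ?_
  exact ⟨_, hle x⁻¹ y⁻¹ ⟨F, hF, rfl⟩, funext fun g => by simp [mul_assoc]⟩

theorem coeffAlgebra_homogeneous (x y : G) : ∃ σ : Equiv.Perm G, σ x = y ∧
    (coeffAlgebra k ρ).map (precomp k σ) = coeffAlgebra k ρ :=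
  ⟨_, by simp, coeffAlgebra_map_translation ρ (y * x⁻¹) 1⟩

variable {ρ} in
theorem SameComponent.mul_mul {g h : G} (H : SameComponent (coeffAlgebra k ρ) g h) (x y : G) :
    SameComponent (coeffAlgebra k ρ) (x * g * y) (x * h * y) :=
  H.map (coeffAlgebra_map_translation ρ x y)

variable [FiniteDimensional k A]

variable {ρ} in
theorem SameComponent.trans {a b c : G} (hab : SameComponent (coeffAlgebra k ρ) a b)
    (hbc : SameComponent (coeffAlgebra k ρ) b c) : SameComponent (coeffAlgebra k ρ) a c := by
  obtain ⟨P, hP, ha, hb⟩ := hab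
  obtain ⟨Q, hQ, hb', hc⟩ := hbc
  obtain rfl := eq_of_le_pointIdeal (coeffAlgebra_homogeneous ρ) hP hQ hb hb'
  exact ⟨P, hP, ha, hc⟩

variable (k) in
/-- The identity component of `G` in the Zariski topology induced by `ρ`. -/
def identityComponent : Subgroup G where
  carrier := {g | SameComponent (coeffAlgebra k ρ) 1 g}
  one_mem' :=
    let ⟨P, hP, h⟩ := exists_minimalPrimes_le_pointIdeal (coeffAlgebra k ρ) 1
    ⟨P, hP, h, h⟩
  mul_mem' {x y} hx hy := hx.trans (by simpa using hy.mul_mul x 1)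
  inv_mem' {x} hx := by
    obtain ⟨P, hP, hx, h1⟩ : SameComponent (coeffAlgebra k ρ) x⁻¹ 1 := by
      simpa using hx.mul_mul x⁻¹ 1
    exact ⟨P, hP, h1, hx⟩

instance : (identityComponent k ρ).Normal where
  conj_mem x hx g := show SameComponent _ 1 _ by simpa using SameComponent.mul_mul hx g g⁻¹

theorem mem_identityComponent_iff {P : Ideal (coeffAlgebra k ρ)}
    (hP : P ∈ minimalPrimes (coeffAlgebra k ρ)) (h1 : P ≤ pointIdeal _ 1) {x : G} :
    x ∈ identityComponent k ρ ↔ P ≤ pointIdeal _ x := by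
  refine ⟨fun ⟨Q, hQ, hQ1, hQx⟩ => ?_, fun hx => ⟨P, hP, h1, hx⟩⟩
  rwa [eq_of_le_pointIdeal (coeffAlgebra_homogeneous ρ) hP hQ h1 hQ1]

instance : (identityComponent k ρ).FiniteIndex := by
  choose c hc hcg using exists_minimalPrimes_le_pointIdeal (coeffAlgebra k ρ)
  have : Finite (minimalPrimes (coeffAlgebra k ρ)) :=
    minimalPrimes.finite_of_isNoetherianRing _
  have hinj : Function.Injective fun q : G ⧸ identityComponent k ρ =>
      (⟨c q.out, hc _⟩ : minimalPrimes (coeffAlgebra k ρ)) := fun q r hqr => by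
    have hsame : SameComponent (coeffAlgebra k ρ) q.out r.out :=
      ⟨_, hc _, hcg _, (congr($hqr.1) : c q.out = c r.out) ▸ hcg _⟩
    rw [← q.out_eq, ← r.out_eq]
    exact QuotientGroup.eq.2 <|
      show SameComponent _ 1 _ by simpa using hsame.mul_mul q.out⁻¹ 1
  have := Finite.of_injective _ hinj
  exact Subgroup.finiteIndex_of_finite_quotient

theorem exists_mem_coeffAlgebra_separating {x : G} (hx : x ∉ identityComponent k ρ) :
    ∃ F ∈ coeffAlgebra k ρ, (∀ h ∈ identityComponent k ρ, F h = 0) ∧ F x ≠ 0 := by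
  obtain ⟨P, hP, h1⟩ := exists_minimalPrimes_le_pointIdeal (coeffAlgebra k ρ) 1
  rw [mem_identityComponent_iff ρ hP h1] at hx
  obtain ⟨F, hF, hFx⟩ := Set.not_subset.1 hx
  exact ⟨F, F.2, fun h hh => (mem_identityComponent_iff ρ hP h1).1 hh hF, hFx⟩

theorem mem_minimalPrime_of_forall_identityComponent {P : Ideal (coeffAlgebra k ρ)}
    (hP : P ∈ minimalPrimes (coeffAlgebra k ρ)) (h1 : P ≤ pointIdeal _ 1) {F : coeffAlgebra k ρ}
    (hF : ∀ h ∈ identityComponent k ρ, (F : G → k) h = 0) : F ∈ P := by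
  obtain ⟨E, hEP, hE⟩ := exists_notMem_forall_mem_minimalPrimes hP
  suffices h : F * E = 0 from (hP.1.1.mem_or_mem (h ▸ P.zero_mem)).resolve_right hEP
  refine Subtype.ext (funext fun g => ?_)
  by_cases hg : g ∈ identityComponent k ρ
  · exact mul_eq_zero_of_left (hF g hg) _
  · obtain ⟨Q, hQ, hQg⟩ := exists_minimalPrimes_le_pointIdeal (coeffAlgebra k ρ) g
    rw [mem_identityComponent_iff ρ hP h1] at hg
    exact mul_eq_zero_of_right _ (hQg (hE Q hQ (by rintro rfl; exact hg hQg)))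

instance isDomain_coeffAlgebra_identityComponent :
    IsDomain (coeffAlgebra k (ρ.comp (identityComponent k ρ).subtype)) := by
  obtain ⟨P, hP, h1⟩ := exists_minimalPrimes_le_pointIdeal (coeffAlgebra k ρ) 1
  have hP' := hP.1.1
  have : NoZeroDivisors (coeffAlgebra k (ρ.comp (identityComponent k ρ).subtype)) := by
    constructor
    rintro ⟨_, ha⟩ ⟨_, hb⟩ hab
    rw [coeffAlgebra_comp] at ha hb
    obtain ⟨F, hF, rfl⟩ := ha
    obtain ⟨E, hE, rfl⟩ := hb
    have hFE : (⟨F, hF⟩ * ⟨E, hE⟩ : coeffAlgebra k ρ) ∈ P :=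
      mem_minimalPrime_of_forall_identityComponent ρ hP h1 fun h hh => congr(($hab).1 ⟨h, hh⟩)
    refine (hP'.mem_or_mem hFE).imp ?_ ?_ <;> intro hmem <;> ext h <;>
      exact (mem_identityComponent_iff ρ hP h1).1 h.2 hmem
  exact NoZeroDivisors.to_isDomain _

end CoeffAlgebra

section Degeneration

variable {k K : Type*} [Field k] [IsAlgClosed k] [Field K] [Algebra k K]

theorem mem_range_algebraMap_of_isIntegral {x : K} (hx : IsIntegral k x) :
    x ∈ Set.range (algebraMap k K) :=
  minpoly.mem_range_of_degree_eq_one k x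
    (IsAlgClosed.degree_eq_one_of_irreducible k (minpoly.irreducible hx))

theorem exists_valuationSubring_mem_nonunits {t : K}
    (ht : t = 0 ∨ t ∉ Set.range (algebraMap k K)) :
    ∃ O : ValuationSubring K, (∀ c : k, algebraMap k K c ∈ O) ∧ t ∈ O.nonunits := by
  rcases eq_or_ne t 0 with rfl | ht0
  · exact ⟨⊤, fun _ => trivial, by simp⟩
  let R : Subring K := (⊥ : Subalgebra k K).toSubring
  have hR : ∀ x : K, x ∈ R ↔ x ∈ Set.range (algebraMap k K) := fun x => Algebra.mem_bot
  have : IsIntegrallyClosedIn R K := Subring.isIntegrallyClosedIn_iff.2 fun {x} hx =>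
    (hR x).2 <| mem_range_algebraMap_of_isIntegral <|
      isIntegral_trans (A := (⊥ : Subalgebra k K)) x hx
  have htR : t⁻¹ ∉ R := fun h => ht.resolve_left ht0 <| by
    obtain ⟨c, hc⟩ := (hR _).1 h
    exact ⟨c⁻¹, by rw [map_inv₀, hc, inv_inv]⟩
  obtain ⟨O, hRO, hO⟩ := Subring.exists_le_valuationSubring_of_isIntegrallyClosedIn htR
  exact ⟨O, fun c => hRO ((hR _).2 ⟨c, rfl⟩), O.mem_nonunits_iff_or.2 (.inr hO)⟩

theorem exists_normalization {J : Type*} [Finite J] (O : ValuationSubring K) {a : J → K}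
    (ha : a ≠ 0) :
    ∃ c : K, (∀ j, c * a j ∈ O) ∧ ∃ j, c * a j = 1 := by
  obtain ⟨j₁, hj₁⟩ := Function.ne_iff.1 ha
  have : Nonempty J := ⟨j₁⟩
  obtain ⟨j₀, hj₀⟩ := Finite.exists_max fun j => O.valuation (a j)
  have hne : a j₀ ≠ 0 := fun h => hj₁ (by simpa [h] using hj₀ j₁)
  refine ⟨(a j₀)⁻¹, fun j => ?_, j₀, inv_mul_cancel₀ hne⟩
  rw [← O.valuation_le_one_iff, mul_comm, ← div_eq_mul_inv, map_div₀]
  exact div_le_one_of_le₀ (hj₀ j) zero_le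

theorem exists_algHom_apply_eq_zero {B : Type*} [CommRing B] [Algebra k B] [Algebra.FiniteType k B]
    {t : B} (ht : ¬ IsUnit t) : ∃ s : B →ₐ[k] k, s t = 0 := by
  obtain ⟨m, hm, htm⟩ := exists_max_ideal_of_mem_nonunits ht
  let := Ideal.Quotient.field m
  have := finite_of_finite_type_of_isJacobsonRing k (B ⧸ m)
  let e : k ≃ₐ[k] (B ⧸ m) := AlgEquiv.ofBijective (Algebra.ofId k _)
    IsAlgClosed.algebraMap_bijective_of_isIntegral
  refine ⟨e.symm.toAlgHom.comp (Ideal.Quotient.mkₐ k m), ?_⟩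
  simp [Ideal.Quotient.eq_zero_iff_mem.2 htm]

theorem exists_degeneration {ι J : Type*} [Finite ι] [Finite J] {a : ι → J → K}
    (ha : ∀ i, a i ≠ 0) {t : K} (ht : t = 0 ∨ t ∉ Set.range (algebraMap k K)) :
    ∃ (B : Subalgebra k K) (s : B →ₐ[k] k) (c : ι → K) (b : ι → J → B) (tB : B),
      (∀ i j, (b i j : K) = c i * a i j) ∧ (tB : K) = t ∧ s tB = 0 ∧
      ∀ i, ∃ j, s (b i j) ≠ 0 := by
  obtain ⟨O, hkO, htO⟩ := exists_valuationSubring_mem_nonunits ht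
  choose c hcO j hj using fun i => exists_normalization O (ha i)
  let gen : Set K := insert t (Set.range fun x : ι × J => c x.1 * a x.1 x.2)
  let B : Subalgebra k K := Algebra.adjoin k gen
  have htB : t ∈ B := Algebra.subset_adjoin (Set.mem_insert _ _)
  have hB : ∀ i j, c i * a i j ∈ B := fun i j =>
    Algebra.subset_adjoin (Set.mem_insert_of_mem _ ⟨(i, j), rfl⟩)
  have hBO : ∀ x ∈ B, x ∈ O := fun x hx => by
    induction hx using Algebra.adjoin_induction with
    | mem x hx =>
      rcases hx with rfl | ⟨y, rfl⟩
      · exact O.nonunits_subset htO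
      · exact hcO _ _
    | algebraMap r => exact hkO r
    | add x y _ _ hx hy => exact O.add_mem _ _ hx hy
    | mul x y _ _ hx hy => exact O.mul_mem _ _ hx hy
  have hnu : ¬ IsUnit (⟨t, htB⟩ : B) := fun hu => by
    obtain ⟨⟨u, hu⟩, htu⟩ := isUnit_iff_exists_inv.1 hu
    have hlt := mul_lt_one_of_lt_of_le (O.mem_nonunits_iff.1 htO)
      ((O.valuation_le_one_iff u).2 (hBO u hu))
    rw [← map_mul, show t * u = 1 from congrArg Subtype.val htu, map_one] at hlt
    exact hlt.false
  have : Algebra.FiniteType k B := B.fg_iff_finiteType.1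
    (Subalgebra.fg_def.2 ⟨gen, (Set.finite_range _).insert t, rfl⟩)
  obtain ⟨s, hs⟩ := exists_algHom_apply_eq_zero (k := k) hnu
  refine ⟨B, s, c, fun i j => ⟨_, hB i j⟩, ⟨t, htB⟩, fun i j => rfl, rfl, hs,
    fun i => ⟨j i, ?_⟩⟩
  have : (⟨_, hB i (j i)⟩ : B) = 1 := Subtype.ext (hj i)
  simp [this]

theorem exists_div_pow_eq_zero_or_notMem_range {ι : Type*} [Nontrivial ι] {y : ι → K}
    (hy : LinearIndependent k y) (Δ : K) {r : ℕ} (hr : r ≠ 0) :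
    ∃ i, Δ / y i ^ r = 0 ∨ Δ / y i ^ r ∉ Set.range (algebraMap k K) := by
  obtain ⟨i, j, hij⟩ := exists_pair_ne ι
  by_contra! h
  obtain ⟨a, ha⟩ := (h i).2
  obtain ⟨b, hb⟩ := (h j).2
  have hΔ : Δ ≠ 0 := fun h0 => (h i).1 (by simp [h0])
  have hpow : (y j / y i) ^ r = algebraMap k K (a / b) := by
    rw [div_pow, map_div₀, ha, hb]
    field_simp [hy.ne_zero i, hy.ne_zero j]
  obtain ⟨c, hc⟩ := mem_range_algebraMap_of_isIntegral <|
    IsIntegral.of_pow (R := k) (x := y j / y i) (Nat.pos_of_ne_zero hr)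
      (hpow ▸ isIntegral_algebraMap)
  refine hij (hy.eq_of_smul_apply_eq_smul_apply 1 c j i one_ne_zero ?_).symm
  rw [one_smul, Algebra.smul_def, hc, div_mul_cancel₀ _ (hy.ne_zero i)]

end Degeneration

section ZariskiClosure

variable {k E F A : Type*} [Field k] [AddCommGroup E] [Module k E] [AddCommGroup F] [Module k F]
  [Ring A] [Algebra k A]

/-- The algebra of polynomial functions on a vector space, generated by the linear forms. -/
def polyFunctions (k E : Type*) [Field k] [AddCommGroup E] [Module k E] : Subalgebra k (E → k) :=
  Algebra.adjoin k (Set.range fun (φ : Module.Dual k E) => ⇑φ)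

theorem coe_mem_polyFunctions (φ : Module.Dual k E) : ⇑φ ∈ polyFunctions k E :=
  Algebra.subset_adjoin ⟨φ, rfl⟩

variable (k) in
/-- A polynomial map between vector spaces: its composition with every linear form is a polynomial
function. -/
def IsPolyMap (f : E → F) : Prop :=
  ∀ φ : Module.Dual k F, (fun z => φ (f z)) ∈ polyFunctions k E

variable (k) in
/-- The Zariski closure of a set in a vector space. -/
def zariskiClosure (S : Set E) : Set E :=
  {z | ∀ P ∈ polyFunctions k E, (∀ y ∈ S, P y = 0) → P z = 0}

theorem isPolyMap_linearMap (f : E →ₗ[k] F) : IsPolyMap k f := fun φ =>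
  coe_mem_polyFunctions (φ ∘ₗ f)

theorem isPolyMap_const (w : F) : IsPolyMap k fun _ : E => w := fun φ =>
  (polyFunctions k E).algebraMap_mem (φ w)

theorem isPolyMap_pi {ι : Type*} [Finite ι] {F : ι → Type*} [∀ i, AddCommGroup (F i)]
    [∀ i, Module k (F i)] {f : E → ∀ i, F i} (hf : ∀ i, IsPolyMap k fun z => f z i) :
    IsPolyMap k f := fun φ => by
  classical
  have := Fintype.ofFinite ι
  have hφ : (fun z => φ (f z)) = ∑ i, fun z => (φ ∘ₗ LinearMap.single k F i) (f z i) := by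
    ext z
    simp [← map_sum, Finset.univ_sum_single]
  rw [hφ]
  exact sum_mem fun i _ => hf i _

theorem IsPolyMap.mul [FiniteDimensional k A] {f g : E → A} (hf : IsPolyMap k f)
    (hg : IsPolyMap k g) : IsPolyMap k fun z => f z * g z := fun φ => by
  let b := Module.finBasis k A
  have hφ : (fun z => φ (f z * g z)) = ∑ i, ∑ j, φ (b i * b j) •
      ((fun z => b.coord i (f z)) * fun z => b.coord j (g z)) := by
    ext z
    conv_lhs => rw [← b.sum_repr (f z), ← b.sum_repr (g z)]
    simp only [Finset.sum_mul_sum, smul_mul_smul_comm, map_sum, map_smul, smul_eq_mul,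
      Finset.sum_apply, Pi.smul_apply, Pi.mul_apply, Module.Basis.coord_apply]
    exact Finset.sum_congr rfl fun i _ => Finset.sum_congr rfl fun j _ => mul_comm _ _
  rw [hφ]
  exact sum_mem fun i _ => sum_mem fun j _ => Subalgebra.smul_mem _ (mul_mem (hf _) (hg _)) _

theorem IsPolyMap.pow [FiniteDimensional k A] {f : E → A} (hf : IsPolyMap k f) (m : ℕ) :
    IsPolyMap k fun z => f z ^ m := by
  induction m with
  | zero => simpa only [pow_zero] using isPolyMap_const 1
  | succ m ih => simpa only [pow_succ] using ih.mul hf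

theorem IsPolyMap.comp_mem_polyFunctions {f : E → F} (hf : IsPolyMap k f) {P : F → k}
    (hP : P ∈ polyFunctions k F) : (fun z => P (f z)) ∈ polyFunctions k E := by
  have hle : polyFunctions k F ≤ (polyFunctions k E).comap (precomp k f) :=
    Algebra.adjoin_le (by rintro _ ⟨φ, rfl⟩; exact hf φ)
  exact hle hP

theorem subset_zariskiClosure {S : Set E} : S ⊆ zariskiClosure k S := fun y hy _ _ h => h y hy

theorem IsPolyMap.mem_zariskiClosure {f : E → F} (hf : IsPolyMap k f) {S : Set E} {T : Set F}
    (hST : ∀ y ∈ S, f y ∈ zariskiClosure k T) {z : E} (hz : z ∈ zariskiClosure k S) :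
    f z ∈ zariskiClosure k T := fun P hP hPT =>
  hz _ (hf.comp_mem_polyFunctions hP) fun y hy => hST y hy P hP hPT

theorem mul_mem_zariskiClosure {S : Set A} (hS : ∀ x ∈ S, ∀ y ∈ S, x * y ∈ S) {z w : A}
    (hz : z ∈ zariskiClosure k S) (hw : w ∈ zariskiClosure k S) : z * w ∈ zariskiClosure k S :=
  (isPolyMap_linearMap (LinearMap.mulRight k w)).mem_zariskiClosure (fun y hy =>
    (isPolyMap_linearMap (LinearMap.mulLeft k y)).mem_zariskiClosure
      (fun y' hy' => subset_zariskiClosure (hS y hy y' hy')) hw) hz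

theorem mem_of_mem_zariskiClosure {S : Set E} {V : Submodule k E} (hS : S ⊆ V) {z : E}
    (hz : z ∈ zariskiClosure k S) : z ∈ V := by
  by_contra hzV
  obtain ⟨φ, hφz, hφV⟩ := V.exists_dual_map_eq_bot_of_notMem hzV inferInstance
  refine hφz (hz φ (coe_mem_polyFunctions φ) fun y hy => ?_)
  exact LinearMap.mem_ker.1 (hφV.le (Submodule.mem_map_of_mem (hS hy)))

theorem exists_mvPolynomial_of_mem_polyFunctions {ι J : Type*} [Finite ι] [Finite J]
    {P : (ι → J → k) → k} (hP : P ∈ polyFunctions k (ι → J → k)) :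
    ∃ p : MvPolynomial (ι × J) k, ∀ z, P z = MvPolynomial.eval (fun x => z x.1 x.2) p := by
  classical
  have := Fintype.ofFinite ι
  have := Fintype.ofFinite J
  induction hP using Algebra.adjoin_induction with
  | mem _ h =>
    obtain ⟨φ, rfl⟩ := h
    refine ⟨∑ i, ∑ j, MvPolynomial.C (φ (Pi.single i (Pi.single j 1))) * MvPolynomial.X (i, j),
      fun z => ?_⟩
    have hz : z = ∑ i, ∑ j, z i j • Pi.single i (Pi.single j 1) := by
      ext i j
      simp [Finset.sum_apply, Pi.single_apply, ite_apply]
    conv_lhs => rw [hz]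
    simp [map_sum, mul_comm]
  | algebraMap r => exact ⟨MvPolynomial.C r, fun z => by simp⟩
  | add P P' _ _ h h' =>
    obtain ⟨⟨p, hp⟩, p', hp'⟩ := And.intro h h'
    exact ⟨p + p', fun z => by simp [hp, hp']⟩
  | mul P P' _ _ h h' =>
    obtain ⟨⟨p, hp⟩, p', hp'⟩ := And.intro h h'
    exact ⟨p * p', fun z => by simp [hp, hp']⟩

/-- If a family of points over a function algebra becomes integral over `B` after scaling its
members by the `c i`, then its specialization is a limit of scaled values of the family. -/
theorem specialize_mem_zariskiClosure [Infinite k] {ι J X K : Type*} [Finite ι] [Finite J]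
    [CommRing K] [Algebra k K] {R : Subalgebra k (X → k)} [Algebra R K] [IsScalarTower k R K]
    {B : Subalgebra k K} (s : B →ₐ[k] k) (f : ι → J → R) (c : ι → K) (b : ι → J → B)
    (hb : ∀ i j, (b i j : K) = c i * algebraMap R K (f i j)) :
    (fun i j => s (b i j)) ∈
      zariskiClosure k {y | ∃ (d : ι → k) (x : X), y = fun i j => d i * (f i j : X → k) x} := by
  intro P hP hPS
  obtain ⟨p, hp⟩ := exists_mvPolynomial_of_mem_polyFunctions hP
  let p' : MvPolynomial ι R :=
    MvPolynomial.aeval (fun x => MvPolynomial.X x.1 * MvPolynomial.C (f x.1 x.2)) p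
  have hp' : p' = 0 := by
    suffices h : ∀ x, p'.map ((Pi.evalRingHom (fun _ => k) x).comp R.val.toRingHom) = 0 from
      MvPolynomial.ext _ _ fun m => Subtype.ext <| funext fun x => by
        exact (MvPolynomial.coeff_map _ _ m).symm.trans (by rw [h x, MvPolynomial.coeff_zero])
    refine fun x => MvPolynomial.funext fun d => ?_
    rw [map_zero, ← hPS _ ⟨d, x, rfl⟩, hp, MvPolynomial.eval_map, ← MvPolynomial.coe_eval₂Hom,
      MvPolynomial.map_aeval]
    congr 2
    · ext r
      rw [RingHom.comp_apply, IsScalarTower.algebraMap_apply k R (MvPolynomial ι R),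
        MvPolynomial.algebraMap_eq, MvPolynomial.coe_eval₂Hom, MvPolynomial.eval₂_C]
      rfl
    · ext x
      simp
  have hB : MvPolynomial.aeval (fun x : ι × J => b x.1 x.2) p = 0 := by
    refine Subtype.val_injective ?_
    calc B.val (MvPolynomial.aeval (fun x : ι × J => b x.1 x.2) p)
        = MvPolynomial.aeval c p' := by
          have := MvPolynomial.comp_aeval_apply
            (fun x : ι × J => MvPolynomial.X x.1 * MvPolynomial.C (f x.1 x.2))
            ((MvPolynomial.aeval c : MvPolynomial ι R →ₐ[R] K).restrictScalars k) p
          rw [AlgHom.restrictScalars_apply] at this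
          rw [MvPolynomial.comp_aeval_apply, this]
          simp [hb]
      _ = 0 := by rw [hp', map_zero]
  rw [hp, ← map_zero s, ← hB, MvPolynomial.comp_aeval_apply, MvPolynomial.aeval_eq_eval]

end ZariskiClosure

section MatrixRank

open Matrix

variable {k n : Type*} [Field k] [Fintype n]

/-- The linear map `X ↦ M * X * N` between spaces of matrices. -/
def sandwich {m r r' : Type*} [Fintype m] (M : Matrix r n k) (N : Matrix m r' k) :
    Matrix n m k →ₗ[k] Matrix r r' k where
  toFun X := M * X * N
  map_add' _ _ := by rw [Matrix.mul_add, Matrix.add_mul]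
  map_smul' _ _ := by rw [Matrix.mul_smul, Matrix.smul_mul, RingHom.id_apply]

theorem sandwich_apply {m r r' : Type*} [Fintype m] (M : Matrix r n k) (N : Matrix m r' k)
    (X : Matrix n m k) : sandwich M N X = M * X * N := rfl

theorem sandwich_apply_apply {m r r' : Type*} [Fintype m] (M : Matrix r n k) (N : Matrix m r' k)
    (X : Matrix n m k) (i : r) (j : r') :
    sandwich M N X i j = ∑ x : n × m, (M i x.1 * N x.2 j) * X x.1 x.2 := by
  simp only [sandwich_apply, Matrix.mul_apply, Finset.sum_mul, Fintype.sum_prod_type]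
  rw [Finset.sum_comm]
  exact Finset.sum_congr rfl fun a _ => Finset.sum_congr rfl fun b _ => by ring

theorem sandwich_surjective {r r' : Type*} [Finite r] [Finite r'] [DecidableEq r]
    [DecidableEq r'] {M : Matrix r n k} {M' : Matrix n r k} {N : Matrix n r' k}
    {N' : Matrix r' n k} (hM : M * M' = 1) (hN : N' * N = 1) :
    Function.Surjective (sandwich M N) := by
  have := Fintype.ofFinite r
  have := Fintype.ofFinite r'
  refine fun Y => ⟨M' * Y * N', ?_⟩
  rw [sandwich_apply, Matrix.mul_assoc, Matrix.mul_assoc _ N', hN, Matrix.mul_one,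
    ← Matrix.mul_assoc, hM, Matrix.one_mul]

theorem det_map_eq_zero_of_eq_det_div_pow {K r : Type*} [Field K] [Algebra k K] [Fintype r]
    [DecidableEq r] {B : Subalgebra k K} (s : B →ₐ[k] k) {t : B} (hs : s t = 0) {N : Matrix r r B}
    {T : Matrix r r K} {c : K} (hN : ∀ i j, (N i j : K) = c * T i j) {i j : r} (hT : T i j ≠ 0)
    (ht : (t : K) = T.det / T i j ^ Fintype.card r) : (N.map s).det = 0 := by
  have hdet : N.det = t * N i j ^ Fintype.card r := by
    refine Subtype.val_injective ?_
    have hNT : N.map B.val = c • T := Matrix.ext fun i j => hN i j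
    calc B.val N.det = (c • T).det := by rw [← hNT]; exact AlgHom.map_det _ _
      _ = T.det / T i j ^ Fintype.card r * (c * T i j) ^ Fintype.card r := by
        rw [Matrix.det_smul, mul_pow]
        field_simp
      _ = B.val (t * N i j ^ Fintype.card r) := by simp [ht, hN]
  rw [← AlgHom.mapMatrix_apply, ← AlgHom.map_det, hdet, map_mul, hs, zero_mul]

theorem det_mul_specialize_mul_eq_zero {S K r : Type*} [CommRing S] [Algebra k S] [Field K]
    [Algebra k K] [Algebra S K] [IsScalarTower k S K] [Fintype r] [DecidableEq r]
    {B : Subalgebra k K} (s : B →ₐ[k] k) {t : B} (hs : s t = 0) {f : n × n → S} {b : n × n → B}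
    {c : K} (hb : ∀ y, (b y : K) = c * algebraMap S K (f y)) {P : Matrix r n k}
    {Q : Matrix n r k} {T : Matrix r r S}
    (hT : ∀ i j, ∑ y : n × n, (P i y.1 * Q y.2 j) • f y = T i j) {i j : r}
    (hij : algebraMap S K (T i j) ≠ 0)
    (ht : (t : K) = (T.map (algebraMap S K)).det / algebraMap S K (T i j) ^ Fintype.card r) :
    (P * Matrix.of (fun i j => s (b (i, j))) * Q).det = 0 := by
  let N : Matrix r r B := Matrix.of fun i j => ∑ y : n × n, (P i y.1 * Q y.2 j) • b y
  have hN : ∀ i j, (N i j : K) = c * algebraMap S K (T i j) := fun i j =>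
    calc B.val (∑ y : n × n, (P i y.1 * Q y.2 j) • b y)
        = c * IsScalarTower.toAlgHom k S K (∑ y : n × n, (P i y.1 * Q y.2 j) • f y) := by
          simp only [map_sum, map_smul, Subalgebra.coe_val, hb, Finset.mul_sum, mul_smul_comm,
            IsScalarTower.toAlgHom_apply]
      _ = c * algebraMap S K (T i j) := by rw [hT, IsScalarTower.toAlgHom_apply]
  convert det_map_eq_zero_of_eq_det_div_pow s hs hN hij ht
  ext i j
  rw [← sandwich_apply, sandwich_apply_apply]
  simp [N, map_sum]

theorem exists_mul_mul_ne_zero {M N : Matrix n n k} (hM : M ≠ 0) (hN : N ≠ 0) :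
    ∃ L, M * L * N ≠ 0 := by
  classical
  obtain ⟨i, a, hia⟩ : ∃ i a, M i a ≠ 0 := by
    by_contra! h
    exact hM (Matrix.ext h)
  obtain ⟨b, j, hbj⟩ : ∃ b j, N b j ≠ 0 := by
    by_contra! h
    exact hN (Matrix.ext h)
  refine ⟨single a b 1, fun h => mul_ne_zero hia hbj ?_⟩
  simpa [mul_apply, single_apply, ite_and] using congr($h i j)

theorem exists_rank_factorization (M : Matrix n n k) :
    ∃ (P : Matrix n (Fin M.rank) k) (Q : Matrix (Fin M.rank) n k)
      (P' : Matrix (Fin M.rank) n k) (Q' : Matrix n (Fin M.rank) k),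
      M = P * Q ∧ P' * P = 1 ∧ Q * Q' = 1 := by
  classical
  let f := toLin' M
  have hf : Module.finrank k (LinearMap.range f) = M.rank := rfl
  let e : LinearMap.range f ≃ₗ[k] (Fin M.rank → k) :=
    (Module.finBasisOfFinrankEq k _ hf).equivFun
  let P : (Fin M.rank → k) →ₗ[k] (n → k) := (LinearMap.range f).subtype ∘ₗ e.symm.toLinearMap
  let Q : (n → k) →ₗ[k] (Fin M.rank → k) := e.toLinearMap ∘ₗ f.rangeRestrict
  have hPQ : P ∘ₗ Q = f := LinearMap.ext fun x => by simp [P, Q]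
  obtain ⟨P', hP'⟩ := P.exists_leftInverse_of_injective <|
    LinearMap.ker_eq_bot.2 (Subtype.val_injective.comp e.symm.injective)
  obtain ⟨Q', hQ'⟩ := Q.exists_rightInverse_of_surjective <|
    LinearMap.range_eq_top.2 (e.surjective.comp f.surjective_rangeRestrict)
  refine ⟨P.toMatrix', Q.toMatrix', P'.toMatrix', Q'.toMatrix', ?_, ?_, ?_⟩
  · rw [← LinearMap.toMatrix'_comp, hPQ, LinearMap.toMatrix'_toLin']
  · rw [← LinearMap.toMatrix'_comp, hP', LinearMap.toMatrix'_id]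
  · rw [← LinearMap.toMatrix'_comp, hQ', LinearMap.toMatrix'_id]

theorem rank_lt_card_of_det_eq_zero [DecidableEq n] {M : Matrix n n k} (h : M.det = 0) :
    M.rank < Fintype.card n := by
  obtain ⟨v, hv, hMv⟩ := exists_mulVec_eq_zero_iff.2 h
  have : Nontrivial (LinearMap.ker M.mulVecLin) :=
    ⟨⟨⟨v, hMv⟩, 0, fun h => hv (congrArg Subtype.val h)⟩⟩
  have hker : 0 < Module.finrank k (LinearMap.ker M.mulVecLin) := Module.finrank_pos
  have := LinearMap.finrank_range_add_finrank_ker M.mulVecLin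
  rw [Module.finrank_fintype_fun_eq_card] at this
  exact (Nat.lt_add_of_pos_right hker).trans_eq this

theorem exists_eq_vecMulVec_of_rank_le_one {M : Matrix n n k} (hM : M.rank ≤ 1) :
    ∃ u v, M = vecMulVec u v := by
  obtain ⟨P, Q, -, -, h, -, -⟩ := exists_rank_factorization M
  have : Subsingleton (Fin M.rank) := Fin.subsingleton_iff_le_one.2 hM
  refine ⟨fun i => ∑ r, P i r, fun j => ∑ r, Q r j, Matrix.ext fun i j => ?_⟩
  rw [congr($h i j), mul_apply, vecMulVec_apply]
  rcases isEmpty_or_nonempty (Fin M.rank) with h0 | ⟨⟨r⟩⟩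
  · simp
  · simp only [Fintype.sum_subsingleton _ r]

theorem mul_mul_self_eq_trace_smul_of_rank_le_one {M : Matrix n n k} (hM : M.rank ≤ 1)
    (N : Matrix n n k) : M * (N * M) = (N * M).trace • M := by
  obtain ⟨u, v, rfl⟩ := exists_eq_vecMulVec_of_rank_le_one hM
  rw [mul_vecMulVec, vecMulVec_mul_vecMulVec, trace_vecMulVec, dotProduct_comm]
  ext
  simp [vecMulVec_apply, mul_left_comm]

theorem mul_mul_ne_zero_of_rank_le_one {M N L : Matrix n n k} (hM : M.rank ≤ 1)
    (hNM : N * M ≠ 0) (hML : M * L ≠ 0) : N * M * L ≠ 0 := by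
  obtain ⟨u, v, rfl⟩ := exists_eq_vecMulVec_of_rank_le_one hM
  rw [mul_vecMulVec] at hNM ⊢
  rw [vecMulVec_mul] at hML ⊢
  simp only [ne_eq, vecMulVec_eq_zero, not_or] at hNM hML ⊢
  exact ⟨hNM.1, hML.2⟩

end MatrixRank

/-- For `g` in a coset of `H` with chosen representative `q`, the element `q⁻¹ * g` of `H`. -/
noncomputable def cosetPart {G : Type*} [Group G] (H : Subgroup G) (g : G) : H :=
  ⟨(g : G ⧸ H).out⁻¹ * g, QuotientGroup.eq.1 (QuotientGroup.out_eq' _)⟩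

theorem out_mul_cosetPart {G : Type*} [Group G] {H : Subgroup G} (g : G) :
    (g : G ⧸ H).out * cosetPart H g = g :=
  mul_inv_cancel_left _ _

/-- The structure carried by the algebra `A` spanned by an irreducible normal subgroup `H` of
finite index in `G` (irreducible in the sense that its coefficient algebra is a domain): `G` acts
on `A` by conjugation, and `A` embeds into the product of the conjugates of a single surjection
onto a matrix algebra. It isolates what Clifford theory says about the restriction to `H` of an
irreducible representation of `G`. -/
structure CliffordSystem (k : Type*) {G : Type*} [Field k] [Group G] (H : Subgroup G) [H.Normal]
    (A : Type*) [Ring A] [Algebra k A] (n : Type*) [Fintype n] [DecidableEq n] where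
  rep : H →* A
  conj : G →* A ≃ₐ[k] A
  toMatrix : A →ₐ[k] Matrix n n k
  isDomain : IsDomain (coeffAlgebra k rep)
  span_range_rep : Submodule.span k (Set.range rep) = ⊤
  conj_apply_rep (g : G) (h : H) : conj g (rep h) = rep (MulAut.conjNormal g h)
  toMatrix_surjective : Function.Surjective toMatrix
  eq_zero_of_forall (z : A) : (∀ g : G, toMatrix (conj g⁻¹ z) = 0) → z = 0

namespace CliffordSystem

variable {k G A n : Type*} [Field k] [Group G] {H : Subgroup G} [H.Normal] [Ring A] [Algebra k A]
  [Fintype n] [DecidableEq n] (D : CliffordSystem k H A n)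

attribute [instance] isDomain

/-- The projection of `A` to its matrix block labelled by `g`; up to an inner automorphism it
depends only on the coset of `g` modulo `H`. -/
def block (g : G) : A →ₐ[k] Matrix n n k :=
  D.toMatrix.comp (D.conj g⁻¹ : A →ₐ[k] A)

theorem block_surjective (g : G) : Function.Surjective (D.block g) :=
  D.toMatrix_surjective.comp (D.conj g⁻¹).surjective

theorem block_conj (g x : G) (z : A) : D.block g (D.conj x z) = D.block (x⁻¹ * g) z := by
  simp [block]

theorem conj_eq_rep_mul_mul (h : H) (z : A) :
    D.conj (h : G) z = D.rep h * z * D.rep h⁻¹ := by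
  have : (D.conj (h : G)).toLinearMap =
      LinearMap.mulRight k (D.rep h⁻¹) ∘ₗ LinearMap.mulLeft k (D.rep h) := by
    refine LinearMap.ext_on_range D.span_range_rep fun h' => ?_
    have hh : MulAut.conjNormal (h : G) h' = h * h' * h⁻¹ := Subtype.ext (by simp)
    simp [D.conj_apply_rep, hh]
  exact congr($this z)

theorem block_mul_coe (g : G) (h : H) (z : A) :
    D.block (g * h) z = D.block 1 (D.rep h⁻¹) * D.block g z * D.block 1 (D.rep h) := by
  have hconj : D.conj (g * h : G)⁻¹ z = D.rep h⁻¹ * D.conj g⁻¹ z * D.rep h := by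
    have := D.conj_eq_rep_mul_mul h⁻¹ (D.conj g⁻¹ z)
    rw [inv_inv] at this
    rw [← this, mul_inv_rev, map_mul]
    simp
  change D.toMatrix (D.conj (g * h : G)⁻¹ z) = _
  rw [hconj]
  simp [block]

/-- The block labelled by `g` of an element of `A`, as a function of its blocks labelled by the
chosen representatives of the cosets of `H`; it makes sense for every family of matrices. -/
noncomputable def extend (g : G) : (G ⧸ H → Matrix n n k) →ₗ[k] Matrix n n k :=
  LinearMap.mulRight k (D.block 1 (D.rep (cosetPart H g))) ∘ₗ
    LinearMap.mulLeft k (D.block 1 (D.rep (cosetPart H g)⁻¹)) ∘ₗ LinearMap.proj (g : G ⧸ H)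

theorem extend_apply (g : G) (z : G ⧸ H → Matrix n n k) :
    D.extend g z = D.block 1 (D.rep (cosetPart H g)⁻¹) * z g *
      D.block 1 (D.rep (cosetPart H g)) := rfl

/-- The embedding of `A` into a product of matrix algebras given by its blocks. -/
noncomputable def blocks : A →ₐ[k] G ⧸ H → Matrix n n k :=
  AlgHom.pi fun q => D.block q.out

theorem blocks_apply (z : A) (q : G ⧸ H) : D.blocks z q = D.block q.out z := rfl

theorem extend_blocks (g : G) (z : A) : D.extend g (D.blocks z) = D.block g z := by
  rw [extend_apply, blocks_apply, ← block_mul_coe, out_mul_cosetPart]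

theorem blocks_injective : Function.Injective D.blocks := by
  refine (injective_iff_map_eq_zero _).2 fun z hz => D.eq_zero_of_forall z fun g => ?_
  change D.block g z = 0
  rw [← extend_blocks, hz, map_zero]

theorem block_rep_mul_block_rep_inv (g : G) (h : H) :
    D.block g (D.rep h) * D.block g (D.rep h⁻¹) = 1 := by
  rw [← map_mul, ← map_mul, mul_inv_cancel, map_one, map_one]

theorem extend_ne_zero {z : G ⧸ H → Matrix n n k} {g : G} (hz : z g ≠ 0) : D.extend g z ≠ 0 := by
  intro h
  refine hz ?_
  calc z g = D.block 1 (D.rep (cosetPart H g)) * D.extend g z *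
        D.block 1 (D.rep (cosetPart H g)⁻¹) := by
        rw [extend_apply, mul_assoc, mul_assoc, block_rep_mul_block_rep_inv, mul_one, ← mul_assoc,
          block_rep_mul_block_rep_inv, one_mul]
    _ = 0 := by rw [h, mul_zero, zero_mul]

theorem rank_extend_le (g : G) (z : G ⧸ H → Matrix n n k) : (D.extend g z).rank ≤ (z g).rank := by
  rw [extend_apply]
  exact (Matrix.rank_mul_le_left _ _).trans (Matrix.rank_mul_le_right _ _)

section RankReduction

/-- The images of `H` in the product of the matrix blocks, each block being rescaled
independently. -/
def scaledBlocks : Set (G ⧸ H → Matrix n n k) :=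
  {y | ∃ (d : G ⧸ H → k) (h : H), y = fun q => d q • D.blocks (D.rep h) q}

theorem mul_mem_scaledBlocks {x y : G ⧸ H → Matrix n n k} (hx : x ∈ D.scaledBlocks)
    (hy : y ∈ D.scaledBlocks) : x * y ∈ D.scaledBlocks := by
  obtain ⟨⟨d, h, rfl⟩, d', h', rfl⟩ := And.intro hx hy
  exact ⟨d * d', h * h', funext fun q => by
    simp only [Pi.mul_apply, smul_mul_smul_comm, map_mul]⟩

theorem one_mem_scaledBlocks : 1 ∈ D.scaledBlocks :=
  ⟨1, 1, by simp [funext_iff]⟩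

theorem exists_forall_mul_block_mul_ne_zero [H.FiniteIndex] {y z : G ⧸ H → Matrix n n k}
    (hy : ∀ q, y q ≠ 0) (hz : ∀ q, z q ≠ 0) :
    ∃ h : H, ∀ q, y q * D.blocks (D.rep h) q * z q ≠ 0 := by
  refine exists_forall_apply_ne_zero D.span_range_rep
    (f := fun q => sandwich (y q) (z q) ∘ₗ (D.block q.out).toLinearMap) fun q hq => ?_
  obtain ⟨L, hL⟩ := exists_mul_mul_ne_zero (hy q) (hz q)
  obtain ⟨a, rfl⟩ := D.block_surjective q.out L
  exact hL congr($hq a)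

/-- The matrix `M * h * N`, where `h` is the generic element of `H` acting on the block labelled by
`q`: its entries are functions on `H`. -/
noncomputable def genericSandwich {r : Type*} [Fintype r] (q : G ⧸ H) (M : Matrix r n k)
    (N : Matrix n r k) : Matrix r r (coeffAlgebra k D.rep) :=
  Matrix.of fun i j => matrixCoeff D.rep
    (Matrix.entryLinearMap k k i j ∘ₗ sandwich M N ∘ₗ (D.block q.out).toLinearMap)

theorem genericSandwich_apply {r : Type*} [Fintype r] (q : G ⧸ H) (M : Matrix r n k)
    (N : Matrix n r k) (i j : r) (h : H) :
    (D.genericSandwich q M N i j : H → k) h = (M * D.blocks (D.rep h) q * N) i j := rfl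

theorem linearIndependent_genericSandwich {r : Type*} [Fintype r] [DecidableEq r] (q : G ⧸ H)
    {M N' : Matrix r n k} {N M' : Matrix n r k} (hM : M * M' = 1) (hN : N' * N = 1) :
    LinearIndependent k fun x : r × r => D.genericSandwich q M N x.1 x.2 := by
  have hentry : LinearIndependent k fun x : r × r => Matrix.entryLinearMap k k x.1 x.2 := by
    have : (fun x : r × r => Matrix.entryLinearMap k k x.1 x.2) =
        (Matrix.stdBasis k r r).dualBasis := by
      rw [Module.Basis.coe_dualBasis]
      ext
      simp [Matrix.stdBasis, Pi.basis_repr]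
    exact this ▸ (Matrix.stdBasis k r r).dualBasis.linearIndependent
  have hsurj : Function.Surjective (sandwich M N ∘ₗ (D.block q.out).toLinearMap) :=
    (sandwich_surjective hM hN).comp (D.block_surjective _)
  exact (hentry.map' (sandwich M N ∘ₗ (D.block q.out).toLinearMap).dualMap (LinearMap.ker_eq_bot.2
    (LinearMap.dualMap_injective_of_surjective hsurj))).map' (matrixCoeff D.rep)
    (LinearMap.ker_eq_bot.2 (matrixCoeff_injective D.span_range_rep))

theorem sum_smul_genericSandwich {r : Type*} [Fintype r] [DecidableEq r] {q : G ⧸ H}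
    {M : Matrix n n k} {P Q' : Matrix n r k} {Q P' : Matrix r n k} (hPQ : M = P * Q)
    (hP : P' * P = 1) (hQ : Q * Q' = 1) (i j : r) :
    ∑ y : n × n, (P' i y.1 * Q' y.2 j) • D.genericSandwich q M M y.1 y.2 =
      D.genericSandwich q Q P i j := by
  refine Subtype.ext (funext fun h => ?_)
  have hcore : P' * (M * D.blocks (D.rep h) q * M) * Q' = Q * D.blocks (D.rep h) q * P := by
    rw [hPQ]
    simp only [Matrix.mul_assoc, hQ, Matrix.mul_one]
    rw [← Matrix.mul_assoc P' P, hP, Matrix.one_mul]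
  simpa [genericSandwich_apply, ← hcore, sandwich_apply] using
    (sandwich_apply_apply P' Q' (M * D.blocks (D.rep h) q * M) i j).symm

/-- The products `z * h * z` for `h` in the image of `H`, each block being rescaled
independently. -/
def scaledSandwich (z : G ⧸ H → Matrix n n k) : Set (G ⧸ H → Matrix n n k) :=
  {y | ∃ (d : G ⧸ H → k) (h : H), y = fun q => d q • (z q * D.blocks (D.rep h) q * z q)}

theorem zariskiClosure_scaledSandwich_subset {z : G ⧸ H → Matrix n n k}
    (hz : z ∈ zariskiClosure k D.scaledBlocks) :
    zariskiClosure k (D.scaledSandwich z) ⊆ zariskiClosure k D.scaledBlocks :=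
  fun _ => (isPolyMap_linearMap LinearMap.id).mem_zariskiClosure <| by
    rintro _ ⟨d, h, rfl⟩
    have hmul : ∀ x ∈ D.scaledBlocks, ∀ y ∈ D.scaledBlocks, x * y ∈ D.scaledBlocks :=
      fun _ hx _ => D.mul_mem_scaledBlocks hx
    convert mul_mem_zariskiClosure hmul
      (mul_mem_zariskiClosure hmul hz (subset_zariskiClosure ⟨d, h, rfl⟩)) hz
    ext1 q
    simp [mul_assoc]

variable [IsAlgClosed k] [H.FiniteIndex]

/-- A point of the closure of `{z h z}`, scaled blockwise, whose block at `q₀` is singular as a map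
from the coimage to the image of `z q₀`: the determinant of this map, over the function field of
`H`, is divided by a power of one of its entries so as to become nonconstant. -/
theorem exists_mem_zariskiClosure_det_eq_zero {z : G ⧸ H → Matrix n n k} (hz : ∀ q, z q ≠ 0)
    {q₀ : G ⧸ H} {r : Type*} [Fintype r] [DecidableEq r] [Nontrivial r] {P Q' : Matrix n r k}
    {Q P' : Matrix r n k} (hPQ : z q₀ = P * Q) (hP : P' * P = 1) (hQ : Q * Q' = 1) :
    ∃ z' ∈ zariskiClosure k (D.scaledSandwich z), (∀ q, z' q ≠ 0) ∧
      (P' * z' q₀ * Q').det = 0 := by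
  let K := FractionRing (coeffAlgebra k D.rep)
  have hinj := IsFractionRing.injective (coeffAlgebra k D.rep) K
  let gen (q : G ⧸ H) (x : n × n) := D.genericSandwich q (z q) (z q) x.1 x.2
  have hgen : ∀ q, (fun x => algebraMap _ K (gen q x)) ≠ 0 := fun q h0 => by
    obtain ⟨h, hh⟩ := D.exists_forall_mul_block_mul_ne_zero hz hz
    refine hh q (Matrix.ext fun i j => ?_)
    exact congr(($(hinj ((congr_fun h0 (i, j)).trans (map_zero _).symm)) : H → k) h)
  let core := D.genericSandwich q₀ Q P
  have hcore : LinearIndependent k fun x : r × r => algebraMap _ K (core x.1 x.2) :=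
    (D.linearIndependent_genericSandwich q₀ hQ hP).map'
      (IsScalarTower.toAlgHom k _ K).toLinearMap (LinearMap.ker_eq_bot.2 hinj)
  obtain ⟨x, ht⟩ := exists_div_pow_eq_zero_or_notMem_range hcore
    (core.map (algebraMap _ K)).det (Fintype.card_ne_zero (α := r))
  obtain ⟨B, s, c, b, tB, hb, htB, hs, hne⟩ := exists_degeneration hgen ht
  refine ⟨fun q => Matrix.of fun i j => s (b q (i, j)), ?_, fun q h0 => ?_,
    det_mul_specialize_mul_eq_zero s hs (hb q₀) (D.sum_smul_genericSandwich hPQ hP hQ)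
      (hcore.ne_zero x) htB⟩
  · let e : (G ⧸ H → n × n → k) →ₗ[k] G ⧸ H → Matrix n n k :=
      LinearMap.pi fun q => (LinearEquiv.curry k k n n).toLinearMap ∘ₗ LinearMap.proj q
    refine (isPolyMap_linearMap e).mem_zariskiClosure ?_
      (specialize_mem_zariskiClosure s gen c b hb)
    rintro _ ⟨d, h, rfl⟩
    exact subset_zariskiClosure ⟨d, h, rfl⟩
  · obtain ⟨y, hy⟩ := hne q
    exact hy congr($h0 y.1 y.2)

theorem exists_rank_lt {z : G ⧸ H → Matrix n n k} (hzC : z ∈ zariskiClosure k D.scaledBlocks)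
    (hz : ∀ q, z q ≠ 0) {q₀ : G ⧸ H} (h2 : 1 < (z q₀).rank) :
    ∃ z' ∈ zariskiClosure k D.scaledBlocks, (∀ q, z' q ≠ 0) ∧
      (∀ q, (z' q).rank ≤ (z q).rank) ∧ (z' q₀).rank < (z q₀).rank := by
  obtain ⟨P, Q, P', Q', hPQ, hP, hQ⟩ := exists_rank_factorization (z q₀)
  have : Nontrivial (Fin (z q₀).rank) := Fin.nontrivial_iff_two_le.2 h2
  obtain ⟨z', hz', hne, hdet⟩ := D.exists_mem_zariskiClosure_det_eq_zero hz hPQ hP hQ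
  refine ⟨z', D.zariskiClosure_scaledSandwich_subset hzC hz', hne, fun q => ?_, ?_⟩
  · obtain ⟨X, hX⟩ : z' q ∈ LinearMap.range (LinearMap.mulLeft k (z q)) := by
      refine mem_of_mem_zariskiClosure
        (V := (LinearMap.range (LinearMap.mulLeft k (z q))).comap (LinearMap.proj q)) ?_ hz'
      rintro _ ⟨d, h, rfl⟩
      exact ⟨d q • (D.blocks (D.rep h) q * z q), by simp [mul_assoc]⟩
    rw [← hX]
    exact Matrix.rank_mul_le_left _ _
  · obtain ⟨Y, hY⟩ : z' q₀ ∈ LinearMap.range (sandwich P Q) := by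
      refine mem_of_mem_zariskiClosure
        (V := (LinearMap.range (sandwich P Q)).comap (LinearMap.proj q₀)) ?_ hz'
      rintro _ ⟨d, h, rfl⟩
      exact ⟨d q₀ • (Q * D.blocks (D.rep h) q₀ * P),
        by simp [sandwich_apply, hPQ, Matrix.mul_assoc]⟩
    rw [sandwich_apply] at hY
    rw [← hY, Matrix.mul_assoc, Matrix.mul_assoc, hQ, Matrix.mul_one, ← Matrix.mul_assoc, hP,
      Matrix.one_mul] at hdet
    calc (z' q₀).rank ≤ Y.rank := hY ▸
          (Matrix.rank_mul_le_left _ _).trans (Matrix.rank_mul_le_right _ _)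
      _ < _ := by simpa using rank_lt_card_of_det_eq_zero hdet

theorem exists_rank_le_one [Nonempty n] : ∃ z ∈ zariskiClosure k D.scaledBlocks,
    ∀ q, z q ≠ 0 ∧ (z q).rank ≤ 1 := by
  have := Fintype.ofFinite (G ⧸ H)
  let S := {z | z ∈ zariskiClosure k D.scaledBlocks ∧ ∀ q, z q ≠ 0}
  have hS : S.Nonempty := ⟨1, subset_zariskiClosure D.one_mem_scaledBlocks, fun _ => one_ne_zero⟩
  obtain ⟨z, ⟨hzC, hz⟩, hmin⟩ := (wellFounded_lt.onFun (f := fun z => ∑ q, (z q).rank)).has_min S hS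
  refine ⟨z, hzC, fun q₀ => ⟨hz q₀, ?_⟩⟩
  by_contra! h2
  obtain ⟨z', hz'C, hz', hle, hlt⟩ := D.exists_rank_lt hzC hz h2
  exact hmin z' ⟨hz'C, hz'⟩ (Finset.sum_lt_sum (fun q _ => hle q) ⟨q₀, Finset.mem_univ _, hlt⟩)

end RankReduction

/-- The cone over the image of `H` in `A`. -/
def scaledRep : Set A :=
  {y | ∃ (c : k) (h : H), y = c • D.rep h}

theorem mul_mem_scaledRep {x y : A} (hx : x ∈ D.scaledRep) (hy : y ∈ D.scaledRep) :
    x * y ∈ D.scaledRep := by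
  obtain ⟨⟨c, h, rfl⟩, c', h', rfl⟩ := And.intro hx hy
  exact ⟨c * c', h * h', by rw [smul_mul_smul_comm, map_mul]⟩

theorem rep_mem_scaledRep (h : H) : D.rep h ∈ D.scaledRep := ⟨1, h, (one_smul _ _).symm⟩

/-- For `x` running over cosets of `H` and `h` over elements of `H`, the ordered product of the
elements `conj x⁻¹ z * rep h`, in terms of the blocks of `z`. When every coset `x` occurs once, it
multiplies the blocks of `z` over all cosets, so that scaling them independently only multiplies
the result by a scalar. -/
noncomputable def twist (L : List ((G ⧸ H) × H)) (z : G ⧸ H → Matrix n n k) :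
    G ⧸ H → Matrix n n k :=
  fun q => (L.map fun l => D.extend (l.1.out * q.out) z * D.block q.out (D.rep l.2)).prod

theorem twist_nil (z : G ⧸ H → Matrix n n k) : D.twist [] z = 1 := rfl

theorem twist_cons (l : (G ⧸ H) × H) (L : List ((G ⧸ H) × H)) (z : G ⧸ H → Matrix n n k)
    (q : G ⧸ H) : D.twist (l :: L) z q =
      D.extend (l.1.out * q.out) z * D.blocks (D.rep l.2) q * D.twist L z q := by
  simp only [twist, List.map_cons, List.prod_cons, blocks_apply]

theorem isPolyMap_twist [H.FiniteIndex] (L : List ((G ⧸ H) × H)) : IsPolyMap k (D.twist L) := by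
  induction L with
  | nil => exact isPolyMap_const 1
  | cons l L ih =>
    refine isPolyMap_pi fun q => ?_
    simp only [twist_cons]
    exact ((isPolyMap_linearMap (D.extend _)).mul (isPolyMap_const _)).mul
      fun φ => ih (φ ∘ₗ LinearMap.proj q)

theorem twist_smul_blocks (L : List ((G ⧸ H) × H)) (d : G ⧸ H → k) (h : H) :
    ∃ h' : H, ∀ q, D.twist L (fun q => d q • D.blocks (D.rep h) q) q =
      (L.map fun l => d (l.1 * q)).prod • D.blocks (D.rep h') q := by
  induction L with
  | nil => exact ⟨1, fun q => by simp [twist_nil]⟩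
  | cons l L ih =>
    obtain ⟨h', hh'⟩ := ih
    refine ⟨MulAut.conjNormal l.1.out⁻¹ h * l.2 * h', fun q => ?_⟩
    have hext : D.extend (l.1.out * q.out) (fun q => d q • D.blocks (D.rep h) q) =
        d (l.1 * q) • D.blocks (D.rep (MulAut.conjNormal l.1.out⁻¹ h)) q := by
      have : ((l.1.out * q.out : G) : G ⧸ H) = l.1 * q := by simp
      rw [blocks_apply, ← D.conj_apply_rep, block_conj, inv_inv, ← extend_blocks, extend_apply,
        extend_apply, this]
      simp
    rw [twist_cons, hext, hh', List.map_cons, List.prod_cons]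
    simp only [map_mul, Pi.mul_apply, smul_mul_assoc, mul_smul_comm, smul_smul,
      mul_comm (d (l.1 * q))]

theorem exists_twist_ne_zero [H.FiniteIndex] [Nonempty n] {z : G ⧸ H → Matrix n n k}
    (hz : ∀ q, z q ≠ 0) (l : List (G ⧸ H)) :
    ∃ L : List ((G ⧸ H) × H), L.map Prod.fst = l ∧ ∀ q, D.twist L z q ≠ 0 := by
  induction l with
  | nil => exact ⟨[], rfl, fun _ => one_ne_zero⟩
  | cons x l ih =>
    obtain ⟨L, rfl, hL⟩ := ih
    obtain ⟨h, hh⟩ := D.exists_forall_mul_block_mul_ne_zero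
      (y := fun q => D.extend (x.out * q.out) z) (fun q => D.extend_ne_zero (hz _)) hL
    exact ⟨(x, h) :: L, rfl, fun q => by simpa only [twist_cons] using hh q⟩

theorem rank_twist_le_one {z : G ⧸ H → Matrix n n k} (hz : ∀ q, (z q).rank ≤ 1)
    {L : List ((G ⧸ H) × H)} (hL : L ≠ []) (q : G ⧸ H) : (D.twist L z q).rank ≤ 1 := by
  obtain ⟨l, L, rfl⟩ := List.exists_cons_of_ne_nil hL
  rw [twist_cons, mul_assoc]
  exact ((Matrix.rank_mul_le_left _ _).trans (D.rank_extend_le _ z)).trans (hz _)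

theorem twist_mem_zariskiClosure [Fintype (G ⧸ H)] {L : List ((G ⧸ H) × H)}
    (hL : L.map Prod.fst = Finset.univ.toList) {z : G ⧸ H → Matrix n n k}
    (hz : z ∈ zariskiClosure k D.scaledBlocks) :
    D.twist L z ∈ zariskiClosure k (D.blocks '' D.scaledRep) := by
  have := H.finiteIndex_of_finite_quotient
  refine (D.isPolyMap_twist L).mem_zariskiClosure ?_ hz
  rintro _ ⟨d, h, rfl⟩
  obtain ⟨h', hh'⟩ := D.twist_smul_blocks L d h
  have hprod : ∀ q, (L.map fun l => d (l.1 * q)).prod = ∏ x, d x := fun q => by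
    calc (L.map fun l => d (l.1 * q)).prod
        = ((L.map Prod.fst).map fun x => d (x * q)).prod := by rw [List.map_map]; rfl
      _ = ∏ x, d (x * q) := by rw [hL, Finset.prod_map_toList]
      _ = ∏ x, d x := Equiv.prod_comp (Equiv.mulRight q) d
  refine subset_zariskiClosure ⟨(∏ x, d x) • D.rep h', ⟨_, h', rfl⟩, funext fun q => ?_⟩
  rw [hh', hprod, map_smul, Pi.smul_apply]

theorem mem_zariskiClosure_of_blocks {z : G ⧸ H → Matrix n n k}
    (hz : z ∈ zariskiClosure k (D.blocks '' D.scaledRep)) :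
    ∃ Z ∈ zariskiClosure k D.scaledRep, D.blocks Z = z := by
  obtain ⟨Z, rfl⟩ : z ∈ LinearMap.range D.blocks.toLinearMap :=
    mem_of_mem_zariskiClosure (by rintro _ ⟨Z, -, rfl⟩; exact ⟨Z, rfl⟩) hz
  obtain ⟨σ, hσ⟩ := D.blocks.toLinearMap.exists_leftInverse_of_injective
    (LinearMap.ker_eq_bot.2 D.blocks_injective)
  refine ⟨Z, ?_, rfl⟩
  rw [← show σ (D.blocks Z) = Z from congr($hσ Z)]
  refine (isPolyMap_linearMap σ).mem_zariskiClosure ?_ hz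
  rintro _ ⟨Y, hY, rfl⟩
  rw [show σ (D.blocks Y) = Y from congr($hσ Y)]
  exact subset_zariskiClosure hY

theorem exists_forall_block_rank_le_one [IsAlgClosed k] [H.FiniteIndex] [Nonempty n] :
    ∃ Z ∈ zariskiClosure k D.scaledRep, ∀ g, D.block g Z ≠ 0 ∧ (D.block g Z).rank ≤ 1 := by
  have := Fintype.ofFinite (G ⧸ H)
  obtain ⟨z, hzC, hz⟩ := D.exists_rank_le_one
  obtain ⟨L, hL, hne⟩ := D.exists_twist_ne_zero (fun q => (hz q).1) Finset.univ.toList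
  obtain ⟨Z, hZC, hZ⟩ := D.mem_zariskiClosure_of_blocks (D.twist_mem_zariskiClosure hL hzC)
  have hL' : L ≠ [] := by
    rintro rfl
    exact Finset.univ_nonempty.toList_ne_nil hL.symm
  refine ⟨Z, hZC, fun g => ?_⟩
  rw [← extend_blocks, hZ]
  exact ⟨D.extend_ne_zero (hne _),
    (D.rank_extend_le g _).trans (D.rank_twist_le_one (fun q => (hz q).2) hL' _)⟩

end CliffordSystem

section KillingFunctionals

open Polynomial

theorem aeval_mul_eq_smul {k A : Type*} [CommSemiring k] [Semiring A] [Algebra k A] {y z : A}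
    {t : k} (h : z * y = t • y) (P : k[X]) : aeval z P * y = P.eval t • y := by
  induction P using Polynomial.induction_on with
  | C c => rw [aeval_C, eval_C, Algebra.smul_def]
  | add P Q hP hQ => rw [map_add, add_mul, hP, hQ, eval_add, add_smul]
  | monomial i c hP =>
    rw [pow_succ, ← mul_assoc, map_mul, aeval_X, mul_assoc, h, mul_smul_comm, hP, smul_smul,
      eval_mul_X, mul_comm]

namespace CliffordSystem

variable {k G A n : Type*} [Field k] [Group G] {H : Subgroup G} [H.Normal] [Ring A] [Algebra k A]
  [Fintype n] [DecidableEq n] (D : CliffordSystem k H A n)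

theorem exists_mem_block_eq_one [Nonempty n] {Z : A} (hZ : ∀ g, D.block g Z ≠ 0) (g : G) :
    ∃ e ∈ TwoSidedIdeal.span {Z}, D.block g e = 1 := by
  have h1 : (1 : Matrix n n k) ∈ TwoSidedIdeal.span {D.block g Z} :=
    IsSimpleRing.one_mem_of_ne_zero_mem _ (hZ g) (TwoSidedIdeal.subset_span rfl)
  rw [TwoSidedIdeal.mem_span_iff_mem_addSubgroup_closure] at h1
  generalize (1 : Matrix n n k) = w at h1 ⊢
  induction h1 using AddSubgroup.closure_induction with
  | mem w hw =>
    obtain ⟨_, ⟨u, -, _, rfl, rfl⟩, v, -, rfl⟩ := hw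
    obtain ⟨⟨x, rfl⟩, y, rfl⟩ := And.intro (D.block_surjective g u) (D.block_surjective g v)
    exact ⟨x * Z * y, TwoSidedIdeal.mul_mem_right _ _ _
      (TwoSidedIdeal.mul_mem_left _ _ _ (TwoSidedIdeal.subset_span rfl)), by simp⟩
  | zero => exact ⟨0, TwoSidedIdeal.zero_mem _, map_zero _⟩
  | add u v _ _ hu hv =>
    obtain ⟨⟨x, hx, rfl⟩, y, hy, rfl⟩ := And.intro hu hv
    exact ⟨x + y, TwoSidedIdeal.add_mem _ hx hy, map_add _ _ _⟩
  | neg u _ hu =>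
    obtain ⟨x, hx, rfl⟩ := hu
    exact ⟨-x, TwoSidedIdeal.neg_mem _ hx, map_neg _ _⟩

theorem span_singleton_eq_top [H.FiniteIndex] [Nonempty n] {Z : A} (hZ : ∀ g, D.block g Z ≠ 0) :
    TwoSidedIdeal.span {Z} = ⊤ := by
  classical
  have := Fintype.ofFinite (G ⧸ H)
  have hs : ∀ s : Finset (G ⧸ H),
      ∃ e ∈ TwoSidedIdeal.span {Z}, ∀ q ∈ s, D.block q.out e = 1 := fun s => by
    induction s using Finset.induction_on with
    | empty => exact ⟨0, TwoSidedIdeal.zero_mem _, by simp⟩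
    | insert q s _ ih =>
      obtain ⟨⟨e, he, hes⟩, e', he', heq⟩ := And.intro ih (D.exists_mem_block_eq_one hZ q.out)
      refine ⟨e + e' - e * e', TwoSidedIdeal.sub_mem _ (TwoSidedIdeal.add_mem _ he he')
        (TwoSidedIdeal.mul_mem_left _ _ _ he'), fun r hr => ?_⟩
      rcases Finset.mem_insert.1 hr with rfl | hr
      · simp [heq]
      · simp [hes r hr]
  obtain ⟨e, he, he1⟩ := hs Finset.univ
  have : e = 1 := D.blocks_injective <| funext fun q => by
    simp [blocks_apply, he1 q (Finset.mem_univ q)]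
  exact (TwoSidedIdeal.one_mem_iff _).1 (this ▸ he)

/-- The product `a * conj x a * ⋯ * conj (x ^ (i - 1)) a`, which is the `i`-th power of `a * x`
divided by `x ^ i` on the right. -/
def twistedPow (x : G) (a : A) : ℕ → A
  | 0 => 1
  | i + 1 => a * D.conj x (twistedPow x a i)

theorem twistedPow_mul_conj_pow (x : G) (a : A) (i : ℕ) :
    D.twistedPow x a i * D.conj (x ^ i) a = D.twistedPow x a (i + 1) := by
  induction i with
  | zero => simp [twistedPow]
  | succ i ih =>
    rw [twistedPow, twistedPow, ← ih, map_mul, mul_assoc, pow_succ', map_mul]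
    rfl

theorem block_twistedPow_succ_ne_zero {x : G} {a : A} (ha : ∀ g, (D.block g a).rank ≤ 1)
    (hax : ∀ g, D.block g (a * D.conj x a) ≠ 0) (i : ℕ) (g : G) :
    D.block g (D.twistedPow x a (i + 1)) ≠ 0 := by
  induction i generalizing g with
  | zero =>
    intro h
    exact hax g (by rw [map_mul, show D.block g a = 0 by simpa [twistedPow] using h, zero_mul])
  | succ i ih =>
    have hrank : (D.block g (D.conj x a)).rank ≤ 1 := by
      rw [block_conj]
      exact ha _
    have htail : D.block g (D.conj x a) * D.block g (D.conj x (D.conj x (D.twistedPow x a i))) ≠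
        0 := by
      rw [← map_mul, ← map_mul, block_conj]
      exact ih _
    have hhead := hax g
    rw [map_mul] at hhead
    rw [twistedPow, twistedPow, map_mul, map_mul, map_mul, ← mul_assoc]
    exact mul_mul_ne_zero_of_rank_le_one hrank hhead htail

/-- When `y = x ^ (l + 1)`, the factor `twistedPow x a (l + 1) * rep y` is the `(l + 1)`-th power
of `a * x`. -/
theorem exists_block_twistedPow_mul_eq_smul {x : G} {a : A} (ha : ∀ g, (D.block g a).rank ≤ 1)
    (hax : ∀ g, D.block g (a * D.conj x a) ≠ 0) {l : ℕ} {y : H} (hy : (y : G) = x ^ (l + 1))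
    (g : G) : ∃ t : k, t ≠ 0 ∧
      D.block g (D.twistedPow x a (l + 1) * D.rep y) * D.block g a = t • D.block g a := by
  let w := D.conj x (D.twistedPow x a l) * D.rep y
  have hw : D.block g (D.twistedPow x a (l + 1) * D.rep y) = D.block g a * D.block g w := by
    rw [← map_mul, ← mul_assoc]
    rfl
  have htr : D.block g (D.twistedPow x a (l + 1) * D.rep y) * D.block g a =
      (D.block g w * D.block g a).trace • D.block g a := by
    rw [hw, mul_assoc, mul_mul_self_eq_trace_smul_of_rank_le_one (ha g)]
  refine ⟨_, fun h0 => D.block_twistedPow_succ_ne_zero ha hax (l + 1) g ?_, htr⟩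
  calc D.block g (D.twistedPow x a (l + 2))
      = D.block g (D.twistedPow x a (l + 1) * D.rep y) * D.block g a * D.block g (D.rep y⁻¹) := by
        rw [← D.twistedPow_mul_conj_pow x a (l + 1), ← hy, D.conj_eq_rep_mul_mul, ← map_mul,
          ← map_mul]
        simp only [mul_assoc]
    _ = 0 := by rw [htr, h0, zero_smul, zero_mul]

theorem exists_apply_ne_zero_and_block_ne_zero [H.FiniteIndex] [Nonempty n] {Ψ : Module.Dual k A}
    (hΨ : Ψ ≠ 0) {Z Z' : A} (hZ : ∀ g, D.block g Z ≠ 0) (hZ' : ∀ g, D.block g Z' ≠ 0) :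
    ∃ h : H, Ψ (D.rep h) ≠ 0 ∧ ∀ g, D.block g (Z * D.rep h * Z') ≠ 0 := by
  let f : Option (G ⧸ H) → A →ₗ[k] Matrix n n k := fun o => o.elim (Ψ.smulRight 1) fun r =>
    sandwich (D.block r.out Z) (D.block r.out Z') ∘ₗ (D.block r.out).toLinearMap
  have hf : ∀ o, f o ≠ 0 := by
    rintro (_ | r) h0
    · exact hΨ (LinearMap.ext fun z => (smul_eq_zero_iff_left one_ne_zero).1 congr($h0 z))
    · obtain ⟨L, hL⟩ := exists_mul_mul_ne_zero (hZ r.out) (hZ' r.out)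
      obtain ⟨z, rfl⟩ := D.block_surjective r.out L
      exact hL congr($h0 z)
  obtain ⟨h, hh⟩ := exists_forall_apply_ne_zero D.span_range_rep hf
  refine ⟨h, (smul_ne_zero_iff.1 (hh none)).1, fun g => ?_⟩
  rw [← extend_blocks]
  refine D.extend_ne_zero ?_
  rw [blocks_apply, map_mul, map_mul]
  exact hh (some (g : G ⧸ H))

section Killing

variable {E : Type*} [Ring E] [Algebra k E] {ρ : G →* E} {j : A →ₐ[k] E}
  (hj : ∀ h : H, j (D.rep h) = ρ h)

include hj

theorem mul_map_eq_map_conj_mul (x : G) (z : A) : ρ x * j z = j (D.conj x z) * ρ x := by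
  have : LinearMap.mulLeft k (ρ x) ∘ₗ j.toLinearMap =
      LinearMap.mulRight k (ρ x) ∘ₗ j.toLinearMap ∘ₗ (D.conj x).toLinearMap := by
    refine LinearMap.ext_on_range D.span_range_rep fun h => ?_
    simp [D.conj_apply_rep, hj, ← map_mul]
  exact congr($this z)

theorem map_mul_pow (x : G) (a : A) (i : ℕ) :
    (j a * ρ x) ^ i = j (D.twistedPow x a i) * ρ (x ^ i) := by
  induction i with
  | zero => simp [twistedPow]
  | succ i ih =>
    rw [pow_succ', ih, twistedPow, mul_assoc, ← mul_assoc (ρ x), D.mul_map_eq_map_conj_mul hj,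
      map_mul, pow_succ', map_mul]
    simp only [mul_assoc]

theorem exists_aeval_eq_zero [H.FiniteIndex] {x : G} {m : ℕ} (hm : m ≠ 0) (hx : x ^ m ∈ H) {a : A}
    (ha : ∀ g, (D.block g a).rank ≤ 1) (hax : ∀ g, D.block g (a * D.conj x a) ≠ 0) :
    ∃ s : Finset k, 0 ∉ s ∧ aeval (j a * ρ x) (X * ∏ t ∈ s, (X ^ m - C t)) = 0 := by
  classical
  have := Fintype.ofFinite (G ⧸ H)
  obtain ⟨l, rfl⟩ : ∃ l, m = l + 1 := Nat.exists_eq_succ_of_ne_zero hm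
  let d := D.twistedPow x a (l + 1) * D.rep ⟨x ^ (l + 1), hx⟩
  choose t ht hda using
    D.exists_block_twistedPow_mul_eq_smul (y := ⟨x ^ (l + 1), hx⟩) ha hax rfl
  let s : Finset k := Finset.univ.image fun q : G ⧸ H => t q.out
  have hprod : aeval d (∏ c ∈ s, (X - C c)) * a = 0 := by
    refine (map_eq_zero_iff _ D.blocks_injective).1 (funext fun q => ?_)
    rw [blocks_apply, map_mul, ← aeval_algHom_apply, aeval_mul_eq_smul (hda _), eval_prod,
      Finset.prod_eq_zero (Finset.mem_image_of_mem _ (Finset.mem_univ q)) (by simp), zero_smul]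
    rfl
  have hpow : (j a * ρ x) ^ (l + 1) = j d := by rw [D.map_mul_pow hj, map_mul, hj]
  have hexp : ∏ c ∈ s, ((X : k[X]) ^ (l + 1) - C c) = expand k (l + 1) (∏ c ∈ s, (X - C c)) := by
    simp [map_prod]
  refine ⟨s, by simp [s, ht], ?_⟩
  rw [hexp, mul_comm, map_mul, expand_aeval, hpow, aeval_X, aeval_algHom_apply, ← mul_assoc,
    ← map_mul, hprod, map_zero, zero_mul]

theorem apply_pow_eq_zero_of_mem_zariskiClosure [FiniteDimensional k E] {Φ : Module.Dual k E}
    {q : ℕ} (hΦ : ∀ g, Φ (ρ g ^ q) = 0) (x : G) (i : ℕ) {z : A}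
    (hz : z ∈ zariskiClosure k D.scaledRep) : Φ (((j z * ρ x) ^ i) ^ q) = 0 := by
  have hpoly : IsPolyMap k fun z => ((j z * ρ x) ^ i) ^ q :=
    (((isPolyMap_linearMap j.toLinearMap).mul (isPolyMap_const (ρ x))).pow i).pow q
  refine hz _ (hpoly Φ) ?_
  rintro _ ⟨c, h, rfl⟩
  have hch : j (c • D.rep h) * ρ x = c • ρ (h * x) := by
    rw [map_smul, hj, smul_mul_assoc, map_mul]
  beta_reduce
  rw [hch, _root_.smul_pow, _root_.smul_pow, map_smul, ← map_pow, hΦ, smul_zero]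

section Vanishing

variable [IsAlgClosed k] [FiniteDimensional k E] [H.FiniteIndex] {p : ℕ} [Fact p.Prime] [CharP k p]
  {Φ : Module.Dual k E} {a : ℕ} (hΦ : ∀ g, Φ (ρ g ^ p ^ a) = 0)
  {x : G} {m : ℕ} (hm : ¬p ∣ m) (hx : x ^ m ∈ H)

include hΦ hm hx

theorem apply_map_mul_eq_zero {z : A} (hzC : z ∈ zariskiClosure k D.scaledRep)
    (hz : ∀ g, (D.block g z).rank ≤ 1) (hzx : ∀ g, D.block g (z * D.conj x z) ≠ 0) :
    Φ (j z * ρ x) = 0 := by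
  have hm0 : m ≠ 0 := fun h => hm (h ▸ dvd_zero p)
  obtain ⟨s, hs, hs0⟩ := D.exists_aeval_eq_zero hj hm0 hx hz hzx
  have hsep := separable_X_mul_prod_X_pow_sub_C (mt (CharP.cast_eq_zero_iff k p m).1 hm) hs
  have hle : Submodule.span k (Set.range fun i : ℕ => ((j z * ρ x) ^ i) ^ p ^ a) ≤
      LinearMap.ker Φ := by
    rw [Submodule.span_le]
    rintro _ ⟨i, rfl⟩
    exact D.apply_pow_eq_zero_of_mem_zariskiClosure hj hΦ x i hzC
  exact hle (mem_span_pow_of_separable p hsep hs0 a)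

theorem apply_map_mul_mul_eq_zero [Nonempty n] {Z : A} (hZC : Z ∈ zariskiClosure k D.scaledRep)
    (hZ : ∀ g, D.block g Z ≠ 0 ∧ (D.block g Z).rank ≤ 1) (w : A) :
    Φ (j (Z * w) * ρ x) = 0 := by
  let Ψ : Module.Dual k A :=
    Φ ∘ₗ LinearMap.mulRight k (ρ x) ∘ₗ j.toLinearMap ∘ₗ LinearMap.mulLeft k Z
  suffices Ψ = 0 from congr($this w)
  by_contra hΨ
  obtain ⟨h, hh, hgen⟩ := D.exists_apply_ne_zero_and_block_ne_zero hΨ (Z' := D.conj x Z)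
    (fun g => (hZ g).1) fun g => by rw [block_conj]; exact (hZ _).1
  have hC : Z * D.rep h ∈ zariskiClosure k D.scaledRep :=
    mul_mem_zariskiClosure (fun _ hy _ hz => D.mul_mem_scaledRep hy hz) hZC
      (subset_zariskiClosure (D.rep_mem_scaledRep h))
  refine hh (D.apply_map_mul_eq_zero (z := Z * D.rep h) hj hΦ hm hx hC (fun g => ?_)
    fun g h0 => hgen g ?_)
  · rw [map_mul]
    exact (Matrix.rank_mul_le_left _ _).trans (hZ g).2
  · calc D.block g (Z * D.rep h * D.conj x Z)
        = D.block g (Z * D.rep h * D.conj x (Z * D.rep h)) *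
            D.block g (D.rep (MulAut.conjNormal x h)⁻¹) := by
          rw [map_mul (D.conj x), D.conj_apply_rep, ← mul_assoc, map_mul _ _ (D.rep _),
            mul_assoc (D.block g _), block_rep_mul_block_rep_inv, mul_one]
      _ = 0 := by rw [h0, zero_mul]

theorem apply_map_mul_mul_mul_eq_zero [Nonempty n] {Z : A}
    (hZC : Z ∈ zariskiClosure k D.scaledRep)
    (hZ : ∀ g, D.block g Z ≠ 0 ∧ (D.block g Z).rank ≤ 1) (y w : A) :
    Φ (j (y * Z * w) * ρ x) = 0 := by
  have hy : y ∈ Submodule.span k (Set.range D.rep) := D.span_range_rep ▸ Submodule.mem_top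
  induction hy using Submodule.span_induction with
  | mem y hy =>
    obtain ⟨h, rfl⟩ := hy
    have hC : D.rep h * Z ∈ zariskiClosure k D.scaledRep :=
      mul_mem_zariskiClosure (fun _ hy _ hz => D.mul_mem_scaledRep hy hz)
        (subset_zariskiClosure (D.rep_mem_scaledRep h)) hZC
    refine D.apply_map_mul_mul_eq_zero hj hΦ hm hx hC (fun g => ⟨fun h0 => (hZ g).1 ?_, ?_⟩) w
    · calc D.block g Z = D.block g (D.rep h⁻¹) * D.block g (D.rep h * Z) := by
            rw [← map_mul, ← mul_assoc, ← map_mul, inv_mul_cancel, map_one, one_mul]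
        _ = 0 := by rw [h0, mul_zero]
    · rw [map_mul]
      exact (Matrix.rank_mul_le_right _ _).trans (hZ g).2
  | zero => simp
  | add y y' _ _ hy hy' => simp only [add_mul, map_add, hy, hy', add_zero]
  | smul c y _ hy => simp only [smul_mul_assoc, map_smul, hy, smul_zero]

theorem apply_eq_zero : Φ (ρ x) = 0 := by
  suffices Φ (j 1 * ρ x) = 0 by simpa using this
  cases isEmpty_or_nonempty n
  · have h1 : (1 : A) = 0 := D.eq_zero_of_forall 1 fun _ => Subsingleton.elim _ _
    rw [h1, map_zero, zero_mul, map_zero]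
  obtain ⟨Z, hZC, hZ⟩ := D.exists_forall_block_rank_le_one
  have h1 : (1 : A) ∈ TwoSidedIdeal.span {Z} := by
    rw [D.span_singleton_eq_top fun g => (hZ g).1]
    trivial
  rw [TwoSidedIdeal.mem_span_iff_mem_addSubgroup_closure] at h1
  generalize (1 : A) = w at h1 ⊢
  induction h1 using AddSubgroup.closure_induction with
  | mem w hw =>
    obtain ⟨_, ⟨y, -, _, rfl, rfl⟩, v, -, rfl⟩ := hw
    exact D.apply_map_mul_mul_mul_eq_zero hj hΦ hm hx hZC hZ y v
  | zero => simp
  | add u v _ _ hu hv => simp only [map_add, add_mul, hu, hv, add_zero]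
  | neg u _ hu => simp only [map_neg, neg_mul, hu, neg_zero]

end Vanishing

end Killing

end CliffordSystem

end KillingFunctionals

section CliffordRestriction

theorem coeffAlgebra_comp_of_injective {k G A B : Type*} [Field k] [Monoid G] [Ring A] [Algebra k A]
    [Ring B] [Algebra k B] {j : A →ₐ[k] B} (hj : Function.Injective j) (ρ : G →* A) :
    coeffAlgebra k ((j : A →* B).comp ρ) = coeffAlgebra k ρ := by
  obtain ⟨σ, hσ⟩ := j.toLinearMap.exists_leftInverse_of_injective (LinearMap.ker_eq_bot.2 hj)
  refine congr(Algebra.adjoin k $(Set.ext fun F => ⟨?_, ?_⟩))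
  · rintro ⟨φ, rfl⟩
    exact ⟨φ ∘ₗ j.toLinearMap, rfl⟩
  · rintro ⟨φ, rfl⟩
    exact ⟨φ ∘ₗ σ, funext fun g => congr(φ ($hσ (ρ g)))⟩

section Conjugation

variable {k G E : Type*} [Field k] [Group G] [Ring E] [Algebra k E]

variable (k) in
/-- The action of `G` by conjugation on the algebra in which it is represented. -/
def conjAut (ρ : G →* E) : G →* E ≃ₐ[k] E :=
  (MulSemiringAction.toAlgAut (ConjAct Eˣ) k E).comp
    ((ConjAct.toConjAct : Eˣ ≃* ConjAct Eˣ).toMonoidHom.comp ρ.toHomUnits)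

theorem conjAut_apply (ρ : G →* E) (g : G) (z : E) : conjAut k ρ g z = ρ g * z * ρ g⁻¹ := rfl

variable (k) in
/-- The subalgebra spanned by the image of the subgroup `H`. -/
abbrev imageAlgebra (ρ : G →* E) (H : Subgroup G) : Subalgebra k E :=
  Algebra.adjoin k (Set.range (ρ.comp H.subtype))

theorem conjAut_mem_imageAlgebra (ρ : G →* E) (H : Subgroup G) [H.Normal] (g : G) {z : E}
    (hz : z ∈ imageAlgebra k ρ H) : conjAut k ρ g z ∈ imageAlgebra k ρ H := by
  suffices imageAlgebra k ρ H ≤ (imageAlgebra k ρ H).comap (conjAut k ρ g : E →ₐ[k] E) from this hz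
  refine Algebra.adjoin_le ?_
  rintro _ ⟨h, rfl⟩
  exact Algebra.subset_adjoin ⟨MulAut.conjNormal g h, by simp [conjAut_apply]⟩

variable (k) in
/-- The action of `G` by conjugation on the algebra spanned by the image of a normal subgroup. -/
def imageAlgebraConj (ρ : G →* E) (H : Subgroup G) [H.Normal] :
    G →* imageAlgebra k ρ H ≃ₐ[k] imageAlgebra k ρ H :=
  (AlgEquiv.algHomUnitsEquiv k (imageAlgebra k ρ H)).toMonoidHom.comp <| MonoidHom.toHomUnits
    { toFun g := (((conjAut k ρ g : E →ₐ[k] E).comp (imageAlgebra k ρ H).val).codRestrict _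
        fun z => conjAut_mem_imageAlgebra ρ H g z.2)
      map_one' := by ext; simp
      map_mul' g h := AlgHom.ext fun z => Subtype.ext congr($(map_mul (conjAut k ρ) g h) z) }

theorem coe_imageAlgebraConj_apply (ρ : G →* E) (H : Subgroup G) [H.Normal] (g : G)
    (z : imageAlgebra k ρ H) : (imageAlgebraConj k ρ H g z : E) = ρ g * z * ρ g⁻¹ := rfl

end Conjugation

variable {k G V : Type*} [Field k] [Group G] [AddCommGroup V] [Module k V]
  (ρ : Representation k G V)

theorem eq_zero_of_forall_apply_eq_zero (hρ : Submodule.span k (Set.range ρ) = ⊤) {r : V}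
    (hr : r ≠ 0) {f : Module.End k V} (h : ∀ g, f (ρ g r) = 0) : f = 0 := by
  have hf : f ∘ₗ LinearMap.applyₗ r = (0 : Module.End k V →ₗ[k] V) :=
    LinearMap.ext_on_range hρ h
  obtain ⟨φ, hφ⟩ : ∃ φ : Module.Dual k V, φ r ≠ 0 := by
    by_contra! hφ
    exact hr ((Module.forall_dual_apply_eq_zero_iff k r).1 hφ)
  refine LinearMap.ext fun v => (smul_eq_zero_iff_right hφ).1 ?_
  simpa using congr($hf (φ.smulRight v))

/-- The Clifford system attached to a simple constituent `R` of the restriction of `ρ` to `H`. -/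
noncomputable def cliffordSystem [IsAlgClosed k] (hρ : Submodule.span k (Set.range ρ) = ⊤)
    (H : Subgroup G) [H.Normal] [IsDomain (coeffAlgebra k (ρ.comp H.subtype))]
    {R : Type*} [AddCommGroup R] [Module k R] [Module (imageAlgebra k ρ H) R]
    [IsScalarTower k (imageAlgebra k ρ H) R] [FiniteDimensional k R]
    [IsSimpleModule (imageAlgebra k ρ H) R] (i : R →ₗ[imageAlgebra k ρ H] V)
    (hi : Function.Injective i) :
    CliffordSystem k H (imageAlgebra k ρ H) (Fin (Module.finrank k R)) where
  rep := (ρ.comp H.subtype).codRestrict _ fun h => Algebra.subset_adjoin ⟨h, rfl⟩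
  conj := imageAlgebraConj k ρ H
  toMatrix := (LinearMap.toMatrixAlgEquiv (Module.finBasis k R)).toAlgHom.comp
    (Algebra.lsmul k k R)
  isDomain := by
    rw [← coeffAlgebra_comp_of_injective (j := (imageAlgebra k ρ H).val) Subtype.val_injective]
    assumption
  span_range_rep := by
    refine Submodule.map_injective_of_injective (f := (imageAlgebra k ρ H).val.toLinearMap)
      Subtype.val_injective ?_
    rw [Submodule.map_span, ← Set.range_comp, Submodule.map_top]
    exact (span_range_eq_adjoin (ρ.comp H.subtype)).trans
      (Submodule.range_subtype (imageAlgebra k ρ H).toSubmodule).symm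
  conj_apply_rep g h := Subtype.ext <| by simp [coe_imageAlgebraConj_apply]
  toMatrix_surjective := (LinearMap.toMatrixAlgEquiv (Module.finBasis k R)).surjective.comp
    (lsmul_surjective_of_isSimpleModule k)
  eq_zero_of_forall z hz := by
    have := IsSimpleModule.nontrivial (imageAlgebra k ρ H) R
    obtain ⟨r, hr⟩ := exists_ne (0 : R)
    refine Subtype.ext (eq_zero_of_forall_apply_eq_zero ρ hρ
      ((map_ne_zero_iff i hi).2 hr) fun g => ?_)
    have hg : Algebra.lsmul k k R (imageAlgebraConj k ρ H g⁻¹ z) = 0 :=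
      (map_eq_zero_iff _ (LinearMap.toMatrixAlgEquiv (Module.finBasis k R)).injective).1 (hz g)
    have hgr : ρ g⁻¹ ((z : Module.End k V) (ρ g⁻¹⁻¹ (i r))) = 0 :=
      (map_smul i _ r).symm.trans ((congr(i ($hg r))).trans (map_zero i))
    rw [inv_inv] at hgr
    simpa using congr(ρ g $hgr)

theorem exists_isSimpleModule_submodule (k B V : Type*) [Field k] [Ring B] [Algebra k B]
    [AddCommGroup V] [Module k V] [Module B V] [IsScalarTower k B V] [FiniteDimensional k V]
    [Nontrivial V] : ∃ R : Submodule B V, IsSimpleModule B R ∧ FiniteDimensional k R := by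
  have : IsArtinian B V := isArtinian_of_tower k inferInstance
  obtain ⟨R, hR⟩ := IsAtomic.exists_atom (Submodule B V)
  exact ⟨R, isSimpleModule_iff_isAtom.2 hR,
    .of_injective (R.subtype.restrictScalars k) R.subtype_injective⟩

theorem mem_span_isSemisimpleEnd [IsAlgClosed k] [FiniteDimensional k V] {p : ℕ} [Fact p.Prime]
    [CharP k p] (hρ : Submodule.span k (Set.range ρ) = ⊤) {x : G} {m : ℕ} (hm : ¬p ∣ m)
    (hx : x ^ m ∈ identityComponent k ρ) :
    ρ x ∈ Submodule.span k {f | ∃ g, IsSemisimpleEnd (ρ g) ∧ ρ g = f} := by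
  nontriviality V
  obtain ⟨R, hR, hRk⟩ :=
    exists_isSimpleModule_submodule k (imageAlgebra k ρ (identityComponent k ρ)) V
  let D := cliffordSystem ρ hρ (identityComponent k ρ) (R := R) R.subtype R.subtype_injective
  obtain ⟨a, ha⟩ : ∃ a, Module.finrank k V ≤ p ^ a :=
    ⟨_, (Nat.lt_pow_self (Fact.out : p.Prime).one_lt).le⟩
  by_contra hnot
  obtain ⟨Φ, hΦx, hΦ⟩ := Submodule.exists_dual_map_eq_bot_of_notMem hnot inferInstance
  refine hΦx (D.apply_eq_zero (j := (imageAlgebra k ρ _).val) (fun _ => rfl) (a := a)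
    (fun g => ?_) hm hx)
  have hg : ρ g ^ p ^ a ∈ {f | ∃ g, IsSemisimpleEnd (ρ g) ∧ ρ g = f} :=
    ⟨g ^ p ^ a, by rw [map_pow]; exact isSemisimpleEnd_pow_expChar_pow p (ρ g) ha, map_pow ρ g _⟩
  exact (Submodule.mem_bot k).1 (hΦ ▸ Submodule.mem_map_of_mem (Submodule.subset_span hg))

end CliffordRestriction

section Exponents

theorem eq_zero_of_forall_apply_pow_eq_zero {k M : Type*} [Field k] [Monoid M] (p : ℕ)
    [Fact p.Prime] [CharP k p] {F : M → k}
    (hF : F ∈ Submodule.span k (Set.range (MonoidHom.coeFn M k))) (h : ∀ x, F (x ^ p) = 0) :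
    F = 0 := by
  obtain ⟨c, rfl⟩ := Finsupp.mem_span_range_iff_exists_finsupp.1 hF
  have hinj : Function.Injective fun χ : M →* k => (frobenius k p : k →* k).comp χ :=
    fun χ ψ hχψ => MonoidHom.ext fun x => frobenius_inj k p congr($hχψ x)
  have hc : c = 0 := linearIndependent_iff.1 ((linearIndependent_monoidHom M k).comp _ hinj) c <|
    funext fun x => by
      simpa [Finsupp.linearCombination_apply, Finsupp.sum, frobenius_def] using h x
  rw [hc, Finsupp.sum_zero_index]

variable {k G A : Type*} [Field k] [IsAlgClosed k] [Ring A] [Algebra k A]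

theorem coeffAlgebra_comp_powersHom_le [Monoid G] {ρ : G →* A} {x : G} {P : Polynomial k}
    (hP : P.Separable) (hx : Polynomial.aeval (ρ x) P = 0) :
    (coeffAlgebra k (ρ.comp (powersHom G x))).toSubmodule ≤
      Submodule.span k (Set.range (MonoidHom.coeFn (Multiplicative ℕ) k)) := by
  obtain ⟨s, B, hB⟩ := exists_pow_eq_sum_of_separable hP hx
  rw [span_range_eq_adjoin, OrderEmbedding.le_iff_le]
  refine Algebra.adjoin_le ?_
  rintro _ ⟨φ, rfl⟩
  have hφ : (fun e => φ (ρ.comp (powersHom G x) e)) =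
      ∑ c ∈ s, φ (B c) • MonoidHom.coeFn _ k (powersHom k c) := funext fun e => by
    simp [hB, mul_comm]
  beta_reduce
  rw [hφ]
  exact Subalgebra.sum_mem _ fun c _ =>
    Subalgebra.smul_mem _ (Algebra.subset_adjoin (Set.mem_range_self _)) _

theorem mem_identityComponent_of_pow_mem [Group G] [FiniteDimensional k A] {ρ : G →* A} (p : ℕ)
    [Fact p.Prime] [CharP k p] {x : G} {P : Polynomial k} (hP : P.Separable)
    (hPx : Polynomial.aeval (ρ x) P = 0) (hx : x ^ p ∈ identityComponent k ρ) :
    x ∈ identityComponent k ρ := by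
  by_contra hnot
  obtain ⟨F, hF, hF0, hFx⟩ := exists_mem_coeffAlgebra_separating ρ hnot
  have hmem : precomp k (powersHom G x) F ∈ coeffAlgebra k (ρ.comp (powersHom G x)) :=
    coeffAlgebra_comp (k := k) ρ (powersHom G x) ▸ ⟨F, hF, rfl⟩
  have h0 : precomp k (powersHom G x) F = 0 :=
    eq_zero_of_forall_apply_pow_eq_zero p (coeffAlgebra_comp_powersHom_le hP hPx hmem) fun e => by
      refine hF0 _ ?_
      rw [map_pow, powersHom_apply, pow_right_comm]
      exact pow_mem hx _
  exact hFx (by simpa [precomp] using congr($h0 (Multiplicative.ofAdd 1)))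

theorem exists_forall_pow_mul_pow_mem {G : Type*} [Group G] (p : ℕ) [Fact p.Prime]
    {H N : Subgroup G} [H.Normal] [H.FiniteIndex] [N.Normal] (hNH : ∀ n ∈ N, n ^ p ∈ H → n ∈ H) :
    ∃ c : ℕ, ∀ g, ∀ n ∈ N, ∃ m, ¬p ∣ m ∧ (g ^ p ^ c * n) ^ m ∈ H := by
  have hp : p.Prime := Fact.out
  obtain ⟨c, m, hm, hcard⟩ :=
    Nat.exists_eq_pow_mul_and_not_dvd (Nat.card_pos (α := G ⧸ H)).ne' p hp.ne_one
  let Nbar : Subgroup (G ⧸ H) := N.map (QuotientGroup.mk' H)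
  have hNbar : ¬p ∣ Nat.card Nbar := fun hdvd => by
    obtain ⟨⟨_, n, hn, rfl⟩, hx⟩ := exists_prime_orderOf_dvd_card' p hdvd
    have hnp : n ^ p ∈ H := by
      rw [← QuotientGroup.eq_one_iff]
      exact congr_arg Subtype.val (hx ▸ pow_orderOf_eq_one _)
    refine hp.ne_one (hx ▸ orderOf_eq_one_iff.2 (Subtype.ext ?_))
    exact (QuotientGroup.eq_one_iff n).2 (hNH n hn hnp)
  refine ⟨c, fun g n hn => ⟨m * Nat.card Nbar, hp.not_dvd_mul hm hNbar, ?_⟩⟩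
  have hgN : (g ^ p ^ c)⁻¹ ^ m * (g ^ p ^ c * n) ^ m ∈ N := by
    rw [← QuotientGroup.eq_one_iff] at hn ⊢
    simp [hn]
  have hg : (((g ^ p ^ c)⁻¹ ^ m : G) : G ⧸ H) = 1 := by
    rw [inv_pow, ← pow_mul, ← hcard, QuotientGroup.mk_inv, QuotientGroup.mk_pow, pow_card_eq_one',
      inv_one]
  have hmem : (((g ^ p ^ c * n) ^ m : G) : G ⧸ H) ∈ Nbar :=
    ⟨_, hgN, by rw [QuotientGroup.mk'_apply, QuotientGroup.mk_mul, hg, one_mul]⟩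
  rw [pow_mul, ← QuotientGroup.eq_one_iff, QuotientGroup.mk_pow]
  exact congr_arg Subtype.val (pow_card_eq_one' (x := (⟨_, hmem⟩ : Nbar)))

end Exponents

section TensorProduct

variable {k G U W : Type*} [Field k] [AddCommGroup U] [Module k U] [AddCommGroup W] [Module k W]

theorem span_range_mul_left_eq_top [Group G] (ρ : Representation k G U) {N : Subgroup G}
    (hN : Submodule.span k (Set.range (ρ.comp N.subtype)) = ⊤) (g : G) :
    Submodule.span k (Set.range fun n : N => ρ (g * n)) = ⊤ := by
  have hrange : (Set.range fun n : N => ρ (g * n)) =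
      LinearMap.mulLeft k (ρ g) '' Set.range (ρ.comp N.subtype) := by
    rw [← Set.range_comp]
    exact congr_arg Set.range (funext fun n => map_mul ρ g n)
  rw [hrange, Submodule.span_image, hN, Submodule.map_top, LinearMap.range_eq_top]
  exact fun A => ⟨ρ g⁻¹ * A, by simp [← mul_assoc, ← map_mul]⟩

variable [FiniteDimensional k U] [FiniteDimensional k W]

theorem eq_top_of_forall_map_mem {M : Submodule k (Module.End k (U ⊗[k] W))}
    {S : Set (Module.End k W)} (hS : Submodule.span k S = ⊤)
    (hM : ∀ A, ∀ B ∈ S, TensorProduct.map A B ∈ M) : M = ⊤ := by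
  have hmap : ∀ A B, TensorProduct.map A B ∈ M := fun A B =>
    (Submodule.span_le (p := M.comap (TensorProduct.mapBilinear (.id k) U W U W A))).2 (hM A)
      (hS ▸ Submodule.mem_top (x := B))
  refine (Submodule.eq_top_iff').2 fun X => ?_
  obtain ⟨Y, rfl⟩ := (homTensorHomEquiv k U W U W).surjective X
  induction Y with
  | zero => simp
  | add Y Z hY hZ => simpa using M.add_mem hY hZ
  | tmul A B => simpa using hmap A B

theorem span_image2_tprod_mul_eq_top [Group G] {ρU : Representation k G U}
    {ρW : Representation k G W} {N : Subgroup G} {S : Set G}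
    (hU : Submodule.span k (Set.range (ρU.comp N.subtype)) = ⊤) (hNW : ∀ n : N, ρW n = 1)
    (hW : Submodule.span k (ρW '' S) = ⊤) :
    Submodule.span k (Set.image2 (fun g n => (ρU.tprod ρW) (g * n)) S N) = ⊤ := by
  refine eq_top_of_forall_map_mem hW fun A => ?_
  rintro _ ⟨g, hg, rfl⟩
  let L := (TensorProduct.mapBilinear (.id k) U W U W).flip (ρW g)
  let M := Submodule.span k (Set.image2 (fun g n => (ρU.tprod ρW) (g * n)) S N)
  suffices h : ⊤ ≤ M.comap L from h (Submodule.mem_top (x := A))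
  rw [← span_range_mul_left_eq_top ρU hU g, Submodule.span_le]
  rintro _ ⟨n, rfl⟩
  refine Submodule.subset_span ⟨g, hg, n, n.2, ?_⟩
  simp [L, Representation.tprod_apply, hNW]

end TensorProduct

section WeaklyAdequate

variable {k G V : Type*} [Field k] [Monoid G] [AddCommGroup V] [Module k V]
  {ρ : Representation k G V}

theorem WeaklyAdequate.span_range_eq_top (hρ : WeaklyAdequate ρ) :
    Submodule.span k (Set.range ρ) = ⊤ :=
  top_unique <| hρ.ge.trans <| Submodule.span_mono fun _ ⟨g, _, hg⟩ => ⟨g, hg⟩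

theorem WeaklyAdequate.span_range_pow_eq_top [IsAlgClosed k] (p : ℕ) [Fact p.Prime] [CharP k p]
    [FiniteDimensional k V] (hρ : WeaklyAdequate ρ) (c : ℕ) :
    Submodule.span k (ρ '' Set.range fun g : G => g ^ p ^ c) = ⊤ := by
  refine top_unique (hρ.ge.trans (Submodule.span_le.2 ?_))
  rintro _ ⟨g, hg, rfl⟩
  refine Submodule.span_mono ?_ (mem_span_pow_of_separable p hg (minpoly.aeval k (ρ g)) c)
  rintro _ ⟨i, rfl⟩
  exact ⟨_, ⟨g ^ i, rfl⟩, by simp⟩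

end WeaklyAdequate

/-- **Lemma.** Let `k` be algebraically closed of characteristic `p > 0`, `G` a group with a
normal subgroup `N`, and `U`, `W` finite-dimensional irreducible `kG`-modules with `N`
irreducible on `U` and trivial on `W`; set `V = U ⊗ W`.  If every element of `N` acts
semisimply on `V` and `(G, W)` is weakly adequate, then `(G, V)` is weakly adequate. -/
theorem tprod_weaklyAdequate
    (p : ℕ) (hp : p ≠ 0) (k : Type*) [Field k] [IsAlgClosed k] [CharP k p]
    (G : Type*) [Group G] (N : Subgroup G) (hN : N.Normal)
    (U W : Type*) [AddCommGroup U] [Module k U] [FiniteDimensional k U]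
    [AddCommGroup W] [Module k W] [FiniteDimensional k W]
    (ρU : Representation k G U) (ρW : Representation k G W)
    (hU : IsIrreducibleRep ρU) (hW : IsIrreducibleRep ρW)
    (hNU : IsIrreducibleRep (ρU.comp N.subtype))
    (hNW : ∀ x : N, ρW (x : G) = 1)
    (hss : ∀ x : N, IsSemisimpleEnd ((ρU.tprod ρW) (x : G)))
    (hWad : WeaklyAdequate ρW) :
    WeaklyAdequate (ρU.tprod ρW) := by
  have : Fact p.Prime := ⟨(CharP.char_is_prime_or_zero k p).resolve_right hp⟩
  set ρ := ρU.tprod ρW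
  have hspan {S : Set G} (hS : Submodule.span k (ρW '' S) = ⊤) :
      Submodule.span k (Set.image2 (fun g n => ρ (g * n)) S N) = ⊤ :=
    span_image2_tprod_mul_eq_top hNU.span_range_eq_top hNW hS
  have hρ : Submodule.span k (Set.range ρ) = ⊤ := by
    refine top_unique <| (hspan (Set.image_univ ▸ hWad.span_range_eq_top)).ge.trans <|
      Submodule.span_mono ?_
    rintro _ ⟨g, _, n, _, rfl⟩
    exact ⟨g * n, rfl⟩
  have hNH (n) (hn : n ∈ N) : n ^ p ∈ identityComponent k ρ → n ∈ identityComponent k ρ :=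
    mem_identityComponent_of_pow_mem p (hss ⟨n, hn⟩) (minpoly.aeval k (ρ n))
  obtain ⟨c, hc⟩ := exists_forall_pow_mul_pow_mem p hNH
  refine top_unique ((hspan (hWad.span_range_pow_eq_top p c)).ge.trans (Submodule.span_le.2 ?_))
  rintro _ ⟨_, ⟨g, rfl⟩, n, hn, rfl⟩
  obtain ⟨m, hm, hmem⟩ := hc g n hn
  exact mem_span_isSemisimpleEnd ρ hρ hm hmem
end
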